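/- arXiv:2401.14187 — 3 statements merged into one kernel-verified Lean document; each statement's English description precedes it below -/
import Mathlib

section
/- Let p > N and let a satisfy (H∞). Then there exist constants r'_p > 0 and C > 0 such that for every λ ∈ ℂ with Re λ ≥ 0 and |λ| > r'_p, and every function u : ℝ^N → ℂ of class C⁴ such that a^{h/2}|D^h u| is bounded on ℝ^N for h = 0,1,2,3 and a²Δ²u is bounded on ℝ^N, it holds that Σ_{h=0}^{3} |λ|^{1−h/4} ‖a^{h/2} D^h u‖_∞ + sup_{x ∈ ℝ^N} ( |λ|^{N/(4p)} / a(x)^{N/(2p)} ) ‖a² D⁴u‖_{L^p(B_{R(x)}(x))} ≤ C ‖λu + a²Δ²u‖_∞, where R(x) = a(x)^{1/2} / |λ|^{1/4}. -/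
open MeasureTheory Real ENNReal Metric

/-- The Laplacian of a function on `EuclideanSpace ℝ (Fin N)`, as the sum of the pure second
derivatives along the standard basis directions. -/
noncomputable def laplacianE {N : ℕ} (u : EuclideanSpace ℝ (Fin N) → ℂ)
    (x : EuclideanSpace ℝ (Fin N)) : ℂ :=
  ∑ i : Fin N, iteratedFDeriv ℝ 2 u x ![EuclideanSpace.single i 1, EuclideanSpace.single i 1]

section PartOne
open scoped SchwartzMap LineDeriv Laplacian

lemma pw_exp_bound (c : ℝ) (hc : 0 < c) (q : ℕ) :
    ∃ C : ℝ, ∀ x : ℝ, 0 ≤ x → (1 + x) ^ q * Real.exp (-c * x ^ 2) ≤ C := by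
  refine ⟨(q.factorial : ℝ) * Real.exp (1 + 1 / (4 * c)), fun x hx => ?_⟩
  have h1 : (1 + x) ^ q ≤ q.factorial * Real.exp (1 + x) := by
    have := Real.pow_div_factorial_le_exp (1 + x) (by linarith) q
    rw [div_le_iff₀ (by positivity)] at this
    linarith
  calc (1 + x) ^ q * Real.exp (-c * x ^ 2)
      ≤ (q.factorial * Real.exp (1 + x)) * Real.exp (-c * x ^ 2) := by gcongr
    _ = q.factorial * Real.exp (1 + x + -c * x ^ 2) := by rw [mul_assoc, ← Real.exp_add]
    _ ≤ _ := by
      refine mul_le_mul_of_nonneg_left (Real.exp_le_exp.mpr ?_) (by positivity)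
      have : 0 ≤ c * (x - 1 / (2 * c)) ^ 2 := by positivity
      have h2 : c * (x - 1 / (2 * c)) ^ 2 = c * x ^ 2 - x + 1 / (4 * c) := by field_simp; ring
      linarith

variable {N : ℕ}

lemma gauss_outer (b : ℂ) (i : ℕ) (s : ℝ) :
    iteratedDeriv i (fun s : ℝ => Complex.exp (-b * s)) s = (-b) ^ i * Complex.exp (-b * s) := by
  induction i generalizing s with
  | zero => simp
  | succ i ih =>
    rw [iteratedDeriv_succ]
    have : iteratedDeriv i (fun s : ℝ => Complex.exp (-b * s)) =
      fun s : ℝ => (-b) ^ i * Complex.exp (-b * s) := funext ih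
    rw [this]
    have h1 : HasDerivAt (fun s : ℝ => -b * (s : ℂ)) (-b * 1) s :=
      (Complex.ofRealCLM.hasDerivAt (x := s)).const_mul (-b)
    rw [((h1.cexp).const_mul ((-b) ^ i)).deriv]
    ring

lemma gauss_decay (b : ℂ) (hb : 0 < b.re) (k n : ℕ) :
    ∃ C : ℝ, ∀ x : EuclideanSpace ℝ (Fin N), ‖x‖ ^ k *
      ‖iteratedFDeriv ℝ n (fun x : EuclideanSpace ℝ (Fin N) =>
        Complex.exp (-b * ((‖x‖ ^ 2 : ℝ) : ℂ))) x‖ ≤ C := by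
  obtain ⟨q, C, hC, hq⟩ := (Function.hasTemperateGrowth_norm_sq
    (H := EuclideanSpace ℝ (Fin N))).norm_iteratedFDeriv_le_uniform n
  obtain ⟨C', hC'⟩ := pw_exp_bound b.re hb (k + q * n)
  refine ⟨n.factorial * (1 + ‖b‖) ^ n * (1 + C) ^ n * C', fun x => ?_⟩
  have hg : ContDiff ℝ ⊤ (fun s : ℝ => Complex.exp (-b * s)) :=
    (contDiff_const.mul Complex.ofRealCLM.contDiff).cexp
  have key := norm_iteratedFDeriv_comp_le (𝕜 := ℝ) (n := n) (N := ⊤) (C := (1 + ‖b‖) ^ n * Real.exp (-b.re * ‖x‖ ^ 2))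
    (D := (1 + C) * (1 + ‖x‖) ^ q) hg (contDiff_norm_sq ℝ (E := EuclideanSpace ℝ (Fin N))) le_top x ?_ ?_
  · have hx : 0 ≤ ‖x‖ := norm_nonneg x
    have e0 := hC' ‖x‖ hx
    calc _ ≤ ‖x‖ ^ k * (n.factorial * ((1 + ‖b‖) ^ n * Real.exp (-b.re * ‖x‖ ^ 2)) * ((1 + C) * (1 + ‖x‖) ^ q) ^ n) := by
            gcongr; exact key
      _ ≤ (1 + ‖x‖) ^ k * (n.factorial * ((1 + ‖b‖) ^ n * Real.exp (-b.re * ‖x‖ ^ 2)) * ((1 + C) * (1 + ‖x‖) ^ q) ^ n) := by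
            gcongr; linarith
      _ = n.factorial * (1 + ‖b‖) ^ n * (1 + C) ^ n * ((1 + ‖x‖) ^ (k + q * n) * Real.exp (-b.re * ‖x‖ ^ 2)) := by
            rw [pow_add, pow_mul, mul_pow]; ring
      _ ≤ _ := by gcongr
  · intro i hi
    rw [norm_iteratedFDeriv_eq_norm_iteratedDeriv, gauss_outer, norm_mul, norm_pow, norm_neg,
      Complex.norm_exp]
    have : (-b * ((‖x‖ ^ 2 : ℝ) : ℂ)).re = -b.re * ‖x‖ ^ 2 := by
      rw [Complex.re_mul_ofReal]; simp
    rw [this]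
    gcongr
    calc ‖b‖ ^ i ≤ (1 + ‖b‖) ^ i := by gcongr; linarith [norm_nonneg b]
      _ ≤ _ := pow_le_pow_right₀ (by linarith [norm_nonneg b]) hi
  · intro i hi1 hin
    have h1 : (1 : ℝ) ≤ (1 + C) * (1 + ‖x‖) ^ q := by
      have : (1 : ℝ) ≤ (1 + ‖x‖) ^ q := one_le_pow₀ (by linarith [norm_nonneg x])
      nlinarith
    calc _ ≤ C * (1 + ‖x‖) ^ q := hq i hin x
      _ ≤ (1 + C) * (1 + ‖x‖) ^ q := by gcongr; linarith
      _ ≤ _ := le_self_pow₀ h1 (by omega)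

/-- The (unnormalized) complex Gaussian. -/
noncomputable def gaussS (N : ℕ) (b : ℂ) (hb : 0 < b.re) : 𝓢(EuclideanSpace ℝ (Fin N), ℂ) where
  toFun := fun x => Complex.exp (-b * ((‖x‖ ^ 2 : ℝ) : ℂ))
  smooth' := (contDiff_const.mul (Complex.ofRealCLM.contDiff.comp (contDiff_norm_sq ℝ))).cexp
  decay' := fun k n => gauss_decay b hb k n

lemma gaussS_apply (b : ℂ) (hb : 0 < b.re) (x : EuclideanSpace ℝ (Fin N)) :
    gaussS N b hb x = Complex.exp (-b * ((‖x‖ ^ 2 : ℝ) : ℂ)) := rfl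

lemma gaussS_integral (b : ℂ) (hb : 0 < b.re) : ∫ x, gaussS N b hb x ≠ 0 := by
  have h := GaussianFourier.integral_cexp_neg_mul_sq_norm (V := EuclideanSpace ℝ (Fin N)) hb
  have : ∫ x, gaussS N b hb x = (↑π / b) ^ (Module.finrank ℝ (EuclideanSpace ℝ (Fin N)) / 2 : ℂ) := by
    rw [← h]; congr 1; ext x; rw [gaussS_apply]; push_cast; rfl
  rw [this]
  have hb0 : b ≠ 0 := by rintro rfl; simp at hb
  rw [Ne, Complex.cpow_eq_zero_iff]
  push Not
  intro h0
  exact absurd h0 (div_ne_zero (by exact_mod_cast Real.pi_ne_zero) hb0)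

lemma gaussS_lineDeriv (b : ℂ) (hb : 0 < b.re) (m x : EuclideanSpace ℝ (Fin N)) :
    (∂_{m} (gaussS N b hb)) x = -2 * b * (inner ℝ x m : ℝ) * gaussS N b hb x := by
  rw [SchwartzMap.lineDerivOp_apply_eq_fderiv]
  have h1 : HasFDerivAt (fun x : EuclideanSpace ℝ (Fin N) => -b * ((‖x‖ ^ 2 : ℝ) : ℂ))
      (-b • (Complex.ofRealCLM.comp (2 • (innerSL ℝ x)))) x :=
    (Complex.ofRealCLM.hasFDerivAt.comp x (hasStrictFDerivAt_norm_sq x).hasFDerivAt).const_mul (-b)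
  have h2 := h1.cexp
  have : fderiv ℝ (gaussS N b hb) x = _ := h2.fderiv
  rw [this]
  simp [gaussS_apply]
  ring

/-- A normalized Gaussian kernel with its gradient identity. -/
lemma exists_kernel (N : ℕ) (b : ℂ) (hb : 0 < b.re) :
    ∃ k : 𝓢(EuclideanSpace ℝ (Fin N), ℂ), (∫ y, k y = 1) ∧
      ∀ m x, (∂_{m} k) x = -2 * b * (inner ℝ x m : ℝ) * k x := by
  refine ⟨(∫ x, gaussS N b hb x)⁻¹ • gaussS N b hb, ?_, ?_⟩
  · simp only [smul_apply, smul_eq_mul]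
    rw [integral_const_mul, inv_mul_cancel₀ (gaussS_integral b hb)]
  · intro m x
    rw [LineDeriv.lineDerivOp_smul]
    simp only [smul_apply, smul_eq_mul, gaussS_lineDeriv]
    ring

end PartOne

section PartTwo
open scoped SchwartzMap LineDeriv Laplacian

variable {N : ℕ}

lemma lineDeriv_comm' (m m' : EuclideanSpace ℝ (Fin N)) (f : 𝓢(EuclideanSpace ℝ (Fin N), ℂ)) :
    ∂_{m} (∂_{m'} f) = ∂_{m'} (∂_{m} f) := by
  simp_rw [SchwartzMap.lineDeriv_eq_fourierMultiplierCLM]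
  simp_rw [← SchwartzMap.fourierMultiplierCLM_ofReal ℂ
    (g := fun x : EuclideanSpace ℝ (Fin N) => inner ℝ x m) (by fun_prop),
    ← SchwartzMap.fourierMultiplierCLM_ofReal ℂ
    (g := fun x : EuclideanSpace ℝ (Fin N) => inner ℝ x m') (by fun_prop), map_smul]
  rw [SchwartzMap.fourierMultiplierCLM_fourierMultiplierCLM_apply (by fun_prop) (by fun_prop),
   SchwartzMap.fourierMultiplierCLM_fourierMultiplierCLM_apply (by fun_prop) (by fun_prop)]
  congr 4
  exact mul_comm _ _

lemma lap_eq_sum (f : 𝓢(EuclideanSpace ℝ (Fin N), ℂ)) :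
    Δ f = ∑ i, ∂_{(EuclideanSpace.single i (1:ℝ) : EuclideanSpace ℝ (Fin N))}
      (∂_{(EuclideanSpace.single i (1:ℝ) : EuclideanSpace ℝ (Fin N))} f) := by
  rw [SchwartzMap.laplacian_eq_sum (EuclideanSpace.basisFun (Fin N) ℝ)]
  simp

lemma lap_lineDeriv_comm (m : EuclideanSpace ℝ (Fin N)) (f : 𝓢(EuclideanSpace ℝ (Fin N), ℂ)) :
    Δ (∂_{m} f) = ∂_{m} (Δ f) := by
  have h := map_sum (LineDeriv.lineDerivOpCLM ℂ 𝓢(EuclideanSpace ℝ (Fin N), ℂ) m)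
    (fun i => ∂_{(EuclideanSpace.single i (1:ℝ) : EuclideanSpace ℝ (Fin N))}
      (∂_{(EuclideanSpace.single i (1:ℝ) : EuclideanSpace ℝ (Fin N))} f)) Finset.univ
  simp only [LineDeriv.lineDerivOpCLM_apply] at h
  rw [lap_eq_sum, lap_eq_sum, h]
  exact Finset.sum_congr rfl fun i _ => by rw [lineDeriv_comm' _ m, lineDeriv_comm' _ m]

lemma lap_iter_comm (n : ℕ) (m : Fin n → EuclideanSpace ℝ (Fin N))
    (f : 𝓢(EuclideanSpace ℝ (Fin N), ℂ)) :
    Δ (∂^{m} f) = ∂^{m} (Δ f) := by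
  induction n with
  | zero => rfl
  | succ n ih =>
    rw [LineDeriv.iteratedLineDerivOp_succ_left, LineDeriv.iteratedLineDerivOp_succ_left,
      lap_lineDeriv_comm, ih]

lemma line_iter_comm (n : ℕ) (m : Fin n → EuclideanSpace ℝ (Fin N)) (v : EuclideanSpace ℝ (Fin N))
    (f : 𝓢(EuclideanSpace ℝ (Fin N), ℂ)) :
    ∂_{v} (∂^{m} f) = ∂^{m} (∂_{v} f) := by
  induction n with
  | zero => rfl
  | succ n ih =>
    rw [LineDeriv.iteratedLineDerivOp_succ_left, LineDeriv.iteratedLineDerivOp_succ_left,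
      lineDeriv_comm', ih]

/-- Averaging of `g` at scale `r` against the kernel `ψ`. -/
noncomputable def Aop (ψ g : 𝓢(EuclideanSpace ℝ (Fin N), ℂ)) (r : ℝ)
    (x : EuclideanSpace ℝ (Fin N)) : ℂ := ∫ y, ψ y * g (x + r • y)

lemma sch_bdd (g : 𝓢(EuclideanSpace ℝ (Fin N), ℂ)) : ∃ M : ℝ, 0 ≤ M ∧ ∀ x, ‖g x‖ ≤ M :=
  ⟨SchwartzMap.seminorm ℝ 0 0 g, apply_nonneg _ _, fun x => SchwartzMap.norm_le_seminorm ℝ g x⟩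

lemma sch_fderiv_bdd (g : 𝓢(EuclideanSpace ℝ (Fin N), ℂ)) :
    ∃ M : ℝ, 0 ≤ M ∧ ∀ x, ‖fderiv ℝ g x‖ ≤ M := by
  refine ⟨SchwartzMap.seminorm ℝ 0 1 g, apply_nonneg _ _, fun x => ?_⟩
  have := SchwartzMap.norm_iteratedFDeriv_le_seminorm ℝ g 1 x
  rwa [norm_iteratedFDeriv_one] at this

lemma Aop_integrable (ψ g : 𝓢(EuclideanSpace ℝ (Fin N), ℂ)) (r : ℝ)
    (x : EuclideanSpace ℝ (Fin N)) : Integrable (fun y => ψ y * g (x + r • y)) := by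
  obtain ⟨M, -, hM⟩ := sch_bdd g
  refine ψ.integrable.mul_bdd (c := M) ?_ (Filter.Eventually.of_forall fun y => hM _)
  exact (g.continuous.comp (by fun_prop)).aestronglyMeasurable

lemma Aop_norm_le (ψ g : 𝓢(EuclideanSpace ℝ (Fin N), ℂ)) (r : ℝ)
    (x : EuclideanSpace ℝ (Fin N)) (M : ℝ) (hM : ∀ x, ‖g x‖ ≤ M) :
    ‖Aop ψ g r x‖ ≤ (∫ y, ‖ψ y‖) * M := by
  rw [Aop, ← integral_mul_const]
  refine norm_integral_le_of_norm_le (ψ.integrable.norm.mul_const _)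
    (Filter.Eventually.of_forall fun y => ?_)
  rw [norm_mul]
  gcongr
  exact hM _

lemma Aop_add (ψ g g' : 𝓢(EuclideanSpace ℝ (Fin N), ℂ)) (r : ℝ)
    (x : EuclideanSpace ℝ (Fin N)) : Aop ψ (g + g') r x = Aop ψ g r x + Aop ψ g' r x := by
  simp only [Aop]
  rw [← integral_add (Aop_integrable _ _ _ _) (Aop_integrable _ _ _ _)]
  congr 1; ext y; rw [add_apply]; ring

lemma Aop_smul (ψ g : 𝓢(EuclideanSpace ℝ (Fin N), ℂ)) (c : ℂ) (r : ℝ)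
    (x : EuclideanSpace ℝ (Fin N)) : Aop ψ (c • g) r x = c * Aop ψ g r x := by
  simp only [Aop]
  rw [← integral_const_mul]
  congr 1; ext y; rw [smul_apply, smul_eq_mul]; ring

lemma Aop_sub (ψ g g' : 𝓢(EuclideanSpace ℝ (Fin N), ℂ)) (r : ℝ)
    (x : EuclideanSpace ℝ (Fin N)) : Aop ψ (g - g') r x = Aop ψ g r x - Aop ψ g' r x := by
  simp only [Aop]
  rw [← integral_sub (Aop_integrable _ _ _ _) (Aop_integrable _ _ _ _)]
  congr 1; ext y; rw [sub_apply]; ring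

lemma Aop_sum {ι : Type*} (s : Finset ι) (ψ : 𝓢(EuclideanSpace ℝ (Fin N), ℂ))
    (g : ι → 𝓢(EuclideanSpace ℝ (Fin N), ℂ)) (r : ℝ)
    (x : EuclideanSpace ℝ (Fin N)) : Aop ψ (∑ i ∈ s, g i) r x = ∑ i ∈ s, Aop ψ (g i) r x := by
  simp only [Aop]
  rw [← integral_finsetSum s fun i _ => Aop_integrable _ _ _ _]
  congr 1; ext y; simp [Finset.mul_sum]

lemma comp_fderiv (g : 𝓢(EuclideanSpace ℝ (Fin N), ℂ)) (r : ℝ)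
    (x y : EuclideanSpace ℝ (Fin N)) :
    HasFDerivAt (fun y => g (x + r • y)) (r • fderiv ℝ g (x + r • y)) y := by
  have h1 : HasFDerivAt (fun y : EuclideanSpace ℝ (Fin N) => x + r • y)
    (r • ContinuousLinearMap.id ℝ _) y := ((hasFDerivAt_id y).const_smul r).const_add x
  have h2 := (g.differentiableAt (x := x + r • y)).hasFDerivAt.comp y h1
  convert! h2 using 1
  ext v; simp

lemma Aop_ibp (ψ g : 𝓢(EuclideanSpace ℝ (Fin N), ℂ)) (r : ℝ)
    (x m : EuclideanSpace ℝ (Fin N)) :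
    r * Aop ψ (∂_{m} g) r x = - Aop (∂_{m} ψ) g r x := by
  have key := integral_bilinear_fderiv_right_eq_neg_left_of_integrable
    (μ := (volume : Measure (EuclideanSpace ℝ (Fin N)))) (B := ContinuousLinearMap.mul ℝ ℂ)
    (f := ψ) (g := fun y => g (x + r • y)) (v := m) ?_ ?_ (Aop_integrable ψ g r x)
    (fun y _ => ψ.differentiableAt) (fun y _ => (comp_fderiv g r x y).differentiableAt)
  · simp only [ContinuousLinearMap.mul_apply'] at key
    simp only [Aop]
    rw [← integral_const_mul]
    have e1 : ∀ y, (r:ℂ) * (ψ y * (∂_{m} g) (x + r • y)) =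
        ψ y * fderiv ℝ (fun y => g (x + r • y)) y m := by
      intro y
      rw [(comp_fderiv g r x y).fderiv, SchwartzMap.lineDerivOp_apply_eq_fderiv]
      simp; ring
    simp_rw [e1, key, SchwartzMap.lineDerivOp_apply_eq_fderiv]
  · have := Aop_integrable (∂_{m} ψ) g r x
    simpa only [SchwartzMap.lineDerivOp_apply_eq_fderiv, ContinuousLinearMap.mul_apply'] using this
  · have := (Aop_integrable ψ (∂_{m} g) r x).const_mul (r:ℂ)
    refine this.congr (Filter.Eventually.of_forall fun y => ?_)
    simp only [ContinuousLinearMap.mul_apply']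
    rw [(comp_fderiv g r x y).fderiv, SchwartzMap.lineDerivOp_apply_eq_fderiv]
    simp; ring

lemma Aop_ibp_iter (ψ g : 𝓢(EuclideanSpace ℝ (Fin N), ℂ)) (r : ℝ)
    (x : EuclideanSpace ℝ (Fin N)) (n : ℕ) (m : Fin n → EuclideanSpace ℝ (Fin N)) :
    (r:ℂ) ^ n * Aop ψ (∂^{m} g) r x = (-1) ^ n * Aop (∂^{m} ψ) g r x := by
  induction n generalizing ψ with
  | zero => simp [LineDeriv.iteratedLineDerivOp_fin_zero]
  | succ n ih =>
    rw [LineDeriv.iteratedLineDerivOp_succ_left, LineDeriv.iteratedLineDerivOp_succ_left,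
      pow_succ, mul_assoc, Aop_ibp, mul_neg, ih, line_iter_comm]
    ring

lemma Aop_iter_bound (ψ g : 𝓢(EuclideanSpace ℝ (Fin N), ℂ)) (r : ℝ) (hr : 0 ≤ r)
    (x : EuclideanSpace ℝ (Fin N)) (n : ℕ) (m : Fin n → EuclideanSpace ℝ (Fin N))
    (M : ℝ) (hM : ∀ x, ‖g x‖ ≤ M) :
    r ^ n * ‖Aop ψ (∂^{m} g) r x‖ ≤ (∫ y, ‖iteratedFDeriv ℝ n ψ y‖) * (∏ i, ‖m i‖) * M := by
  have h := congrArg norm (Aop_ibp_iter ψ g r x n m)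
  rw [norm_mul, norm_mul, norm_pow, norm_pow, norm_neg, norm_one, one_pow, one_mul,
    Complex.norm_real, Real.norm_of_nonneg hr] at h
  rw [h]
  refine (Aop_norm_le _ g r x M hM).trans ?_
  have hM0 : 0 ≤ M := (norm_nonneg _).trans (hM 0)
  have hi : Integrable (fun y => ‖iteratedFDeriv ℝ n ψ y‖) := by
    simpa using ψ.integrable_pow_mul_iteratedFDeriv volume 0 n
  gcongr
  rw [← integral_mul_const]
  refine integral_mono (SchwartzMap.integrable _).norm (hi.mul_const _) fun y => ?_
  simp only
  rw [SchwartzMap.iteratedLineDerivOp_eq_iteratedFDeriv]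
  exact ContinuousMultilinearMap.le_opNorm _ _

lemma Aop_zero (k g : 𝓢(EuclideanSpace ℝ (Fin N), ℂ)) (hk : ∫ y, k y = 1)
    (x : EuclideanSpace ℝ (Fin N)) : Aop k g 0 x = g x := by
  simp [Aop, integral_mul_const, hk]

lemma Aop_hasDerivAt (k g : 𝓢(EuclideanSpace ℝ (Fin N), ℂ)) (b : ℂ) (hb : 0 < b.re)
    (hk : ∀ m x, (∂_{m} k) x = -2 * b * (inner ℝ x m : ℝ) * k x)
    (r : ℝ) (x : EuclideanSpace ℝ (Fin N)) :
    HasDerivAt (fun r => Aop k g r x) (r / (2 * b) * Aop k (Δ g) r x) r := by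
  have hb0 : b ≠ 0 := by rintro rfl; simp at hb
  obtain ⟨M, hM0, hM⟩ := sch_fderiv_bdd g
  have hki : Integrable (fun y => ‖y‖ * ‖k y‖) := by
    simpa using k.integrable_pow_mul volume 1
  have key := hasDerivAt_integral_of_dominated_loc_of_deriv_le (𝕜 := ℝ)
    (μ := (volume : Measure (EuclideanSpace ℝ (Fin N)))) (x₀ := r) (s := Set.univ)
    (F := fun r y => k y * g (x + r • y))
    (F' := fun r y => k y * fderiv ℝ g (x + r • y) y)
    (bound := fun y => M * (‖y‖ * ‖k y‖)) Filter.univ_mem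
    (Filter.Eventually.of_forall fun r => (Aop_integrable k g r x).aestronglyMeasurable)
    (Aop_integrable k g r x) ?_ ?_ (hki.const_mul _) ?_
  · have h2 := key.2
    have e : ∫ y, k y * fderiv ℝ g (x + r • y) y = r / (2 * b) * Aop k (Δ g) r x := by
      have e1 : ∀ y, k y * fderiv ℝ g (x + r • y) y =
        ∑ i, (-1 / (2 * b)) * ((∂_{(EuclideanSpace.single i (1:ℝ) : EuclideanSpace ℝ (Fin N))} k) y *
          (∂_{(EuclideanSpace.single i (1:ℝ) : EuclideanSpace ℝ (Fin N))} g) (x + r • y)) := by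
        intro y
        have hy : y = ∑ i, y i • (EuclideanSpace.single i (1:ℝ) : EuclideanSpace ℝ (Fin N)) := by
          have := (EuclideanSpace.basisFun (Fin N) ℝ).sum_repr y
          simpa using this.symm
        conv_lhs => rw [show fderiv ℝ g (x + r • y) y = fderiv ℝ g (x + r • y)
            (∑ i, y i • (EuclideanSpace.single i (1:ℝ) : EuclideanSpace ℝ (Fin N))) by rw [← hy]]
        rw [map_sum, Finset.mul_sum]
        refine Finset.sum_congr rfl fun i _ => ?_
        rw [hk, SchwartzMap.lineDerivOp_apply_eq_fderiv, map_smul]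
        simp [EuclideanSpace.inner_single_right]
        field_simp
      simp_rw [e1]
      rw [integral_finsetSum _ fun i _ => (Aop_integrable _ _ _ _).const_mul _, lap_eq_sum, Aop_sum,
        Finset.mul_sum]
      refine Finset.sum_congr rfl fun i _ => ?_
      rw [integral_const_mul]
      have := Aop_ibp k (∂_{(EuclideanSpace.single i (1:ℝ) : EuclideanSpace ℝ (Fin N))} g) r x
        (EuclideanSpace.single i (1:ℝ))
      change -1 / (2 * b) * Aop _ _ r x = _
      rw [← neg_eq_iff_eq_neg] at this
      rw [← this]
      ring
    rw [e] at h2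
    exact h2
  · refine Continuous.aestronglyMeasurable ?_
    have : Continuous (fderiv ℝ g) := g.smooth'.continuous_fderiv (by simp)
    have h3 : Continuous (fun y : EuclideanSpace ℝ (Fin N) => fderiv ℝ g (x + r • y)) :=
      this.comp (by fun_prop)
    exact k.continuous.mul (h3.clm_apply continuous_id)
  · refine Filter.Eventually.of_forall fun y r _ => ?_
    rw [norm_mul]
    calc _ ≤ ‖k y‖ * (M * ‖y‖) := by
          gcongr
          exact (ContinuousLinearMap.le_opNorm _ _).trans (by gcongr; exact hM _)
      _ = _ := by ring
  · refine Filter.Eventually.of_forall fun y r _ => ?_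
    have h1 : HasDerivAt (fun r : ℝ => x + r • y) y r := by
      simpa using ((hasDerivAt_id r).smul_const y).const_add x
    have := (g.differentiableAt (x := x + r • y)).hasFDerivAt.comp_hasDerivAt r h1
    exact this.const_mul _

end PartTwo

section PartThree
open scoped SchwartzMap LineDeriv Laplacian

variable {N : ℕ}

lemma res_aux (e : ℂ) (he : 0 < e.re) : ∃ C : ℝ, 0 < C ∧ ∀ κ : ℂ, 1 / 10 ≤ (κ * e).re →
    ∀ (w : 𝓢(EuclideanSpace ℝ (Fin N), ℂ)) (F : ℝ), (∀ x, ‖κ * w x - (Δ w) x‖ ≤ F) →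
    ∀ x, ‖w x‖ ≤ C * F := by
  have he0 : e ≠ 0 := by rintro rfl; simp at he
  have hb : 0 < (1 / (4 * e)).re := by
    rw [one_div, Complex.inv_re]
    have : 0 < (4 * e).re := by simpa using he
    exact div_pos this (Complex.normSq_pos.mpr (by simpa using he0))
  obtain ⟨k, hk1, hk2⟩ := exists_kernel N (1 / (4 * e)) hb
  set I := ∫ y, ‖k y‖ with hI
  have hI0 : 0 ≤ I := integral_nonneg fun y => norm_nonneg _
  refine ⟨10 * ‖e‖ * (I + 1), by positivity, fun κ hκ w F hF x => ?_⟩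
  have hF0 : 0 ≤ F := (norm_nonneg _).trans (hF 0)
  set y : ℝ → ℂ := fun r => Complex.exp (-(κ * e) * (r ^ 2 : ℝ)) * Aop k w r x with hy
  have hexpn : ∀ r : ℝ, ‖Complex.exp (-(κ * e) * (r ^ 2 : ℝ))‖ ≤ Real.exp (-(1/10) * r ^ 2) := by
    intro r
    rw [Complex.norm_exp]
    apply Real.exp_le_exp.mpr
    rw [Complex.re_mul_ofReal, Complex.neg_re]
    nlinarith [sq_nonneg r]
  have hd : ∀ r : ℝ, HasDerivAt y (-2 * e * r * Complex.exp (-(κ * e) * (r ^ 2 : ℝ)) *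
      Aop k (κ • w - Δ w) r x) r := by
    intro r
    have h1 := Aop_hasDerivAt k w _ hb hk2 r x
    have h2 : HasDerivAt (fun r : ℝ => -(κ * e) * ((r ^ 2 : ℝ) : ℂ)) (-(κ * e) * ((2 * r : ℝ) : ℂ)) r := by
      have : HasDerivAt (fun r : ℝ => r ^ 2) (2 * r) r := by simpa using hasDerivAt_pow 2 r
      exact this.ofReal_comp.const_mul _
    convert! h2.cexp.mul h1 using 1
    rw [Aop_sub, Aop_smul]
    push_cast
    field_simp
    ring
  have hAF : ∀ r, ‖Aop k (κ • w - Δ w) r x‖ ≤ I * F := fun r =>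
    Aop_norm_le _ _ _ _ _ (by simpa using hF)
  have hB : ∀ R : ℝ, 0 ≤ R → ‖y R - w x‖ ≤ 10 * ‖e‖ * I * F * (1 - Real.exp (-(1/10) * R ^ 2)) := by
    intro R hR
    have := image_norm_le_of_norm_deriv_right_le_deriv_boundary (a := 0) (b := R)
      (f := fun r => y r - w x)
      (f' := fun r => -2 * e * r * Complex.exp (-(κ * e) * (r ^ 2 : ℝ)) * Aop k (κ • w - Δ w) r x)
      (B := fun r => 10 * ‖e‖ * I * F * (1 - Real.exp (-(1/10) * r ^ 2)))
      (B' := fun r => 2 * ‖e‖ * r * I * F * Real.exp (-(1/10) * r ^ 2))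
      (fun r _ => ((hd r).continuousAt.sub continuousAt_const).continuousWithinAt)
      (fun r _ => ((hd r).sub_const _).hasDerivWithinAt) ?_ ?_ ?_
    · exact this ⟨hR, le_rfl⟩
    · simp [hy, Aop_zero k w hk1]
    · intro r
      have h0 : HasDerivAt (fun r : ℝ => -(1/10) * r ^ 2) (-(1/10) * (2 * r)) r := by
        have : HasDerivAt (fun r : ℝ => r ^ 2) (2 * r) r := by simpa using hasDerivAt_pow 2 r
        exact this.const_mul _
      convert! (h0.exp.const_sub 1).const_mul (10 * ‖e‖ * I * F) using 1
      ring
    · intro r hr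
      rw [norm_mul, norm_mul, norm_mul, norm_mul, norm_neg, Complex.norm_real,
        Real.norm_of_nonneg hr.1]
      have := hAF r
      have h2 := hexpn r
      have hr0 := hr.1
      calc _ ≤ ‖(2:ℂ)‖ * ‖e‖ * r * Real.exp (-(1/10) * r ^ 2) * (I * F) := by gcongr
        _ = _ := by simp; ring
  obtain ⟨M, hM0, hM⟩ := sch_bdd w
  have hyb : ∀ R, ‖y R‖ ≤ Real.exp (-(1/10) * R ^ 2) * (I * M) := by
    intro R
    rw [hy]; simp only [norm_mul]
    gcongr
    · exact hexpn R
    · exact Aop_norm_le _ _ _ _ _ hM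
  have hlim : Filter.Tendsto (fun R : ℝ => 10 * ‖e‖ * I * F + Real.exp (-(1/10) * R ^ 2) * (I * M))
      Filter.atTop (nhds (10 * ‖e‖ * I * F + 0 * (I * M))) := by
    refine Filter.Tendsto.const_add _ (Filter.Tendsto.mul_const _ ?_)
    refine Real.tendsto_exp_atBot.comp ?_
    exact (Filter.tendsto_pow_atTop two_ne_zero).const_mul_atTop_of_neg (by norm_num)
  have : ‖w x‖ ≤ 10 * ‖e‖ * I * F + 0 * (I * M) := by
    refine ge_of_tendsto hlim (Filter.eventually_atTop.mpr ⟨0, fun R hR => ?_⟩)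
    have h1 := hB R hR
    have h2 := hyb R
    have h3 : ‖w x‖ ≤ ‖y R‖ + ‖y R - w x‖ := by
      have := norm_sub_le (y R) (y R - w x); simpa using this
    have h4 : 0 ≤ 10 * ‖e‖ * I * F * Real.exp (-(1/10) * R ^ 2) := by positivity
    nlinarith
  have h5 : 0 ≤ 10 * ‖e‖ * F := by positivity
  nlinarith

lemma res_bound (N : ℕ) : ∃ C : ℝ, 0 < C ∧ ∀ κ : ℂ, ‖κ‖ = 1 → |κ.re| ≤ |κ.im| →
    ∀ (w : 𝓢(EuclideanSpace ℝ (Fin N), ℂ)) (F : ℝ), (∀ x, ‖κ * w x - (Δ w) x‖ ≤ F) →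
    ∀ x, ‖w x‖ ≤ C * F := by
  obtain ⟨C1, h1, H1⟩ := res_aux (N := N) (⟨3/5, 4/5⟩ : ℂ) (by norm_num)
  obtain ⟨C2, h2, H2⟩ := res_aux (N := N) (⟨3/5, -4/5⟩ : ℂ) (by norm_num)
  refine ⟨C1 + C2, by positivity, fun κ hκ hκ' w F hF x => ?_⟩
  have hF0 : 0 ≤ F := (norm_nonneg _).trans (hF 0)
  have hs : κ.re ^ 2 + κ.im ^ 2 = 1 := by
    have := Complex.sq_norm κ
    rw [hκ, Complex.normSq_apply] at this; nlinarith
  have ha := sq_abs κ.re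
  have hb := sq_abs κ.im
  have hb1 : 1 / 2 ≤ |κ.im| := by
    by_contra h
    push Not at h
    nlinarith [abs_nonneg κ.re, abs_nonneg κ.im]
  have := neg_abs_le κ.re
  have p1 : 0 ≤ C1 * F := by positivity
  have p2 : 0 ≤ C2 * F := by positivity
  rcases le_total 0 κ.im with h | h
  · rw [abs_of_nonneg h] at hb1 hκ'
    have := H2 κ (by simp [Complex.mul_re]; linarith) w F hF x
    linarith
  · rw [abs_of_nonpos h] at hb1 hκ'
    have := H1 κ (by simp [Complex.mul_re]; linarith) w F hF x
    linarith

lemma exists_root (μ : ℂ) (hμ : ‖μ‖ = 1) (hre : 0 ≤ μ.re) :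
    ∃ κ : ℂ, κ ^ 2 = -μ ∧ ‖κ‖ = 1 ∧ |κ.re| ≤ |κ.im| := by
  obtain ⟨κ, hκ⟩ := IsAlgClosed.exists_pow_nat_eq (-μ) (n := 2) (by norm_num)
  refine ⟨κ, hκ, ?_, ?_⟩
  · have h := congrArg norm hκ
    rw [norm_pow, norm_neg, hμ] at h
    exact (pow_eq_one_iff_of_nonneg (norm_nonneg _) two_ne_zero).mp h
  · have h := congrArg Complex.re hκ
    rw [sq, Complex.mul_re, Complex.neg_re] at h
    exact sq_le_sq.mp (by nlinarith)

lemma lap_sub (f g : 𝓢(EuclideanSpace ℝ (Fin N), ℂ)) : Δ (f - g) = Δ f - Δ g := by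
  rw [← SchwartzMap.laplacianCLM_eq (𝕜 := ℂ), map_sub, SchwartzMap.laplacianCLM_eq,
    SchwartzMap.laplacianCLM_eq]

lemma lap_add (f g : 𝓢(EuclideanSpace ℝ (Fin N), ℂ)) : Δ (f + g) = Δ f + Δ g := by
  rw [← SchwartzMap.laplacianCLM_eq (𝕜 := ℂ), map_add, SchwartzMap.laplacianCLM_eq,
    SchwartzMap.laplacianCLM_eq]

lemma lap_smul (c : ℂ) (f : 𝓢(EuclideanSpace ℝ (Fin N), ℂ)) : Δ (c • f) = c • Δ f := by
  rw [← SchwartzMap.laplacianCLM_eq (𝕜 := ℂ), map_smul, SchwartzMap.laplacianCLM_eq]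

lemma bires_bound (N : ℕ) : ∃ C : ℝ, 0 < C ∧ ∀ μ : ℂ, ‖μ‖ = 1 → 0 ≤ μ.re →
    ∀ (w : 𝓢(EuclideanSpace ℝ (Fin N), ℂ)) (F : ℝ), (∀ x, ‖μ * w x + (Δ (Δ w)) x‖ ≤ F) →
    ∀ x, ‖w x‖ ≤ C * F := by
  obtain ⟨C, hC, H⟩ := res_bound N
  refine ⟨C * C, by positivity, fun μ hμ hre w F hF x => ?_⟩
  obtain ⟨κ, hκ, hκ1, hκ2⟩ := exists_root μ hμ hre
  rw [mul_assoc]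
  refine H κ hκ1 hκ2 w _ (fun x => ?_) x
  have h := H (-κ) (by simpa) (by simpa) (κ • w - Δ w) F (fun x => ?_) x
  · simpa using h
  · refine le_trans (le_of_eq ?_) (hF x)
    have e : Δ (κ • w - Δ w) = κ • Δ w - Δ (Δ w) := by
      rw [lap_sub, lap_smul]
    rw [e]
    congr 1
    simp
    have : μ = - κ ^ 2 := by rw [hκ]; simp
    rw [this]; ring

end PartThree

section PartFour
open scoped SchwartzMap LineDeriv Laplacian

variable {N : ℕ}

lemma incr_bound (f f' : ℝ → ℂ) (hf : ∀ s, HasDerivAt f (f' s) s) (n : ℕ) (K r r' : ℝ) (hr : 0 < r)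
    (hrr : r ≤ r') (hb : ∀ s, r ≤ s → s ≤ r' → ‖f' s‖ ≤ K * n / s ^ (n + 1)) :
    ‖f r' - f r‖ ≤ K * (1 / r ^ n - 1 / r' ^ n) := by
  have := image_norm_le_of_norm_deriv_right_le_deriv_boundary' (a := r) (b := r')
    (f := fun s => f s - f r) (f' := f')
    (B := fun s => K * (1 / r ^ n - 1 / s ^ n))
    (B' := fun s => K * n / s ^ (n + 1))
    (fun s _ => ((hf s).continuousAt.sub continuousAt_const).continuousWithinAt)
    (fun s _ => ((hf s).sub_const _).hasDerivWithinAt) ?_ ?_ ?_ ?_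
  · exact this ⟨hrr, le_rfl⟩
  · simp
  · refine ContinuousOn.mul continuousOn_const (continuousOn_const.sub ?_)
    refine ContinuousOn.div continuousOn_const (by fun_prop) fun s hs => ?_
    have : 0 < s := hr.trans_le hs.1
    positivity
  · intro s hs
    have hs0 : 0 < s := hr.trans_le hs.1
    have h1 : HasDerivAt (fun s : ℝ => (s ^ n)⁻¹) (-(n * s ^ (n - 1)) / (s ^ n) ^ 2) s :=
      (hasDerivAt_pow n s).inv (by positivity)
    have h2 := (h1.const_sub (1 / r ^ n)).const_mul K
    have h3 : HasDerivAt (fun s => K * (1 / r ^ n - 1 / s ^ n)) (K * n / s ^ (n + 1)) s := by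
      simp only [one_div]
      convert! h2 using 1
      · simp only [one_div]
      · rcases n with _ | n
        · simp
        · simp only [Nat.add_sub_cancel]
          field_simp
          ring
    exact h3.hasDerivWithinAt
  · intro s hs
    exact hb s hs.1 hs.2.le

/-- Second difference bound. -/
lemma second_diff (y P Q : ℝ → ℂ) (hy : ∀ r : ℝ, HasDerivAt y (2 * r * P r) r)
    (hP : ∀ r : ℝ, HasDerivAt P (2 * r * Q r) r) (M : ℝ)
    (hQ : ∀ r, 0 < r → r ≤ 2 → ‖Q r‖ ≤ M / r ^ 3) :
    ‖y 0 - 2 * y 1 + y (√2)‖ ≤ 12 * M := by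
  have hM : 0 ≤ M := by
    have := (norm_nonneg _).trans (hQ 1 one_pos (by norm_num)); simpa using this
  have hPd : ∀ r r', 0 < r → r ≤ r' → r' ≤ 2 → ‖P r' - P r‖ ≤ 2 * M * (1 / r - 1 / r') := by
    intro r r' hr hrr hr'
    have := incr_bound P _ hP 1 (2 * M) r r' hr hrr (fun s hs1 hs2 => ?_)
    · simpa using this
    · have hs : 0 < s := hr.trans_le hs1
      have := hQ s hs (hs2.trans hr')
      rw [norm_mul, norm_mul, Complex.norm_real, Real.norm_of_nonneg hs.le]
      calc _ ≤ ‖(2:ℂ)‖ * s * (M / s ^ 3) := by gcongr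
        _ = _ := by simp; field_simp
  set η : ℝ → ℂ := fun r => y r - r ^ 2 * P 1 with hη
  have hηd : ∀ r : ℝ, HasDerivAt η (2 * r * (P r - P 1)) r := by
    intro r
    have h1 : HasDerivAt (fun r : ℝ => (r:ℂ) ^ 2) (2 * r) r := by
      have : HasDerivAt (fun r : ℝ => r ^ 2) (2 * r) r := by simpa using hasDerivAt_pow 2 r
      have := this.ofReal_comp
      push_cast at this
      exact this
    convert! (hy r).sub (h1.mul_const (P 1)) using 1
    ring
  have hηb : ∀ r : ℝ, 0 ≤ r → r ≤ 2 → ‖2 * (r:ℂ) * (P r - P 1)‖ ≤ 4 * M := by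
    intro r hr0 hr2
    rw [norm_mul, norm_mul, Complex.norm_real, Real.norm_of_nonneg hr0]
    rcases hr0.eq_or_lt with rfl | hr
    · simp; positivity
    rcases le_total r 1 with h | h
    · have := hPd r 1 hr h (by norm_num)
      rw [norm_sub_rev] at this
      calc _ ≤ ‖(2:ℂ)‖ * r * (2 * M * (1 / r - 1 / 1)) := by gcongr
        _ = 4 * M * (1 - r) := by simp; field_simp; ring
        _ ≤ _ := by nlinarith
    · have := hPd 1 r one_pos h hr2
      calc _ ≤ ‖(2:ℂ)‖ * r * (2 * M * (1 / 1 - 1 / r)) := by gcongr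
        _ = 4 * M * (r - 1) := by simp; field_simp; ring
        _ ≤ _ := by nlinarith
  have hmv : ∀ r r', r ∈ Set.Icc (0:ℝ) 2 → r' ∈ Set.Icc (0:ℝ) 2 → ‖η r' - η r‖ ≤ 4 * M * ‖r' - r‖ := by
    intro r r' hr hr'
    exact Convex.norm_image_sub_le_of_norm_hasDerivWithin_le
      (fun s _ => (hηd s).hasDerivWithinAt) (fun s hs => hηb s hs.1 hs.2) (convex_Icc 0 2) hr hr'
  have hs2 : √2 ≤ 2 := by rw [Real.sqrt_le_left (by norm_num)]; norm_num
  have hs1 : 1 ≤ √2 := by rw [Real.one_le_sqrt]; norm_num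
  have a1 := hmv 1 0 (by norm_num) (by norm_num)
  have a2 := hmv 1 (√2) (by norm_num) ⟨by positivity, hs2⟩
  have e : y 0 - 2 * y 1 + y (√2) = (η 0 - η 1) + (η (√2) - η 1) := by
    have : ((√2 : ℝ) : ℂ) ^ 2 = 2 := by
      rw [← Complex.ofReal_pow, Real.sq_sqrt (by norm_num)]; simp
    simp only [hη]
    rw [this]; push_cast; ring
  rw [e]
  refine (norm_add_le _ _).trans ?_
  rw [Real.norm_of_nonneg (by linarith)] at a2
  norm_num at a1
  nlinarith

/-- Data of the real heat kernel. -/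
structure HeatK (N : ℕ) where
  k : 𝓢(EuclideanSpace ℝ (Fin N), ℂ)
  int : ∫ y, k y = 1
  der : ∀ (g : 𝓢(EuclideanSpace ℝ (Fin N), ℂ)) (r : ℝ) (x : EuclideanSpace ℝ (Fin N)),
    HasDerivAt (fun r => Aop k g r x) (2 * r * Aop k (Δ g) r x) r

lemma heatK_exists (N : ℕ) : Nonempty (HeatK N) := by
  obtain ⟨k, hk1, hk2⟩ := exists_kernel N (1 / 4) (by norm_num)
  refine ⟨⟨k, hk1, fun g r x => ?_⟩⟩
  have := Aop_hasDerivAt k g (1 / 4) (by norm_num) hk2 r x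
  convert! this using 1
  ring

lemma HeatK.sd_bound (H : HeatK N) (h : ℕ) (hh : h ≤ 3) : ∃ C : ℝ, 0 < C ∧
    ∀ (w : 𝓢(EuclideanSpace ℝ (Fin N), ℂ)) (F : ℝ), (∀ x, ‖(Δ (Δ w)) x‖ ≤ F) →
    ∀ (m : Fin h → EuclideanSpace ℝ (Fin N)) x,
    ‖(∂^{m} w) x - 2 * Aop H.k (∂^{m} w) 1 x + Aop H.k (∂^{m} w) (√2) x‖ ≤ C * (∏ i, ‖m i‖) * F := by
  set I := ∫ y, ‖iteratedFDeriv ℝ h H.k y‖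
  have hI : 0 ≤ I := integral_nonneg fun y => norm_nonneg _
  refine ⟨12 * 8 * (I + 1), by positivity, fun w F hF m x => ?_⟩
  have hF0 : 0 ≤ F := (norm_nonneg _).trans (hF 0)
  have hp : 0 ≤ ∏ i, ‖m i‖ := Finset.prod_nonneg fun i _ => norm_nonneg _
  have := second_diff (fun r => Aop H.k (∂^{m} w) r x) (fun r => Aop H.k (Δ (∂^{m} w)) r x)
    (fun r => Aop H.k (Δ (Δ (∂^{m} w))) r x) (fun r => H.der _ r x) (fun r => H.der _ r x)
    (8 * I * (∏ i, ‖m i‖) * F) (fun r hr hr2 => ?_)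
  · simp only [Aop_zero H.k _ H.int] at this
    have h5 : 0 ≤ (∏ i, ‖m i‖) * F := by positivity
    nlinarith
  · rw [lap_iter_comm, lap_iter_comm, le_div_iff₀ (by positivity)]
    have h1 := Aop_iter_bound H.k (Δ (Δ w)) r hr.le x h m F hF
    have h2 : r ^ 3 ≤ 8 * r ^ h := by
      have : r ^ 3 = r ^ (3 - h) * r ^ h := by rw [← pow_add]; congr 1; omega
      rw [this]
      gcongr
      calc r ^ (3 - h) ≤ 2 ^ (3 - h) := by gcongr
        _ ≤ 2 ^ 3 := pow_le_pow_right₀ (by norm_num) (by omega)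
        _ = 8 := by norm_num
    calc _ ≤ ‖Aop H.k (∂^{m} (Δ (Δ w))) r x‖ * (8 * r ^ h) := by gcongr
      _ = 8 * (r ^ h * ‖Aop H.k (∂^{m} (Δ (Δ w))) r x‖) := by ring
      _ ≤ _ := by nlinarith

lemma HeatK.five_bound (H : HeatK N) : ∃ C : ℝ, 0 < C ∧
    ∀ (w : 𝓢(EuclideanSpace ℝ (Fin N), ℂ)) (F : ℝ), (∀ x, ‖(Δ (Δ w)) x‖ ≤ F) →
    ∀ (m : Fin 5 → EuclideanSpace ℝ (Fin N)) x r, 1 ≤ r →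
    ‖Aop H.k (∂^{m} w) r x‖ ≤ C * (∏ i, ‖m i‖) * F := by
  set I := ∫ y, ‖iteratedFDeriv ℝ 5 H.k y‖
  have hI : 0 ≤ I := integral_nonneg fun y => norm_nonneg _
  refine ⟨2 * (I + 1), by positivity, fun w F hF m x => ?_⟩
  have hF0 : 0 ≤ F := (norm_nonneg _).trans (hF 0)
  have hp : 0 ≤ ∏ i, ‖m i‖ := Finset.prod_nonneg fun i _ => norm_nonneg _
  have hlim : ∀ n : ℕ, 0 < n → ∀ K : ℝ, Filter.Tendsto (fun R : ℝ => K / R ^ n) Filter.atTop (nhds 0) := by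
    intro n hn K
    exact Filter.Tendsto.const_div_atTop (Filter.tendsto_pow_atTop hn.ne') K
  have hb : ∀ g : 𝓢(EuclideanSpace ℝ (Fin N), ℂ), ∀ M : ℝ, (∀ x, ‖g x‖ ≤ M) → ∀ r, 0 < r →
      ‖Aop H.k (∂^{m} g) r x‖ ≤ I * (∏ i, ‖m i‖) * M / r ^ 5 := by
    intro g M hM r hr
    rw [le_div_iff₀ (by positivity), mul_comm]
    exact Aop_iter_bound H.k g r hr.le x 5 m M hM
  set A := I * (∏ i, ‖m i‖) * F with hA
  have hA0 : 0 ≤ A := by positivity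
  have tail : ∀ (g : 𝓢(EuclideanSpace ℝ (Fin N), ℂ)) (n : ℕ) (K : ℝ) (_ : 0 ≤ K),
      (∀ s : ℝ, 0 < s → ‖2 * (s:ℂ) * Aop H.k (Δ (∂^{m} g)) s x‖ ≤ K * n / s ^ (n + 1)) →
      ∀ r, 0 < r → ‖Aop H.k (∂^{m} g) r x‖ ≤ K / r ^ n := by
    intro g n K hK hs r hr
    obtain ⟨M, hM0, hM⟩ := sch_bdd g
    have hl : Filter.Tendsto (fun R : ℝ => K / r ^ n + (I * (∏ i, ‖m i‖) * M) / R ^ 5) Filter.atTop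
      (nhds (K / r ^ n + 0)) := (hlim 5 (by norm_num) _).const_add _
    rw [add_zero] at hl
    refine ge_of_tendsto hl (Filter.eventually_atTop.mpr ⟨r, fun R hR => ?_⟩)
    have h1 := incr_bound (fun r => Aop H.k (∂^{m} g) r x) _ (fun r => H.der _ r x) n K r R hr hR
      (fun s hs1 _ => hs s (hr.trans_le hs1))
    have h2 := hb g M hM R (hr.trans_le hR)
    have h3 : ‖Aop H.k (∂^{m} g) r x‖ ≤ ‖Aop H.k (∂^{m} g) R x‖ +
        ‖Aop H.k (∂^{m} g) R x - Aop H.k (∂^{m} g) r x‖ := by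
      have := norm_sub_le (Aop H.k (∂^{m} g) R x) (Aop H.k (∂^{m} g) R x - Aop H.k (∂^{m} g) r x)
      simpa using this
    have h4 : 0 ≤ K * (1 / R ^ n) := by have : 0 < R := hr.trans_le hR; positivity
    have h5 : K / r ^ n = K * (1 / r ^ n) := by ring
    linarith
  have hP := tail (Δ w) 3 A hA0 (fun s hs => by
    rw [lap_iter_comm, norm_mul, norm_mul, Complex.norm_real, Real.norm_of_nonneg hs.le]
    have := hb (Δ (Δ w)) F hF s hs
    calc _ ≤ ‖(2:ℂ)‖ * s * (A / s ^ 5) := by gcongr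
      _ = 2 * A / s ^ 4 := by simp; field_simp
      _ ≤ _ := by push_cast; rw [mul_comm 2 A]; gcongr; norm_num)
  have hy := tail w 1 (2 * A) (by positivity) (fun s hs => by
    rw [lap_iter_comm, norm_mul, norm_mul, Complex.norm_real, Real.norm_of_nonneg hs.le]
    have := hP s hs
    calc _ ≤ ‖(2:ℂ)‖ * s * (A / s ^ 3) := by gcongr
      _ = _ := by simp; field_simp)
  intro r hr
  refine (hy r (by linarith)).trans ?_
  have h5 : 0 ≤ (∏ i, ‖m i‖) * F := by positivity
  calc 2 * A / r ^ 1 ≤ 2 * A / 1 := by gcongr; simpa using hr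
    _ ≤ _ := by rw [hA]; nlinarith

lemma sch_norm_le (w : 𝓢(EuclideanSpace ℝ (Fin N), ℂ)) (h : ℕ) (x : EuclideanSpace ℝ (Fin N))
    (C : ℝ) (hC : 0 ≤ C) (H : ∀ m : Fin h → EuclideanSpace ℝ (Fin N),
      ‖(∂^{m} w) x‖ ≤ C * (∏ i, ‖m i‖)) : ‖iteratedFDeriv ℝ h w x‖ ≤ C := by
  refine ContinuousMultilinearMap.opNorm_le_bound hC fun m => ?_
  rw [← SchwartzMap.iteratedLineDerivOp_eq_iteratedFDeriv]
  exact H m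

lemma HeatK.deriv_bound (H : HeatK N) (h : ℕ) (hh : h ≤ 3) : ∃ C : ℝ, 0 < C ∧
    ∀ (w : 𝓢(EuclideanSpace ℝ (Fin N), ℂ)) (F W : ℝ), (∀ x, ‖(Δ (Δ w)) x‖ ≤ F) →
    (∀ x, ‖w x‖ ≤ W) → ∀ x, ‖iteratedFDeriv ℝ h w x‖ ≤ C * (F + W) := by
  obtain ⟨C, hC, hb⟩ := H.sd_bound h hh
  set I := ∫ y, ‖iteratedFDeriv ℝ h H.k y‖
  have hI : 0 ≤ I := integral_nonneg fun y => norm_nonneg _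
  refine ⟨C + 3 * I, by positivity, fun w F W hF hW x => ?_⟩
  have hF0 : 0 ≤ F := (norm_nonneg _).trans (hF 0)
  have hW0 : 0 ≤ W := (norm_nonneg _).trans (hW 0)
  refine sch_norm_le w h x _ (by positivity) fun m => ?_
  have hp : 0 ≤ ∏ i, ‖m i‖ := Finset.prod_nonneg fun i _ => norm_nonneg _
  have h1 := hb w F hF m x
  have h2 := Aop_iter_bound H.k w 1 zero_le_one x h m W hW
  have h3 := Aop_iter_bound H.k w (√2) (by positivity) x h m W hW
  have hs1 : (1:ℝ) ≤ √2 ^ h := one_le_pow₀ (by rw [Real.one_le_sqrt]; norm_num)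
  rw [one_pow, one_mul] at h2
  have h3' : ‖Aop H.k (∂^{m} w) (√2) x‖ ≤ I * (∏ i, ‖m i‖) * W := by
    refine le_trans ?_ h3
    exact le_mul_of_one_le_left (norm_nonneg _) hs1
  have e : (∂^{m} w) x = ((∂^{m} w) x - 2 * Aop H.k (∂^{m} w) 1 x + Aop H.k (∂^{m} w) (√2) x) +
    (2 * Aop H.k (∂^{m} w) 1 x - Aop H.k (∂^{m} w) (√2) x) := by ring
  rw [e]
  refine (norm_add_le _ _).trans ?_
  have h4 := norm_sub_le (2 * Aop H.k (∂^{m} w) 1 x) (Aop H.k (∂^{m} w) (√2) x)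
  rw [norm_mul, Complex.norm_ofNat] at h4
  have p1 : 0 ≤ C * (∏ i, ‖m i‖) * W := by positivity
  have p2 : 0 ≤ I * (∏ i, ‖m i‖) * F := by positivity
  nlinarith

/-- Unit-frequency a priori bound, for Schwartz functions. -/
lemma lemmaA_schwartz (N : ℕ) : ∃ C : ℝ, 0 < C ∧ ∀ μ : ℂ, ‖μ‖ = 1 → 0 ≤ μ.re →
    ∀ (w : 𝓢(EuclideanSpace ℝ (Fin N), ℂ)) (F : ℝ), (∀ x, ‖μ * w x + (Δ (Δ w)) x‖ ≤ F) →
    ∀ h, h ≤ 3 → ∀ x, ‖iteratedFDeriv ℝ h w x‖ ≤ C * F := by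
  obtain ⟨H⟩ := heatK_exists N
  obtain ⟨C0, hC0, h0⟩ := bires_bound N
  choose! D hD hDb using H.deriv_bound
  refine ⟨(∑ h ∈ Finset.range 4, D h) * (1 + 2 * C0), ?_, fun μ hμ hre w F hF h hh x => ?_⟩
  · have : 0 < ∑ h ∈ Finset.range 4, D h :=
      Finset.sum_pos (fun h hh => hD h (by simp at hh; omega)) (by simp)
    positivity
  have hF0 : 0 ≤ F := (norm_nonneg _).trans (hF 0)
  have hw := h0 μ hμ hre w F hF
  have hl : ∀ x, ‖(Δ (Δ w)) x‖ ≤ (1 + C0) * F := by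
    intro x
    have e : (Δ (Δ w)) x = (μ * w x + (Δ (Δ w)) x) - μ * w x := by ring
    rw [e]
    refine (norm_sub_le _ _).trans ?_
    rw [norm_mul, hμ]
    linarith [hF x, hw x]
  refine (hDb h hh w _ _ hl hw x).trans ?_
  have : D h ≤ ∑ h ∈ Finset.range 4, D h :=
    Finset.single_le_sum (f := D) (fun i hi => (hD i (by simp at hi; omega)).le) (by simp; omega)
  calc D h * ((1 + C0) * F + C0 * F) = D h * ((1 + 2 * C0) * F) := by ring
    _ ≤ (∑ h ∈ Finset.range 4, D h) * ((1 + 2 * C0) * F) := by gcongr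
    _ = _ := by ring

end PartFour

section PartFive
open scoped SchwartzMap LineDeriv Laplacian

variable {N : ℕ}

lemma iter_apply_hasFDerivAt {u : EuclideanSpace ℝ (Fin N) → ℂ} {n : ℕ}
    (hu : ContDiff ℝ (n + 1 : ℕ) u) (m : Fin n → EuclideanSpace ℝ (Fin N))
    (x : EuclideanSpace ℝ (Fin N)) :
    HasFDerivAt (fun x => iteratedFDeriv ℝ n u x m)
      ((ContinuousMultilinearMap.apply ℝ (fun _ : Fin n => EuclideanSpace ℝ (Fin N)) ℂ m).comp
        (fderiv ℝ (iteratedFDeriv ℝ n u) x)) x := by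
  have hd : DifferentiableAt ℝ (iteratedFDeriv ℝ n u) x :=
    (hu.differentiable_iteratedFDeriv (by exact_mod_cast Nat.lt_succ_self n)) x
  exact (ContinuousMultilinearMap.apply ℝ (fun _ : Fin n => EuclideanSpace ℝ (Fin N)) ℂ m).hasFDerivAt.comp x hd.hasFDerivAt

lemma iter_apply_fderiv {u : EuclideanSpace ℝ (Fin N) → ℂ} {n : ℕ}
    (hu : ContDiff ℝ (n + 1 : ℕ) u) (m : Fin n → EuclideanSpace ℝ (Fin N))
    (x v : EuclideanSpace ℝ (Fin N)) :
    fderiv ℝ (fun x => iteratedFDeriv ℝ n u x m) x v =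
      iteratedFDeriv ℝ (n + 1) u x (Matrix.vecCons v m) := by
  rw [(iter_apply_hasFDerivAt hu m x).fderiv, iteratedFDeriv_succ_apply_left]
  rfl

/-- The bilaplacian as a functional of the fourth derivative. -/
noncomputable def blap (A : EuclideanSpace ℝ (Fin N) [×4]→L[ℝ] ℂ) : ℂ :=
  ∑ j : Fin N, ∑ i : Fin N, A ![EuclideanSpace.single j 1, EuclideanSpace.single j 1,
    EuclideanSpace.single i 1, EuclideanSpace.single i 1]

lemma blap_sub (A B : EuclideanSpace ℝ (Fin N) [×4]→L[ℝ] ℂ) : blap (A - B) = blap A - blap B := by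
  simp [blap, Finset.sum_sub_distrib]

lemma blap_add (A B : EuclideanSpace ℝ (Fin N) [×4]→L[ℝ] ℂ) : blap (A + B) = blap A + blap B := by
  simp [blap, Finset.sum_add_distrib]

lemma blap_smul (c : ℝ) (A : EuclideanSpace ℝ (Fin N) [×4]→L[ℝ] ℂ) : blap (c • A) = c • blap A := by
  simp [blap, Finset.mul_sum]

lemma blap_norm (A : EuclideanSpace ℝ (Fin N) [×4]→L[ℝ] ℂ) : ‖blap A‖ ≤ N ^ 2 * ‖A‖ := by
  have : ∀ i j : Fin N, ‖A ![EuclideanSpace.single j 1, EuclideanSpace.single j 1,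
    EuclideanSpace.single i 1, EuclideanSpace.single i 1]‖ ≤ ‖A‖ := by
    intro i j
    refine (A.le_opNorm _).trans (le_of_eq ?_)
    simp [Fin.prod_univ_four]
  calc _ ≤ ∑ j : Fin N, ∑ i : Fin N, ‖A‖ := by
        refine norm_sum_le_of_le _ fun j _ => norm_sum_le_of_le _ fun i _ => this i j
    _ = _ := by simp; ring

lemma lapE_lapE_eq {u : EuclideanSpace ℝ (Fin N) → ℂ} (hu : ContDiff ℝ 4 u)
    (x : EuclideanSpace ℝ (Fin N)) :
    laplacianE (laplacianE u) x = blap (iteratedFDeriv ℝ 4 u x) := by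
  have h3 : ContDiff ℝ (2 + 1 : ℕ) u := hu.of_le (by norm_num)
  have h4 : ContDiff ℝ (3 + 1 : ℕ) u := hu.of_le (by norm_num)
  have e1 : ∀ (b x : EuclideanSpace ℝ (Fin N)), fderiv ℝ (laplacianE u) x b =
      ∑ i : Fin N, iteratedFDeriv ℝ 3 u x ![b, EuclideanSpace.single i 1, EuclideanSpace.single i 1] := by
    intro b x
    have : HasFDerivAt (laplacianE u) _ x :=
      HasFDerivAt.fun_sum fun i _ => iter_apply_hasFDerivAt h3 ![EuclideanSpace.single i 1, EuclideanSpace.single i 1] x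
    rw [this.fderiv]
    simp only [sum_apply]
    refine Finset.sum_congr rfl fun i _ => ?_
    rw [← iter_apply_fderiv h3, (iter_apply_hasFDerivAt h3 _ x).fderiv]
  have hd : ContDiff ℝ 2 (laplacianE u) := by
    refine ContDiff.sum fun i _ => ?_
    have : ContDiff ℝ 2 (iteratedFDeriv ℝ 2 u) := hu.iteratedFDeriv_right (by norm_num)
    exact (ContinuousMultilinearMap.apply ℝ (fun _ : Fin 2 => EuclideanSpace ℝ (Fin N)) ℂ _).contDiff.comp this
  unfold blap
  conv_lhs => unfold laplacianE
  refine Finset.sum_congr rfl fun j _ => ?_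
  rw [iteratedFDeriv_two_apply]
  simp only [Matrix.cons_val_zero, Matrix.cons_val_one]
  have hdd : DifferentiableAt ℝ (fderiv ℝ (laplacianE u)) x :=
    ((hd.fderiv_right (m := 1) (by norm_num)).differentiable (by norm_num)) x
  have e2 : fderiv ℝ (fderiv ℝ (laplacianE u)) x (EuclideanSpace.single j 1) (EuclideanSpace.single j 1)
    = fderiv ℝ (fun x => fderiv ℝ (laplacianE u) x (EuclideanSpace.single j 1)) x (EuclideanSpace.single j 1) := by
    rw [fderiv_clm_apply hdd (by fun_prop)]
    simp
  change fderiv ℝ (fderiv ℝ (laplacianE u)) x (EuclideanSpace.single j 1) (EuclideanSpace.single j 1) = _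
  rw [e2]
  simp_rw [e1]
  have : HasFDerivAt (fun x => ∑ i : Fin N, iteratedFDeriv ℝ 3 u x ![EuclideanSpace.single j 1, EuclideanSpace.single i 1, EuclideanSpace.single i 1]) _ x :=
      HasFDerivAt.fun_sum fun i _ => iter_apply_hasFDerivAt h4 ![EuclideanSpace.single j 1, EuclideanSpace.single i 1, EuclideanSpace.single i 1] x
  rw [this.fderiv]
  simp only [sum_apply]
  refine Finset.sum_congr rfl fun i _ => ?_
  rw [← iter_apply_fderiv h4, (iter_apply_hasFDerivAt h4 _ x).fderiv]

lemma sch_lap_lap (w : 𝓢(EuclideanSpace ℝ (Fin N), ℂ)) (x : EuclideanSpace ℝ (Fin N)) :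
    (Δ (Δ w)) x = blap (iteratedFDeriv ℝ 4 w x) := by
  rw [lap_eq_sum (Δ w), sum_apply]
  refine Finset.sum_congr rfl fun j _ => ?_
  rw [← lap_lineDeriv_comm, ← lap_lineDeriv_comm, lap_eq_sum, sum_apply]
  refine Finset.sum_congr rfl fun i _ => ?_
  rw [← SchwartzMap.iteratedLineDerivOp_eq_iteratedFDeriv]
  simp only [LineDeriv.iteratedLineDerivOp_succ_left, LineDeriv.iteratedLineDerivOp_fin_zero]
  simp only [Matrix.cons_val_zero, Fin.tail_def, Matrix.cons_val_succ]
  rw [lineDeriv_comm' _ (EuclideanSpace.single j 1), lineDeriv_comm' _ (EuclideanSpace.single j 1),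
    lineDeriv_comm' _ (EuclideanSpace.single j 1), lineDeriv_comm' _ (EuclideanSpace.single j 1)]

lemma iter_comp_affine {u : EuclideanSpace ℝ (Fin N) → ℂ} {n : ℕ} (hu : ContDiff ℝ n u)
    (c : EuclideanSpace ℝ (Fin N)) (l : ℝ) (y : EuclideanSpace ℝ (Fin N)) :
    iteratedFDeriv ℝ n (fun y => u (c + l • y)) y = l ^ n • iteratedFDeriv ℝ n u (c + l • y) := by
  have h1 : ContDiff ℝ n (fun z => u (c + z)) := hu.comp (contDiff_const.add contDiff_id)
  have := congrFun (iteratedFDeriv_comp_const_smul l h1) y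
  rw [this, iteratedFDeriv_comp_add_left]

/-- Commutator estimate for a cut-off. -/
lemma leibniz_comm {χ : EuclideanSpace ℝ (Fin N) → ℝ} {z : EuclideanSpace ℝ (Fin N) → ℂ}
    (hχ : ContDiff ℝ 4 χ) (hz : ContDiff ℝ 4 z) (x : EuclideanSpace ℝ (Fin N)) (A B : ℝ)
    (hA : 0 ≤ A) (hB : 0 ≤ B)
    (h1 : ∀ j, 1 ≤ j → j ≤ 4 → ‖iteratedFDeriv ℝ j χ x‖ ≤ A)
    (h2 : ∀ j, j ≤ 3 → ‖iteratedFDeriv ℝ j z x‖ ≤ B) :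
    ‖iteratedFDeriv ℝ 4 (fun y => χ y • z y) x - χ x • iteratedFDeriv ℝ 4 z x‖ ≤ 16 * A * B := by
  have e0 : (fun y => χ y • z y) = (fun y => (χ y - χ x) • z y) + (fun y => χ x • z y) := by
    ext y; simp [sub_mul]
  have hc1 : ContDiff ℝ 4 (fun y => (χ y - χ x) • z y) := (hχ.sub contDiff_const).smul hz
  have hc2 : ContDiff ℝ 4 (fun y => χ x • z y) := hz.const_smul (χ x)
  have e1 : iteratedFDeriv ℝ 4 (fun y => χ y • z y) x - χ x • iteratedFDeriv ℝ 4 z x =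
      iteratedFDeriv ℝ 4 (fun y => (χ y - χ x) • z y) x := by
    rw [e0, iteratedFDeriv_add_apply (hc1.contDiffAt) (hc2.contDiffAt)]
    rw [show (fun y => χ x • z y) = χ x • z from rfl, iteratedFDeriv_const_smul_apply hz.contDiffAt]
    simp
  rw [e1]
  refine (norm_iteratedFDeriv_smul_le (hχ.sub contDiff_const) hz x (n := 4) le_rfl).trans ?_
  have e2 : ∀ j, 1 ≤ j → j ≤ 4 → iteratedFDeriv ℝ j (fun y => χ y - χ x) x = iteratedFDeriv ℝ j χ x := by
    intro j hj hj4
    rw [show (fun y => χ y - χ x) = χ - (fun _ => χ x) from rfl,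
      iteratedFDeriv_sub_apply ((hχ.of_le (by exact_mod_cast hj4)).contDiffAt) contDiffAt_const,
      iteratedFDeriv_const_of_ne (by omega)]
    simp
  rw [Finset.sum_range_succ', Finset.sum_range_succ, Finset.sum_range_succ, Finset.sum_range_succ,
    Finset.sum_range_succ]
  simp only [Finset.sum_range_zero]
  rw [e2 _ (by norm_num) (by norm_num), e2 _ (by norm_num) (by norm_num),
    e2 _ (by norm_num) (by norm_num), e2 _ (by norm_num) (by norm_num)]
  have m : ∀ j, 1 ≤ j → j ≤ 4 → ‖iteratedFDeriv ℝ j χ x‖ * ‖iteratedFDeriv ℝ (4 - j) z x‖ ≤ A * B :=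
    fun j hj hj4 => mul_le_mul (h1 j hj hj4) (h2 _ (by omega)) (norm_nonneg _) hA
  have m1 := m (0 + 1) (by norm_num) (by norm_num)
  have m2 := m (1 + 1) (by norm_num) (by norm_num)
  have m3 := m (2 + 1) (by norm_num) (by norm_num)
  have m4 := m (3 + 1) (by norm_num) (by norm_num)
  have z0 : ‖iteratedFDeriv ℝ 0 (fun y => χ y - χ x) x‖ = 0 := by
    rw [norm_iteratedFDeriv_zero]; simp
  rw [z0]
  have c1 : ((4 : ℕ).choose (0 + 1) : ℝ) = 4 := by norm_num
  have c2 : ((4 : ℕ).choose (1 + 1) : ℝ) = 6 := by norm_num [Nat.choose]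
  have c3 : ((4 : ℕ).choose (2 + 1) : ℝ) = 4 := by norm_num [Nat.choose]
  have c4 : ((4 : ℕ).choose (3 + 1) : ℝ) = 1 := by norm_num
  rw [c1, c2, c3, c4]
  have : 0 ≤ A * B := by positivity
  nlinarith

lemma exists_cutoff (N : ℕ) : ∃ (χ : EuclideanSpace ℝ (Fin N) → ℝ) (A : ℝ), 0 ≤ A ∧
    ContDiff ℝ ((⊤ : ℕ∞) : WithTop ℕ∞) χ ∧ (∀ x, 0 ≤ χ x ∧ χ x ≤ 1) ∧ (∀ x, ‖x‖ ≤ 1 → χ x = 1) ∧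
    (∀ x, 2 ≤ ‖x‖ → χ x = 0) ∧ (∀ j, j ≤ 4 → ∀ x, ‖iteratedFDeriv ℝ j χ x‖ ≤ A) := by
  let f : ContDiffBump (0 : EuclideanSpace ℝ (Fin N)) := ⟨1, 2, one_pos, one_lt_two⟩
  have hc : ∀ j : ℕ, ∃ C, ∀ x, ‖iteratedFDeriv ℝ j f x‖ ≤ C := by
    intro j
    have h1 : HasCompactSupport (iteratedFDeriv ℝ j f) := f.hasCompactSupport.iteratedFDeriv j
    exact h1.exists_bound_of_continuous
      ((f.contDiff (n := (⊤ : ℕ∞))).continuous_iteratedFDeriv (by exact_mod_cast le_top))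
  choose C hC using hc
  have hC0 : ∀ j, 0 ≤ C j := fun j => (norm_nonneg _).trans (hC j 0)
  refine ⟨f, ∑ j ∈ Finset.range 5, C j, Finset.sum_nonneg fun j _ => hC0 j, f.contDiff,
    fun x => ⟨f.nonneg, f.le_one⟩, fun x hx => f.one_of_mem_closedBall (by simpa using hx),
    fun x hx => f.zero_of_le_dist (by simpa using hx), fun j hj x => (hC j x).trans ?_⟩
  exact Finset.single_le_sum (f := C) (fun i _ => hC0 i) (by simp; omega)

end PartFive

section PartSix
open scoped SchwartzMap LineDeriv Laplacian FourierTransform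

variable {N : ℕ}

lemma conv_lineDeriv (f g : 𝓢(EuclideanSpace ℝ (Fin N), ℂ)) (m : EuclideanSpace ℝ (Fin N)) :
    ∂_{m} (SchwartzMap.convolution (ContinuousLinearMap.mul ℂ ℂ) f g)
      = SchwartzMap.convolution (ContinuousLinearMap.mul ℂ ℂ) f (∂_{m} g) := by
  have h : 𝓕 (∂_{m} (SchwartzMap.convolution (ContinuousLinearMap.mul ℂ ℂ) f g))
      = 𝓕 (SchwartzMap.convolution (ContinuousLinearMap.mul ℂ ℂ) f (∂_{m} g)) := by
    rw [SchwartzMap.fourier_lineDerivOp_eq, SchwartzMap.fourier_convolution,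
      SchwartzMap.fourier_convolution, SchwartzMap.fourier_lineDerivOp_eq]
    ext ξ
    have ht : (fun x : EuclideanSpace ℝ (Fin N) => inner ℝ x m).HasTemperateGrowth := by fun_prop
    simp only [smul_apply, SchwartzMap.pairing_apply_apply,
      SchwartzMap.smulLeftCLM_apply_apply ht, ContinuousLinearMap.mul_apply']
    simp only [smul_eq_mul, Complex.real_smul]
    ring
  have := congrArg (fun q => 𝓕⁻ q) h
  simpa using this

lemma heat_op (k : 𝓢(EuclideanSpace ℝ (Fin N), ℂ)) (r : ℝ) (hr : 0 < r) :
    ∃ T : 𝓢(EuclideanSpace ℝ (Fin N), ℂ) → 𝓢(EuclideanSpace ℝ (Fin N), ℂ),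
      (∀ g x, T g x = Aop k g r x) ∧ ∀ (m : EuclideanSpace ℝ (Fin N)) g, ∂_{m} (T g) = T (∂_{m} g) := by
  have hr1 : (-r⁻¹) ≠ 0 := by simp; positivity
  set e : EuclideanSpace ℝ (Fin N) ≃L[ℝ] EuclideanSpace ℝ (Fin N) :=
    ContinuousLinearEquiv.smulLeft (Units.mk0 (-r⁻¹) hr1) with he
  set f := ((r⁻¹ : ℝ) ^ N : ℝ) • SchwartzMap.compCLMOfContinuousLinearEquiv ℂ e k with hf
  refine ⟨fun g => SchwartzMap.convolution (ContinuousLinearMap.mul ℂ ℂ) f g, fun g x => ?_,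
    fun m g => conv_lineDeriv f g m⟩
  simp only
  rw [SchwartzMap.convolution_apply, Aop, MeasureTheory.convolution]
  have h1 := Measure.integral_comp_smul (volume : Measure (EuclideanSpace ℝ (Fin N)))
    (fun y => k y * g (x + r • y)) (-r⁻¹)
  have h2 : ∀ t, (fun y => k y * g (x + r • y)) ((-r⁻¹) • t) = k ((-r⁻¹) • t) * g (x - t) := by
    intro t
    simp only [smul_smul]
    congr 2
    rw [mul_neg, mul_inv_cancel₀ hr.ne']
    simp [sub_eq_add_neg]
  simp_rw [h2] at h1
  have h3 : ∀ t, ((ContinuousLinearMap.mul ℂ ℂ) (f t)) (g (x - t))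
     = (((r⁻¹ : ℝ) ^ N : ℝ) : ℂ) * (k ((-r⁻¹) • t) * g (x - t)) := by
    intro t
    simp only [hf, smul_apply, ContinuousLinearMap.mul_apply', he,
      SchwartzMap.compCLMOfContinuousLinearEquiv_apply, Function.comp]
    rw [Complex.real_smul, mul_assoc]
    rfl
  simp_rw [h3]
  rw [integral_const_mul, h1, finrank_euclideanSpace, Fintype.card_fin, Complex.real_smul,
    ← mul_assoc, ← Complex.ofReal_mul]
  have : (r⁻¹) ^ N * |((-r⁻¹) ^ N)⁻¹| = 1 := by
    rw [abs_inv, abs_pow, abs_neg, abs_of_pos (inv_pos.2 hr)]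
    field_simp
  rw [this]; simp

lemma heat_lap (k : 𝓢(EuclideanSpace ℝ (Fin N), ℂ)) (r : ℝ)
    (T : 𝓢(EuclideanSpace ℝ (Fin N), ℂ) → 𝓢(EuclideanSpace ℝ (Fin N), ℂ))
    (h1 : ∀ g x, T g x = Aop k g r x) (h2 : ∀ (m : EuclideanSpace ℝ (Fin N)) g, ∂_{m} (T g) = T (∂_{m} g))
    (g : 𝓢(EuclideanSpace ℝ (Fin N), ℂ)) : Δ (T g) = T (Δ g) := by
  ext x
  rw [lap_eq_sum, h1, lap_eq_sum, Aop_sum]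
  rw [sum_apply]
  exact Finset.sum_congr rfl fun i _ => by rw [h2, h2, h1]

lemma heat_iter (T : 𝓢(EuclideanSpace ℝ (Fin N), ℂ) → 𝓢(EuclideanSpace ℝ (Fin N), ℂ))
    (h2 : ∀ (m : EuclideanSpace ℝ (Fin N)) g, ∂_{m} (T g) = T (∂_{m} g)) (n : ℕ) (m : Fin n → EuclideanSpace ℝ (Fin N))
    (g : 𝓢(EuclideanSpace ℝ (Fin N), ℂ)) : ∂^{m} (T g) = T (∂^{m} g) := by
  induction n with
  | zero => simp
  | succ n ih => rw [LineDeriv.iteratedLineDerivOp_succ_left, ih, h2,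
     ← LineDeriv.iteratedLineDerivOp_succ_left]

lemma fourier_line_norm (f : 𝓢(EuclideanSpace ℝ (Fin N), ℂ)) (m ξ : EuclideanSpace ℝ (Fin N)) :
    ‖(𝓕 (∂_{m} f)) ξ‖ = 2 * π * |inner ℝ ξ m| * ‖(𝓕 f) ξ‖ := by
  have ht : (fun x : EuclideanSpace ℝ (Fin N) => inner ℝ x m).HasTemperateGrowth := by fun_prop
  rw [SchwartzMap.fourier_lineDerivOp_eq, smul_apply,
    SchwartzMap.smulLeftCLM_apply_apply ht, norm_smul, norm_smul]
  simp [abs_of_pos Real.pi_pos]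
  ring

lemma fourier_lap_norm (f : 𝓢(EuclideanSpace ℝ (Fin N), ℂ)) (ξ : EuclideanSpace ℝ (Fin N)) :
    ‖(𝓕 (Δ f)) ξ‖ = (2 * π * ‖ξ‖) ^ 2 * ‖(𝓕 f) ξ‖ := by
  rw [lap_eq_sum]
  have h : (𝓕 (∑ i, ∂_{(EuclideanSpace.single i (1:ℝ) : EuclideanSpace ℝ (Fin N))} (∂_{(EuclideanSpace.single i (1:ℝ) : EuclideanSpace ℝ (Fin N))} f)) : 𝓢(EuclideanSpace ℝ (Fin N), ℂ)) ξ
    = ∑ i, (𝓕 (∂_{(EuclideanSpace.single i (1:ℝ) : EuclideanSpace ℝ (Fin N))} (∂_{(EuclideanSpace.single i (1:ℝ) : EuclideanSpace ℝ (Fin N))} f)) : 𝓢(EuclideanSpace ℝ (Fin N), ℂ)) ξ := by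
    have := map_sum (FourierTransform.fourierCLM ℂ 𝓢(EuclideanSpace ℝ (Fin N), ℂ))
      (fun i => ∂_{(EuclideanSpace.single i (1:ℝ) : EuclideanSpace ℝ (Fin N))} (∂_{(EuclideanSpace.single i (1:ℝ) : EuclideanSpace ℝ (Fin N))} f))
      Finset.univ
    simp only [FourierTransform.fourierCLM_apply] at this
    rw [this, sum_apply]
  have h2 : ∀ i, (𝓕 (∂_{(EuclideanSpace.single i (1:ℝ) : EuclideanSpace ℝ (Fin N))} (∂_{(EuclideanSpace.single i (1:ℝ) : EuclideanSpace ℝ (Fin N))} f)) : 𝓢(EuclideanSpace ℝ (Fin N), ℂ)) ξ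
     = -((2 * π) ^ 2 * (ξ i) ^ 2 : ℝ) * (𝓕 f) ξ := by
    intro i
    have ht : (fun x : EuclideanSpace ℝ (Fin N) =>
      inner ℝ x (EuclideanSpace.single i (1:ℝ))).HasTemperateGrowth := by fun_prop
    simp only [SchwartzMap.fourier_lineDerivOp_eq, smul_apply,
      SchwartzMap.smulLeftCLM_apply_apply ht]
    simp [EuclideanSpace.inner_single_right]
    linear_combination ((2:ℂ) * π) ^ 2 * (ξ i : ℂ) ^ 2 * (𝓕 f) ξ * Complex.I_sq
  rw [h]
  simp_rw [h2]
  rw [← Finset.sum_mul, norm_mul]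
  congr 1
  simp only [← Complex.ofReal_neg, ← Complex.ofReal_sum]
  rw [Finset.sum_neg_distrib, ← Finset.mul_sum, Complex.norm_real, norm_neg, mul_pow (2 * π) ‖ξ‖,
    EuclideanSpace.norm_sq_eq]
  simp only [Real.norm_eq_abs, sq_abs]
  exact abs_of_nonneg (by positivity)

lemma fourth_L2 (f : 𝓢(EuclideanSpace ℝ (Fin N), ℂ)) (m : Fin 4 → EuclideanSpace ℝ (Fin N))
    (hm : ∀ i, ‖m i‖ ≤ 1) : ∫ x, ‖(∂^{m} f) x‖ ^ 2 ≤ ∫ x, ‖(Δ (Δ f)) x‖ ^ 2 := by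
  rw [← SchwartzMap.integral_norm_sq_fourier (∂^{m} f), ← SchwartzMap.integral_norm_sq_fourier (Δ (Δ f))]
  have hi : ∀ g : 𝓢(EuclideanSpace ℝ (Fin N), ℂ), Integrable (fun x => ‖g x‖ ^ 2) := fun g =>
    (memLp_two_iff_integrable_sq_norm g.continuous.aestronglyMeasurable).1 (g.memLp 2 volume)
  refine integral_mono (hi _) (hi _) fun ξ => ?_
  simp only
  refine pow_le_pow_left₀ (norm_nonneg _) ?_ 2
  rw [fourier_lap_norm, fourier_lap_norm]
  simp only [LineDeriv.iteratedLineDerivOp_succ_left, LineDeriv.iteratedLineDerivOp_fin_zero,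
    fourier_line_norm]
  have hb : ∀ i, |inner ℝ ξ (m i)| ≤ ‖ξ‖ := fun i =>
    (abs_real_inner_le_norm _ _).trans (mul_le_of_le_one_right (norm_nonneg _) (hm i))
  have hp := Real.pi_pos
  have e : (2 * π * ‖ξ‖) ^ 2 * ((2 * π * ‖ξ‖) ^ 2 * ‖(𝓕 f) ξ‖) =
    2 * π * ‖ξ‖ * (2 * π * ‖ξ‖ * (2 * π * ‖ξ‖ * (2 * π * ‖ξ‖ * ‖(𝓕 f) ξ‖))) := by ring
  rw [e]
  gcongr <;> exact hb _
end PartSix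

section PartSeven
open scoped SchwartzMap LineDeriv Laplacian

variable {N : ℕ}

lemma cut_bound {χ : EuclideanSpace ℝ (Fin N) → ℝ} {z : EuclideanSpace ℝ (Fin N) → ℂ}
    (hχ : ContDiff ℝ 4 χ) (hz : ContDiff ℝ 4 z) (x : EuclideanSpace ℝ (Fin N)) (A B : ℝ)
    (hA : 0 ≤ A) (hB : 0 ≤ B)
    (h1 : ∀ j, 1 ≤ j → j ≤ 4 → ‖iteratedFDeriv ℝ j χ x‖ ≤ A)
    (h2 : ∀ j, j ≤ 3 → ‖iteratedFDeriv ℝ j z x‖ ≤ B) :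
    ‖blap (iteratedFDeriv ℝ 4 (fun y => χ y • z y) x) - χ x • blap (iteratedFDeriv ℝ 4 z x)‖
      ≤ N ^ 2 * (16 * A * B) := by
  rw [← blap_smul, ← blap_sub]
  refine (blap_norm _).trans ?_
  gcongr
  exact leibniz_comm hχ hz x A B hA hB h1 h2

lemma osc_unit (N : ℕ) : ∃ C : ℝ, 0 < C ∧
    ∀ (w : 𝓢(EuclideanSpace ℝ (Fin N), ℂ)) (F : ℝ), (∀ x, ‖(Δ (Δ w)) x‖ ≤ F) →
    ∀ m : Fin 4 → EuclideanSpace ℝ (Fin N), (∀ i, ‖m i‖ ≤ 1) → ∃ c : ℂ,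
    ∫ x in ball 0 1, ‖(∂^{m} w) x - c‖ ^ 2 ≤ C * F ^ 2 := by
  obtain ⟨H⟩ := heatK_exists N
  obtain ⟨T1, hT1, hT1'⟩ := heat_op H.k 1 one_pos
  obtain ⟨T2, hT2, hT2'⟩ := heat_op H.k (√2) (by positivity)
  obtain ⟨C5, hC5, h5⟩ := H.five_bound
  choose! D hD hDb using H.sd_bound
  obtain ⟨χ, A, hA, hχ, hχ01, hχ1, hχ2, hχA⟩ := exists_cutoff N
  set K := ∫ y, ‖H.k y‖ with hK
  have hK0 : 0 ≤ K := integral_nonneg fun y => norm_nonneg _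
  set D0 := ∑ h ∈ Finset.range 4, D h with hD0
  have hDD : ∀ h ≤ 3, D h ≤ D0 := fun h hh =>
    Finset.single_le_sum (f := D) (fun i hi => (hD i (by simp at hi; omega)).le) (by simp; omega)
  have hD0' : 0 ≤ D0 := (hD 0 (by norm_num)).le.trans (hDD 0 (by norm_num))
  set C1 := (1 + 3 * K) + N ^ 2 * (16 * A * D0) with hC1
  have hC10 : 0 ≤ C1 := by positivity
  set V := (volume (closedBall (0 : EuclideanSpace ℝ (Fin N)) 2)).toReal with hV
  have hV0 : 0 ≤ V := ENNReal.toReal_nonneg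
  refine ⟨2 * (C1 ^ 2 * V) + 2 * ((3 * C5) ^ 2 * V) + 1, by positivity, fun w F hF m hm => ?_⟩
  have hF0 : 0 ≤ F := (norm_nonneg _).trans (hF 0)
  set z := w - (2:ℂ) • T1 w + T2 w with hz
  set S := (2:ℂ) • T1 w - T2 w with hS
  have hziter : ∀ (h : ℕ) (m : Fin h → EuclideanSpace ℝ (Fin N)) x, (∂^{m} z) x
      = (∂^{m} w) x - 2 * Aop H.k (∂^{m} w) 1 x + Aop H.k (∂^{m} w) (√2) x := by
    intro h m x
    rw [hz, sub_eq_add_neg, LineDeriv.iteratedLineDerivOp_add, LineDeriv.iteratedLineDerivOp_add,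
      LineDeriv.iteratedLineDerivOp_neg, LineDeriv.iteratedLineDerivOp_smul,
      heat_iter T1 hT1', heat_iter T2 hT2']
    simp [hT1, hT2, sub_eq_add_neg]
  have hSiter : ∀ (h : ℕ) (m : Fin h → EuclideanSpace ℝ (Fin N)) x, (∂^{m} S) x
      = 2 * Aop H.k (∂^{m} w) 1 x - Aop H.k (∂^{m} w) (√2) x := by
    intro h m x
    rw [hS, sub_eq_add_neg, LineDeriv.iteratedLineDerivOp_add,
      LineDeriv.iteratedLineDerivOp_neg, LineDeriv.iteratedLineDerivOp_smul,
      heat_iter T1 hT1', heat_iter T2 hT2']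
    simp [hT1, hT2, sub_eq_add_neg]
  have hzb : ∀ h ≤ 3, ∀ x, ‖iteratedFDeriv ℝ h z x‖ ≤ D0 * F := by
    intro h hh x
    refine sch_norm_le z h x _ (by positivity) fun m => ?_
    rw [hziter]
    refine (hDb h hh w F hF m x).trans ?_
    have hp : 0 ≤ ∏ i, ‖m i‖ := Finset.prod_nonneg fun i _ => norm_nonneg _
    have := hDD h hh
    calc _ = D h * ((∏ i, ‖m i‖) * F) := by ring
      _ ≤ D0 * ((∏ i, ‖m i‖) * F) := by gcongr
      _ = _ := by ring
  have hzl : ∀ x, ‖(Δ (Δ z)) x‖ ≤ (1 + 3 * K) * F := by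
    intro x
    have e : Δ (Δ z) = Δ (Δ w) - (2:ℂ) • T1 (Δ (Δ w)) + T2 (Δ (Δ w)) := by
      rw [hz, lap_add, lap_sub, lap_smul, lap_add, lap_sub, lap_smul,
        heat_lap H.k 1 T1 hT1 hT1', heat_lap H.k 1 T1 hT1 hT1',
        heat_lap H.k _ T2 hT2 hT2', heat_lap H.k _ T2 hT2 hT2']
    have e2 : (Δ (Δ z)) x = (Δ (Δ w)) x - 2 * Aop H.k (Δ (Δ w)) 1 x + Aop H.k (Δ (Δ w)) (√2) x := by
      rw [e]; simp [hT1, hT2]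
    rw [e2]
    have a1 := Aop_norm_le H.k (Δ (Δ w)) 1 x F hF
    have a2 := Aop_norm_le H.k (Δ (Δ w)) (√2) x F hF
    have a3 := norm_add_le ((Δ (Δ w)) x - 2 * Aop H.k (Δ (Δ w)) 1 x) (Aop H.k (Δ (Δ w)) (√2) x)
    have a4 := norm_sub_le ((Δ (Δ w)) x) (2 * Aop H.k (Δ (Δ w)) 1 x)
    rw [norm_mul, Complex.norm_ofNat] at a4
    linarith [hF x]
  have hχ4 : ContDiff ℝ 4 χ := hχ.of_le (WithTop.coe_le_coe.2 (le_top : ((4:ℕ) : ℕ∞) ≤ ⊤))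
  have hfs : ContDiff ℝ ((⊤ : ℕ∞) : WithTop ℕ∞) (fun y => χ y • z y) := hχ.smul (z.smooth _)
  have hfc : HasCompactSupport (fun y => χ y • z y) := by
    refine HasCompactSupport.intro (isCompact_closedBall (0 : EuclideanSpace ℝ (Fin N)) 2) ?_
    intro x hx
    simp only [mem_closedBall, dist_zero_right, not_le] at hx
    simp [hχ2 x hx.le]
  set f := hfc.toSchwartzMap hfs with hf
  have hfe : (f : EuclideanSpace ℝ (Fin N) → ℂ) = fun y => χ y • z y := by
    ext y; exact HasCompactSupport.toSchwartzMap_toFun hfc hfs y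
  have hfl : ∀ x, ‖(Δ (Δ f)) x‖ ≤ C1 * F := by
    intro x
    rw [sch_lap_lap, hfe]
    have a1 := cut_bound hχ4 (z.smooth 4) x A (D0 * F) hA (by positivity)
      (fun j _ hj => hχA j hj x) (fun j hj => hzb j hj x)
    have a2 := hzl x
    rw [sch_lap_lap] at a2
    have a3 : ‖χ x • blap (iteratedFDeriv ℝ 4 z x)‖ ≤ (1 + 3 * K) * F := by
      rw [norm_smul, Real.norm_of_nonneg (hχ01 x).1]
      exact (mul_le_of_le_one_left (norm_nonneg _) (hχ01 x).2).trans a2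
    have a4 := norm_add_le (blap (iteratedFDeriv ℝ 4 (fun y => χ y • z y) x) -
      χ x • blap (iteratedFDeriv ℝ 4 z x)) (χ x • blap (iteratedFDeriv ℝ 4 z x))
    rw [sub_add_cancel] at a4
    calc _ ≤ _ := a4
      _ ≤ N ^ 2 * (16 * A * (D0 * F)) + (1 + 3 * K) * F := add_le_add a1 a3
      _ = C1 * F := by rw [hC1]; ring
  have hfz : ∀ x, x ∉ closedBall (0 : EuclideanSpace ℝ (Fin N)) 2 → (Δ (Δ f)) x = 0 := by
    intro x hx
    rw [sch_lap_lap, hfe]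
    have : iteratedFDeriv ℝ 4 (fun y => χ y • z y) x = 0 := by
      by_contra hne
      have h1 := support_iteratedFDeriv_subset (𝕜 := ℝ) 4 (f := fun y => χ y • z y)
        (Function.mem_support.2 hne)
      refine hx (closure_minimal ?_ isClosed_closedBall h1)
      intro y hy
      by_contra hy2
      simp only [mem_closedBall, dist_zero_right, not_le] at hy2
      exact hy (by simp [hχ2 y hy2.le])
    rw [this]
    have := blap_norm (0 : ContinuousMultilinearMap ℝ (fun _ : Fin 4 => EuclideanSpace ℝ (Fin N)) ℂ)
    simpa using this
  have hi : ∀ g : 𝓢(EuclideanSpace ℝ (Fin N), ℂ), Integrable (fun x => ‖g x‖ ^ 2) := fun g =>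
    (memLp_two_iff_integrable_sq_norm g.continuous.aestronglyMeasurable).1 (g.memLp 2 volume)
  have hfin : volume (closedBall (0 : EuclideanSpace ℝ (Fin N)) 2) ≠ ⊤ :=
    measure_closedBall_lt_top.ne
  have hI1 : ∫ x, ‖(∂^{m} f) x‖ ^ 2 ≤ C1 ^ 2 * V * F ^ 2 := by
    refine (fourth_L2 f m hm).trans ?_
    rw [← setIntegral_eq_integral_of_forall_compl_eq_zero
      (s := closedBall (0 : EuclideanSpace ℝ (Fin N)) 2) (fun x hx => by rw [hfz x hx]; simp)]
    calc _ ≤ ∫ x in closedBall (0 : EuclideanSpace ℝ (Fin N)) 2, (C1 * F) ^ 2 := by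
          refine setIntegral_mono (hi _).integrableOn (integrableOn_const hfin) fun x => ?_
          exact pow_le_pow_left₀ (norm_nonneg _) (hfl x) 2
      _ = _ := by rw [setIntegral_const]; simp only [Measure.real, smul_eq_mul, hV]; ring
  have hSl : ∀ x ∈ ball (0 : EuclideanSpace ℝ (Fin N)) 1,
      ‖(∂^{m} S) x - (∂^{m} S) 0‖ ≤ 3 * C5 * F := by
    intro x hx
    have hd : ∀ y, HasFDerivAt (fun x => (∂^{m} S) x) (fderiv ℝ (fun x => (∂^{m} S) x) y) y := fun y =>
      ((∂^{m} S).differentiableAt).hasFDerivAt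
    have := Convex.norm_image_sub_le_of_norm_hasFDerivWithin_le
      (s := Set.univ) (C := 3 * C5 * F) (f := fun x => (∂^{m} S) x) (x := 0) (y := x)
      (fun y _ => (hd y).hasFDerivWithinAt) (fun y _ => ?_) convex_univ trivial trivial
    · refine this.trans ?_
      simp only [sub_zero, mem_ball, dist_zero_right] at hx ⊢
      exact mul_le_of_le_one_right (by positivity) hx.le
    · refine ContinuousLinearMap.opNorm_le_bound _ (by positivity) fun v => ?_
      have e1 : fderiv ℝ (fun x => (∂^{m} S) x) y v = (∂^{(Matrix.vecCons v m : Fin 5 → _)} S) y := by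
        rw [LineDeriv.iteratedLineDerivOp_succ_left]
        rfl
      rw [e1, hSiter]
      have b1 := h5 w F hF (Matrix.vecCons v m) y 1 le_rfl
      have b2 := h5 w F hF (Matrix.vecCons v m) y (√2) (by rw [Real.one_le_sqrt]; norm_num)
      have b3 := norm_sub_le (2 * Aop H.k (∂^{(Matrix.vecCons v m : Fin 5 → _)} w) 1 y)
        (Aop H.k (∂^{(Matrix.vecCons v m : Fin 5 → _)} w) (√2) y)
      rw [norm_mul, Complex.norm_ofNat] at b3
      have hpr : ∏ i, ‖(Matrix.vecCons v m : Fin 5 → EuclideanSpace ℝ (Fin N)) i‖ ≤ ‖v‖ := by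
        rw [Fin.prod_univ_succ]
        simp only [Matrix.cons_val_zero, Matrix.cons_val_succ]
        exact mul_le_of_le_one_right (norm_nonneg _)
          (Finset.prod_le_one (fun i _ => norm_nonneg _) fun i _ => hm i)
      have b4 : C5 * (∏ i, ‖(Matrix.vecCons v m : Fin 5 → EuclideanSpace ℝ (Fin N)) i‖) * F
        ≤ C5 * ‖v‖ * F := by gcongr
      linarith
  refine ⟨(∂^{m} S) 0, ?_⟩
  have hwe : ∀ x ∈ ball (0 : EuclideanSpace ℝ (Fin N)) 1,
      (∂^{m} w) x = (∂^{m} f) x + (∂^{m} S) x := by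
    intro x hx
    have e1 : (∂^{m} f) x = (∂^{m} z) x := by
      rw [SchwartzMap.iteratedLineDerivOp_eq_iteratedFDeriv,
        SchwartzMap.iteratedLineDerivOp_eq_iteratedFDeriv]
      have : (f : EuclideanSpace ℝ (Fin N) → ℂ) =ᶠ[nhds x] z := by
        filter_upwards [isOpen_ball.mem_nhds hx] with y hy
        rw [hfe]
        simp only [mem_ball, dist_zero_right] at hy
        simp [hχ1 y hy.le]
      rw [(Filter.EventuallyEq.iteratedFDeriv ℝ this 4).eq_of_nhds]
    rw [e1, hziter, hSiter]; ring
  have hb0 : volume (ball (0 : EuclideanSpace ℝ (Fin N)) 1) ≠ ⊤ := measure_ball_lt_top.ne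
  have hVb : (volume (ball (0 : EuclideanSpace ℝ (Fin N)) 1)).toReal ≤ V :=
    ENNReal.toReal_mono hfin (measure_mono (fun x hx => by
      simp only [mem_ball, dist_zero_right, mem_closedBall] at hx ⊢; linarith))
  calc _ ≤ ∫ x in ball (0 : EuclideanSpace ℝ (Fin N)) 1,
        (2 * ‖(∂^{m} f) x‖ ^ 2 + 2 * (3 * C5 * F) ^ 2) := by
        refine setIntegral_mono_on ?_ ?_ measurableSet_ball fun x hx => ?_
        · refine IntegrableOn.mono_set (t := closedBall 0 1) ?_ ball_subset_closedBall
          refine ContinuousOn.integrableOn_compact (isCompact_closedBall _ _) ?_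
          exact (((∂^{m} w).continuous.sub continuous_const).norm.pow 2).continuousOn
        · exact ((hi _).const_mul 2).integrableOn.add (integrableOn_const hb0)
        · rw [hwe x hx]
          have c1 := hSl x hx
          have c2 := norm_add_le ((∂^{m} f) x) ((∂^{m} S) x - (∂^{m} S) 0)
          rw [add_sub_assoc]
          calc _ ≤ (‖(∂^{m} f) x‖ + 3 * C5 * F) ^ 2 :=
                pow_le_pow_left₀ (norm_nonneg _) (c2.trans (by gcongr)) 2
            _ ≤ _ := by nlinarith [sq_nonneg (‖(∂^{m} f) x‖ - 3 * C5 * F)]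
    _ = 2 * (∫ x in ball (0 : EuclideanSpace ℝ (Fin N)) 1, ‖(∂^{m} f) x‖ ^ 2) +
        (volume (ball (0 : EuclideanSpace ℝ (Fin N)) 1)).toReal * (2 * (3 * C5 * F) ^ 2) := by
        rw [integral_add ((hi _).const_mul 2).integrableOn (integrableOn_const hb0),
          integral_const_mul, setIntegral_const]
        rfl
    _ ≤ 2 * (C1 ^ 2 * V * F ^ 2) + V * (2 * (3 * C5 * F) ^ 2) := by
        gcongr
        exact (setIntegral_le_integral (hi _) (Filter.Eventually.of_forall fun x => by positivity)).trans hI1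
    _ ≤ _ := by nlinarith [sq_nonneg F]

end PartSeven

section PartEight

variable {N : ℕ}

lemma bell_two (a1 a2 q1 q2 : ℝ) (h1 : 0 ≤ q1 - a1 ^ 2) (h2 : 0 ≤ q2 - a2 ^ 2)
    (hV : (q1 + q2) / 2 - ((a1 + a2) / 2) ^ 2 ≤ 1) (g : ℝ → ℝ)
    (hg : ∀ v, g v = 1 + 2 * v - v ^ 2 / 2) :
    (exp (1 / 3 * a1) * g (q1 - a1 ^ 2) + exp (1 / 3 * a2) * g (q2 - a2 ^ 2)) / 2 ≤
      exp (1 / 3 * ((a1 + a2) / 2)) * g ((q1 + q2) / 2 - ((a1 + a2) / 2) ^ 2) := by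
  obtain ⟨m, hm⟩ : ∃ m, m = (a1 + a2) / 2 := ⟨_, rfl⟩
  obtain ⟨δ, hδ⟩ : ∃ δ, δ = (a1 - a2) / 2 := ⟨_, rfl⟩
  obtain ⟨v, hv⟩ : ∃ v, v = ((q1 - a1 ^ 2) + (q2 - a2 ^ 2)) / 2 := ⟨_, rfl⟩
  obtain ⟨d, hd⟩ : ∃ d, d = ((q1 - a1 ^ 2) - (q2 - a2 ^ 2)) / 2 := ⟨_, rfl⟩
  have e1 : a1 = m + δ := by rw [hm, hδ]; ring
  have e2 : a2 = m + -δ := by rw [hm, hδ]; ring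
  have e3 : q1 - a1 ^ 2 = v + d := by rw [hv, hd]; ring
  have e4 : q2 - a2 ^ 2 = v - d := by rw [hv, hd]; ring
  have e5 : (q1 + q2) / 2 - ((a1 + a2) / 2) ^ 2 = v + δ ^ 2 := by rw [hv, hδ]; ring
  rw [e3, e4, e5, ← hm]
  rw [e3] at h1
  rw [e4] at h2
  rw [e5] at hV
  have hv0 : 0 ≤ v := by linarith
  rw [e1, e2, mul_add, mul_add, Real.exp_add, Real.exp_add]
  have hδ1 : |δ| ≤ 1 := by
    rw [← sq_le_one_iff_abs_le_one]; linarith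
  have hs : |1 / 3 * δ| ≤ 1 := by
    rw [abs_mul, abs_of_pos (by norm_num : (0:ℝ) < 1 / 3)]; linarith
  have hs2 : |1 / 3 * -δ| ≤ 1 := by rw [mul_neg, abs_neg]; exact hs
  have x1 := (abs_le.1 (Real.abs_exp_sub_one_sub_id_le hs)).2
  have x2 := (abs_le.1 (Real.abs_exp_sub_one_sub_id_le hs2)).2
  have hd1 : d ≤ v := by linarith
  have hd2 : -v ≤ d := by linarith
  have hv1 : v ≤ 1 := by nlinarith [sq_nonneg δ]
  have hg1 : 0 ≤ g (v + d) := by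
    rw [hg]; nlinarith
  have hg2 : 0 ≤ g (v - d) := by
    rw [hg]; nlinarith
  have y1 : exp (1 / 3 * δ) * g (v + d) ≤ (1 + 1 / 3 * δ + (1 / 3 * δ) ^ 2) * g (v + d) := by
    gcongr; linarith
  have y2 : exp (1 / 3 * -δ) * g (v - d) ≤ (1 - 1 / 3 * δ + (1 / 3 * δ) ^ 2) * g (v - d) := by
    gcongr; linarith
  have key : ((1 + 1 / 3 * δ + (1 / 3 * δ) ^ 2) * g (v + d) +
      (1 - 1 / 3 * δ + (1 / 3 * δ) ^ 2) * g (v - d)) / 2 ≤ g (v + δ ^ 2) := by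
    rw [hg, hg, hg]
    have k1 : 0 ≤ (d - 2 / 3 * δ * (1 - v / 2)) ^ 2 := sq_nonneg _
    have k2 : 0 ≤ δ ^ 2 := sq_nonneg _
    have k3 : (1 - v / 2) ^ 2 ≤ 1 := by nlinarith
    have k4 : δ ^ 2 * (1 - v / 2) ^ 2 ≤ δ ^ 2 := mul_le_of_le_one_right k2 k3
    have k5 : 0 ≤ δ ^ 2 * d ^ 2 := by positivity
    have k6 : 0 ≤ δ ^ 2 * v ^ 2 := by positivity
    have k7 : δ ^ 2 * v ≤ δ ^ 2 := mul_le_of_le_one_right k2 hv1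
    have k8 : δ ^ 2 * (v + δ ^ 2) ≤ δ ^ 2 := mul_le_of_le_one_right k2 hV
    nlinarith
  have hE := Real.exp_pos (1 / 3 * m)
  calc _ = exp (1 / 3 * m) * ((exp (1 / 3 * δ) * g (v + d) + exp (1 / 3 * -δ) * g (v - d)) / 2) := by
        ring
    _ ≤ exp (1 / 3 * m) * g (v + δ ^ 2) := by
        refine mul_le_mul_of_nonneg_left ?_ hE.le
        linarith

def GoodS (G : EuclideanSpace ℝ (Fin N) → ℝ) (s : Set (EuclideanSpace ℝ (Fin N))) : Prop :=
  MeasurableSet s ∧ volume s ≠ 0 ∧ volume s ≠ ⊤ ∧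
    ∃ d : ℝ, ∫ x in s, (G x - d) ^ 2 ≤ (volume s).toReal

def JTree (G : EuclideanSpace ℝ (Fin N) → ℝ) (ω : ℝ) :
    ℕ → Set (EuclideanSpace ℝ (Fin N)) → Prop
  | 0, s => GoodS G s ∧ ∀ x ∈ s, ∀ y ∈ s, G x ≤ G y + ω
  | n + 1, s => GoodS G s ∧ ∃ s1 s2, s = s1 ∪ s2 ∧ Disjoint s1 s2 ∧ volume s1 = volume s2 ∧
      JTree G ω n s1 ∧ JTree G ω n s2

lemma JTree.good {G : EuclideanSpace ℝ (Fin N) → ℝ} {ω : ℝ} {n : ℕ}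
    {s : Set (EuclideanSpace ℝ (Fin N))} (h : JTree G ω n s) : GoodS G s := by
  cases n with
  | zero => exact h.1
  | succ n => exact h.1

lemma intOn_bdd {g : EuclideanSpace ℝ (Fin N) → ℝ} (hg : Continuous g) {B : ℝ}
    (hB : ∀ x, |g x| ≤ B) {s : Set (EuclideanSpace ℝ (Fin N))} (hs : volume s ≠ ⊤) :
    IntegrableOn g s :=
  Measure.integrableOn_of_bounded hs hg.aestronglyMeasurable
    (Filter.Eventually.of_forall fun x => by simpa using hB x)

lemma good_var {G : EuclideanSpace ℝ (Fin N) → ℝ} (hG : Continuous G) {B : ℝ}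
    (hB : ∀ x, |G x| ≤ B) {s : Set (EuclideanSpace ℝ (Fin N))} (h : GoodS G s) :
    0 ≤ (∫ x in s, G x ^ 2) / (volume s).toReal - ((∫ x in s, G x) / (volume s).toReal) ^ 2 ∧
    (∫ x in s, G x ^ 2) / (volume s).toReal - ((∫ x in s, G x) / (volume s).toReal) ^ 2 ≤ 1 := by
  obtain ⟨hm, h0, ht, d, hd⟩ := h
  have hM : 0 < (volume s).toReal := ENNReal.toReal_pos h0 ht
  have hi1 := intOn_bdd hG hB ht
  have hi2 : IntegrableOn (fun x => G x ^ 2) s := intOn_bdd (B := B ^ 2) (by fun_prop)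
    (fun x => by rw [abs_pow]; gcongr; exact hB x) ht
  have e : ∀ d : ℝ, ∫ x in s, (G x - d) ^ 2 = (∫ x in s, G x ^ 2) - 2 * d * (∫ x in s, G x)
      + d ^ 2 * (volume s).toReal := by
    intro d
    have : ∀ x, (G x - d) ^ 2 = G x ^ 2 - 2 * d * G x + d ^ 2 := fun x => by ring
    simp_rw [this]
    have i4 : IntegrableOn (fun x => 2 * d * G x) s := hi1.const_mul _
    have i5 : IntegrableOn (fun x => G x ^ 2 - 2 * d * G x) s := hi2.sub i4
    rw [integral_add i5 (integrableOn_const ht), integral_sub hi2 i4, integral_const_mul, setIntegral_const]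
    simp [Measure.real]; ring
  set M := (volume s).toReal
  set P := ∫ x in s, G x
  set Q := ∫ x in s, G x ^ 2
  constructor
  · have h1 : 0 ≤ ∫ x in s, (G x - P / M) ^ 2 := integral_nonneg fun x => sq_nonneg _
    rw [e] at h1
    have : Q - 2 * (P / M) * P + (P / M) ^ 2 * M = M * (Q / M - (P / M) ^ 2) := by field_simp; ring
    rw [this] at h1
    exact nonneg_of_mul_nonneg_right h1 hM
  · rw [e] at hd
    have : Q - 2 * d * P + d ^ 2 * M = M * (Q / M - (P / M) ^ 2 + (P / M - d) ^ 2) := by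
      field_simp; ring
    rw [this] at hd
    have := le_of_mul_le_mul_left (hd.trans_eq (mul_one M).symm) hM
    linarith [sq_nonneg (P / M - d)]

lemma jt_bound {G : EuclideanSpace ℝ (Fin N) → ℝ} (hG : Continuous G) {B : ℝ}
    (hB : ∀ x, |G x| ≤ B) (ω : ℝ) (g : ℝ → ℝ)
    (hg : ∀ v, g v = 1 + 2 * v - v ^ 2 / 2) (n : ℕ) :
    ∀ s, JTree G ω n s → ∫ x in s, exp (1 / 3 * G x) ≤ (volume s).toReal *
      (exp (1 / 3 * ((∫ x in s, G x) / (volume s).toReal)) * g ((∫ x in s, G x ^ 2) /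
       (volume s).toReal - ((∫ x in s, G x) / (volume s).toReal) ^ 2)) * exp (1 / 3 * ω) := by
  have hi1 : ∀ s, volume s ≠ ⊤ → IntegrableOn G s := fun s ht => intOn_bdd hG hB ht
  have hi2 : ∀ s, volume s ≠ ⊤ → IntegrableOn (fun x => G x ^ 2) s := fun s ht =>
    intOn_bdd (B := B ^ 2) (by fun_prop) (fun x => by rw [abs_pow]; gcongr; exact hB x) ht
  have hi3 : ∀ s, volume s ≠ ⊤ → IntegrableOn (fun x => exp (1 / 3 * G x)) s := fun s ht =>
    intOn_bdd (B := exp (1 / 3 * B)) (by fun_prop) (fun x => by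
      rw [abs_of_pos (Real.exp_pos _)]; gcongr; exact (le_abs_self _).trans (hB x)) ht
  induction n with
  | zero =>
    intro s hs
    obtain ⟨hv0, hv1⟩ := good_var hG hB hs.good
    obtain ⟨⟨hm, h0, ht, -⟩, hω⟩ := hs
    have hM : 0 < (volume s).toReal := ENNReal.toReal_pos h0 ht
    set M := (volume s).toReal with hMdef
    set P := ∫ x in s, G x with hP
    set Q := ∫ x in s, G x ^ 2
    have hg1 : 1 ≤ g (Q / M - (P / M) ^ 2) := by rw [hg]; nlinarith
    have hGx : ∀ x ∈ s, G x ≤ P / M + ω := by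
      intro x hx
      have h1 : ∫ y in s, (G x - ω) ≤ P := by
        refine setIntegral_mono_on (integrableOn_const ht) (hi1 s ht) hm fun y hy => ?_
        linarith [hω x hx y hy]
      rw [setIntegral_const] at h1
      simp only [Measure.real, smul_eq_mul] at h1
      have : G x - ω ≤ P / M := by rw [le_div_iff₀ hM, mul_comm]; exact h1
      linarith
    calc ∫ x in s, exp (1 / 3 * G x) ≤ ∫ x in s, exp (1 / 3 * (P / M)) * exp (1 / 3 * ω) := by
          refine setIntegral_mono_on (hi3 s ht) (integrableOn_const ht) hm fun y hy => ?_
          rw [← Real.exp_add, ← mul_add]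
          gcongr
          exact hGx y hy
      _ = M * (exp (1 / 3 * (P / M)) * 1) * exp (1 / 3 * ω) := by
          rw [setIntegral_const]; simp [Measure.real, hMdef]; ring
      _ ≤ _ := by gcongr
  | succ n ih =>
    intro s hs
    obtain ⟨hv0, hv1⟩ := good_var hG hB hs.good
    obtain ⟨⟨hm, h0, ht, -⟩, s1, s2, hss, hdis, hvol, j1, j2⟩ := hs
    have b1 := ih s1 j1
    have b2 := ih s2 j2
    obtain ⟨hv01, hv11⟩ := good_var hG hB j1.good
    obtain ⟨hv02, hv12⟩ := good_var hG hB j2.good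
    obtain ⟨hm1, h01, ht1, -⟩ := j1.good
    obtain ⟨hm2, h02, ht2, -⟩ := j2.good
    have hM1 : 0 < (volume s1).toReal := ENNReal.toReal_pos h01 ht1
    have hMs : (volume s).toReal = 2 * (volume s1).toReal := by
      rw [hss, measure_union hdis hm2, ENNReal.toReal_add ht1 ht2, ← hvol]; ring
    rw [← hvol] at b2 hv02 hv12
    have sp : ∀ f : EuclideanSpace ℝ (Fin N) → ℝ, (∀ t, volume t ≠ ⊤ → IntegrableOn f t) →
        ∫ x in s, f x = (∫ x in s1, f x) + ∫ x in s2, f x := by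
      intro f hf
      rw [hss, setIntegral_union hdis hm2 (hf _ ht1) (hf _ ht2)]
    rw [sp _ hi1, sp _ hi2, hMs] at hv0 hv1
    rw [sp _ hi1, sp _ hi2, sp _ hi3, hMs]
    set M := (volume s1).toReal
    set P1 := ∫ x in s1, G x
    set Q1 := ∫ x in s1, G x ^ 2
    set P2 := ∫ x in s2, G x
    set Q2 := ∫ x in s2, G x ^ 2
    have eP : (P1 + P2) / (2 * M) = (P1 / M + P2 / M) / 2 := by field_simp
    have eQ : (Q1 + Q2) / (2 * M) = (Q1 / M + Q2 / M) / 2 := by field_simp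
    rw [eP, eQ] at hv0 hv1 ⊢
    have bb := bell_two _ _ _ _ hv01 hv02 hv1 g hg
    calc _ ≤ _ := add_le_add b1 b2
      _ = 2 * M * ((exp (1 / 3 * (P1 / M)) * g (Q1 / M - (P1 / M) ^ 2) +
          exp (1 / 3 * (P2 / M)) * g (Q2 / M - (P2 / M) ^ 2)) / 2) * exp (1 / 3 * ω) := by ring
      _ ≤ _ := by gcongr

end PartEight

section PartNine

variable {N : ℕ}

def BoxE (c l : Fin N → ℝ) : Set (EuclideanSpace ℝ (Fin N)) :=
  {x | ∀ i, c i ≤ x i ∧ x i < c i + l i}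

lemma box_eq (c l : Fin N → ℝ) : BoxE c l =
    (WithLp.ofLp : EuclideanSpace ℝ (Fin N) → Fin N → ℝ) ⁻¹' (Set.univ.pi fun i => Set.Ico (c i) (c i + l i)) := by
  ext x
  simp [BoxE, Set.mem_pi]

lemma box_meas (c l : Fin N → ℝ) : MeasurableSet (BoxE c l) := by
  rw [box_eq]
  exact (WithLp.measurable_ofLp 2 (Fin N → ℝ))
    (MeasurableSet.univ_pi fun i => measurableSet_Ico)

lemma box_vol (c l : Fin N → ℝ) : volume (BoxE c l) = ∏ i, ENNReal.ofReal (l i) := by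
  rw [box_eq, (PiLp.volume_preserving_ofLp (Fin N)).measure_preimage
    (MeasurableSet.univ_pi fun i => measurableSet_Ico).nullMeasurableSet, volume_pi_pi]
  simp

lemma box_vol_real (c l : Fin N → ℝ) (hl : ∀ i, 0 < l i) : (volume (BoxE c l)).toReal = ∏ i, l i := by
  rw [box_vol, ENNReal.toReal_prod]
  exact Finset.prod_congr rfl fun i _ => ENNReal.toReal_ofReal (hl i).le

lemma box_split (c l : Fin N → ℝ) (i0 : Fin N) (hl : ∀ i, 0 < l i) :
    BoxE c l = BoxE c (Function.update l i0 (l i0 / 2)) ∪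
      BoxE (Function.update c i0 (c i0 + l i0 / 2)) (Function.update l i0 (l i0 / 2)) ∧
    Disjoint (BoxE c (Function.update l i0 (l i0 / 2)))
      (BoxE (Function.update c i0 (c i0 + l i0 / 2)) (Function.update l i0 (l i0 / 2))) := by
  have h0 := hl i0
  constructor
  · ext x
    simp only [BoxE, Set.mem_ofPred_eq, Set.mem_union]
    constructor
    · intro h
      rcases lt_or_ge (x i0) (c i0 + l i0 / 2) with h1 | h1
      · left
        intro i
        by_cases hi : i = i0
        · subst hi; simp; exact ⟨(h i).1, h1⟩
        · simpa [hi] using h i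
      · right
        intro i
        by_cases hi : i = i0
        · subst hi; simp; exact ⟨h1, by linarith [(h i).2]⟩
        · simpa [hi] using h i
    · rintro (h | h) i
      · have := h i
        by_cases hi : i = i0
        · subst hi; simp at this; exact ⟨this.1, by linarith [this.2]⟩
        · simpa [hi] using this
      · have := h i
        by_cases hi : i = i0
        · subst hi; simp at this; exact ⟨by linarith [this.1], by linarith [this.2]⟩
        · simpa [hi] using this
  · rw [Set.disjoint_left]
    intro x h1 h2
    have a := h1 i0
    have b := h2 i0
    simp at a b
    linarith

lemma box_diam (c l : Fin N → ℝ) (m : ℝ) (hm : ∀ i, l i ≤ m) (x y : EuclideanSpace ℝ (Fin N))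
    (hx : x ∈ BoxE c l) (hy : y ∈ BoxE c l) : ‖x - y‖ ≤ N * m := by
  have h1 : ∀ i, |(x - y) i| ≤ m := by
    intro i
    have a := hx i
    have b := hy i
    simp only [PiLp.sub_apply]
    rw [abs_le]
    constructor <;> linarith [hm i]
  calc ‖x - y‖ = ‖∑ i, EuclideanSpace.single i ((x - y) i)‖ := by
        congr 1; ext j; simp [Finset.sum_apply, Pi.single_apply]
    _ ≤ ∑ i, ‖EuclideanSpace.single i ((x - y) i)‖ := norm_sum_le _ _
    _ ≤ ∑ i : Fin N, m := by
        refine Finset.sum_le_sum fun i _ => ?_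
        simpa using h1 i
    _ = _ := by simp

lemma box_tree (hN : 1 ≤ N) {G : EuclideanSpace ℝ (Fin N) → ℝ} (L δ : ℝ) (hL : 0 ≤ L) (hδ : 0 < δ)
    (hlip : ∀ x y, |G x - G y| ≤ L * ‖x - y‖)
    (hgood : ∀ c l : Fin N → ℝ, (∀ i, 0 < l i) → (∀ i j, l i ≤ 2 * l j) →
      ∃ d : ℝ, ∫ x in BoxE c l, (G x - d) ^ 2 ≤ (volume (BoxE c l)).toReal) (n : ℕ) :
    ∀ c l : Fin N → ℝ, (∀ i, 0 < l i) → (∀ i j, l i ≤ 2 * l j) → ∏ i, l i ≤ 2 ^ n * δ ^ N →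
      JTree G (L * (N * (2 * δ))) n (BoxE c l) := by
  have hgs : ∀ c l : Fin N → ℝ, (∀ i, 0 < l i) → (∀ i j, l i ≤ 2 * l j) → GoodS G (BoxE c l) := by
    intro c l hl ha
    refine ⟨box_meas c l, ?_, ?_, hgood c l hl ha⟩
    · rw [box_vol, Finset.prod_ne_zero_iff]
      intro i _
      simpa using hl i
    · rw [box_vol]
      exact ENNReal.prod_ne_top fun i _ => ENNReal.ofReal_ne_top
  have : Nonempty (Fin N) := ⟨⟨0, hN⟩⟩
  induction n with
  | zero =>
    intro c l hl ha hp
    refine ⟨hgs c l hl ha, fun x hx y hy => ?_⟩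
    have hj : ∃ j, l j ≤ δ := by
      by_contra hcon
      push Not at hcon
      have := Finset.prod_lt_prod_of_nonempty (s := (Finset.univ : Finset (Fin N)))
        (f := fun _ => δ) (g := l) (fun i _ => hδ) (fun i _ => hcon i) Finset.univ_nonempty
      simp at this hp
      linarith
    obtain ⟨j, hj⟩ := hj
    have h1 := box_diam c l (2 * δ) (fun i => (ha i j).trans (by linarith)) x y hx hy
    have h2 := (le_abs_self _).trans (hlip x y)
    have h3 := mul_le_mul_of_nonneg_left h1 hL
    linarith
  | succ n ih =>
    intro c l hl ha hp
    obtain ⟨i0, hi0⟩ := Finite.exists_max l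
    obtain ⟨hu, hd⟩ := box_split c l i0 hl
    set l' := Function.update l i0 (l i0 / 2) with hl'
    have hl'p : ∀ i, 0 < l' i := by
      intro i
      by_cases hi : i = i0
      · subst hi; simp [hl', hl i]
      · simp [hl', hi, hl i]
    have ha' : ∀ i j, l' i ≤ 2 * l' j := by
      intro i j
      by_cases hi : i = i0 <;> by_cases hj : j = i0
      · subst hi; subst hj; simp only [hl', Function.update_self]; linarith [hl j]
      · subst hi; simp [hl', hj]; linarith [ha i j, hl i]
      · subst hj; simp [hl', hi]; linarith [hi0 i]
      · simp [hl', hi, hj]; exact ha i j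
    have hp' : ∏ i, l' i ≤ 2 ^ n * δ ^ N := by
      have e : ∏ i, l' i = (∏ i, l i) / 2 := by
        rw [hl', Finset.prod_update_of_mem (Finset.mem_univ i0),
          ← Finset.mul_prod_erase Finset.univ l (Finset.mem_univ i0), Finset.sdiff_singleton_eq_erase]
        ring
      rw [e]
      rw [pow_succ] at hp
      linarith
    refine ⟨hgs c l hl ha, _, _, hu, hd, ?_, ih _ _ hl'p ha' hp', ih _ _ hl'p ha' hp'⟩
    rw [box_vol, box_vol]

lemma jn_one (hN : 1 ≤ N) {G : EuclideanSpace ℝ (Fin N) → ℝ} (hG : Continuous G) {B : ℝ}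
    (hB : ∀ x, |G x| ≤ B) (L : ℝ) (hL : 0 ≤ L)
    (hlip : ∀ x y, |G x - G y| ≤ L * ‖x - y‖)
    (hgood : ∀ c l : Fin N → ℝ, (∀ i, 0 < l i) → (∀ i j, l i ≤ 2 * l j) →
      ∃ d : ℝ, ∫ x in BoxE c l, (G x - d) ^ 2 ≤ (volume (BoxE c l)).toReal)
    (c l : Fin N → ℝ) (hl : ∀ i, 0 < l i) (ha : ∀ i j, l i ≤ 2 * l j) :
    ∫ x in BoxE c l, exp (1 / 3 * G x) ≤ (volume (BoxE c l)).toReal * 8 *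
      exp (1 / 3 * ((∫ x in BoxE c l, G x) / (volume (BoxE c l)).toReal)) := by
  set δ := 1 / ((L + 1) * (N * 2)) with hδ
  have hN0 : (0:ℝ) < N := by exact_mod_cast hN
  have hδ0 : 0 < δ := by positivity
  obtain ⟨n, hn⟩ := pow_unbounded_of_one_lt ((∏ i, l i) / δ ^ N) (one_lt_two)
  have ht := box_tree hN L δ hL hδ0 hlip hgood n c l hl ha (by
    rw [div_lt_iff₀ (by positivity)] at hn; exact hn.le)
  have h1 := jt_bound hG hB _ (fun v => 1 + 2 * v - v ^ 2 / 2) (fun v => rfl) n _ ht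
  refine h1.trans ?_
  obtain ⟨v0, v1⟩ := good_var hG hB ht.good
  set v := (∫ x in BoxE c l, G x ^ 2) / (volume (BoxE c l)).toReal -
    ((∫ x in BoxE c l, G x) / (volume (BoxE c l)).toReal) ^ 2
  have hω : L * (N * (2 * δ)) ≤ 1 := by
    rw [hδ]
    have : L * (N * (2 * (1 / ((L + 1) * (N * 2))))) = L / (L + 1) := by field_simp
    rw [this, div_le_one (by positivity)]
    linarith
  have he : exp (1 / 3 * (L * (N * (2 * δ)))) ≤ 3 := by
    calc _ ≤ exp 1 := by gcongr; linarith
      _ ≤ 3 := by linarith [Real.exp_one_lt_d9]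
  have hv : 1 + 2 * v - v ^ 2 / 2 ≤ 5 / 2 := by nlinarith
  have hv' : 0 ≤ 1 + 2 * v - v ^ 2 / 2 := by nlinarith
  set M := (volume (BoxE c l)).toReal
  have hM : 0 ≤ M := ENNReal.toReal_nonneg
  set E := exp (1 / 3 * ((∫ x in BoxE c l, G x) / M))
  have hE : 0 < E := Real.exp_pos _
  calc M * (E * (1 + 2 * v - v ^ 2 / 2)) * exp (1 / 3 * (L * (N * (2 * δ))))
      ≤ M * (E * (5 / 2)) * 3 := by gcongr
    _ ≤ M * 8 * E := by nlinarith [mul_nonneg hM hE.le]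

/-- John-Nirenberg in exponential form. -/
lemma jn_exp (hN : 1 ≤ N) {G : EuclideanSpace ℝ (Fin N) → ℝ} (hG : Continuous G) {B : ℝ}
    (hB : ∀ x, |G x| ≤ B) (L : ℝ) (hL : 0 ≤ L)
    (hlip : ∀ x y, |G x - G y| ≤ L * ‖x - y‖)
    (hgood : ∀ c l : Fin N → ℝ, (∀ i, 0 < l i) → (∀ i j, l i ≤ 2 * l j) →
      ∃ d : ℝ, ∫ x in BoxE c l, (G x - d) ^ 2 ≤ (volume (BoxE c l)).toReal)
    (c l : Fin N → ℝ) (hl : ∀ i, 0 < l i) (ha : ∀ i j, l i ≤ 2 * l j) :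
    ∫ x in BoxE c l, exp (1 / 3 * |G x - (∫ x in BoxE c l, G x) / (volume (BoxE c l)).toReal|)
      ≤ 16 * (volume (BoxE c l)).toReal := by
  have h1 := jn_one hN hG hB L hL hlip hgood c l hl ha
  have h2 := jn_one hN (G := fun x => - G x) hG.neg (B := B) (fun x => by simpa using hB x) L hL
    (fun x y => by
      have := hlip x y
      rw [← abs_neg] at this
      convert! this using 2
      ring)
    (fun c l hl ha => by
      obtain ⟨d, hd⟩ := hgood c l hl ha
      refine ⟨-d, le_trans (le_of_eq ?_) hd⟩
      congr 1; ext x; ring) c l hl ha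
  have ht : volume (BoxE c l) ≠ ⊤ := by
    rw [box_vol]; exact ENNReal.prod_ne_top fun i _ => ENNReal.ofReal_ne_top
  set M := (volume (BoxE c l)).toReal
  rw [integral_neg] at h2
  set P := ∫ x in BoxE c l, G x
  have hB' := fun x => abs_le.1 (hB x)
  have i1 : ∀ d e : ℝ, IntegrableOn (fun x => exp (d * G x) * exp e) (BoxE c l) := fun d e =>
    intOn_bdd (B := exp (|d| * B) * exp e) (by fun_prop) (fun x => by
      rw [abs_of_pos (by positivity)]
      refine mul_le_mul_of_nonneg_right (Real.exp_le_exp.2 ?_) (Real.exp_pos e).le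
      calc d * G x ≤ |d * G x| := le_abs_self _
        _ = |d| * |G x| := abs_mul _ _
        _ ≤ _ := by gcongr; exact hB x) ht
  have j1 := i1 (1 / 3) (-(1 / 3 * (P / M)))
  have j2 := i1 (-(1 / 3)) (1 / 3 * (P / M))
  have j12 : IntegrableOn (fun x => exp (1 / 3 * G x) * exp (-(1 / 3 * (P / M))) +
    exp (-(1 / 3) * G x) * exp (1 / 3 * (P / M))) (BoxE c l) := j1.add j2
  have hpt : ∀ x, exp (1 / 3 * |G x - P / M|) ≤ exp (1 / 3 * G x) * exp (-(1 / 3 * (P / M))) +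
      exp (-(1 / 3) * G x) * exp (1 / 3 * (P / M)) := by
    intro x
    rw [← Real.exp_add, ← Real.exp_add]
    rcases abs_cases (G x - P / M) with ⟨h, _⟩ | ⟨h, _⟩
    · rw [h]
      have : 1 / 3 * (G x - P / M) = 1 / 3 * G x + -(1 / 3 * (P / M)) := by ring
      rw [this]
      linarith [Real.exp_pos (-(1 / 3) * G x + 1 / 3 * (P / M))]
    · rw [h]
      have : 1 / 3 * (-(G x - P / M)) = -(1 / 3) * G x + 1 / 3 * (P / M) := by ring
      rw [this]
      linarith [Real.exp_pos (1 / 3 * G x + -(1 / 3 * (P / M)))]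
  calc _ ≤ ∫ x in BoxE c l, (exp (1 / 3 * G x) * exp (-(1 / 3 * (P / M))) +
      exp (-(1 / 3) * G x) * exp (1 / 3 * (P / M))) := by
        refine integral_mono_of_nonneg (Filter.Eventually.of_forall fun x => by positivity) j12
          (Filter.Eventually.of_forall hpt)
    _ = (∫ x in BoxE c l, exp (1 / 3 * G x)) * exp (-(1 / 3 * (P / M))) +
        (∫ x in BoxE c l, exp (1 / 3 * -G x)) * exp (1 / 3 * (P / M)) := by
        rw [integral_add j1 j2, integral_mul_const, integral_mul_const]
        congr 3
        ext x; congr 1; ring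
    _ ≤ (M * 8 * exp (1 / 3 * (P / M))) * exp (-(1 / 3 * (P / M))) +
        (M * 8 * exp (1 / 3 * (-P / M))) * exp (1 / 3 * (P / M)) := by gcongr
    _ = _ := by
        rw [mul_assoc, mul_assoc (M * 8), ← Real.exp_add, ← Real.exp_add]
        have : 1 / 3 * (-P / M) + 1 / 3 * (P / M) = 0 := by ring
        rw [this]; simp; ring

end PartNine

section PartTen
open scoped SchwartzMap LineDeriv Laplacian

variable {N : ℕ}

lemma sch_affine (w : 𝓢(EuclideanSpace ℝ (Fin N), ℂ)) (c0 : EuclideanSpace ℝ (Fin N)) (l : ℝ)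
    (hl : 0 < l) : ∃ v : 𝓢(EuclideanSpace ℝ (Fin N), ℂ),
      (v : EuclideanSpace ℝ (Fin N) → ℂ) = fun y => w (c0 + l • y) := by
  set e : EuclideanSpace ℝ (Fin N) ≃L[ℝ] EuclideanSpace ℝ (Fin N) :=
    ContinuousLinearEquiv.smulLeft (Units.mk0 l hl.ne') with he
  refine ⟨SchwartzMap.compCLMOfContinuousLinearEquiv ℂ e (SchwartzMap.compSubConstCLM ℂ (-c0) w), ?_⟩
  ext y
  have : e y = l • y := rfl
  simp [this, add_comm]

lemma int_ball_affine (g : EuclideanSpace ℝ (Fin N) → ℝ) (c0 : EuclideanSpace ℝ (Fin N)) (l : ℝ)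
    (hl : 0 < l) : ∫ y in ball 0 1, g (c0 + l • y) = (l ^ N)⁻¹ * ∫ x in ball c0 l, g x := by
  rw [← integral_indicator measurableSet_ball, ← integral_indicator measurableSet_ball]
  have e : ∀ y, (ball (0 : EuclideanSpace ℝ (Fin N)) 1).indicator (fun y => g (c0 + l • y)) y
      = (fun z => (ball c0 l).indicator g (c0 + z)) (l • y) := by
    intro y
    by_cases hy : y ∈ ball (0 : EuclideanSpace ℝ (Fin N)) 1
    · have hy' : c0 + l • y ∈ ball c0 l := by
        simp only [mem_ball, dist_zero_right, dist_self_add_left, norm_smul, Real.norm_eq_abs,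
          abs_of_pos hl] at hy ⊢
        nlinarith
      simp [Set.indicator_of_mem hy, Set.indicator_of_mem hy']
    · have hy' : c0 + l • y ∉ ball c0 l := by
        simp only [mem_ball, dist_zero_right, dist_self_add_left, norm_smul, Real.norm_eq_abs,
          abs_of_pos hl, not_lt] at hy ⊢
        nlinarith
      simp [Set.indicator_of_notMem hy, Set.indicator_of_notMem hy']
  simp_rw [e]
  rw [Measure.integral_comp_smul volume (fun z => (ball c0 l).indicator g (c0 + z)) l,
    integral_add_left_eq_self (fun z => (ball c0 l).indicator g z), finrank_euclideanSpace,
    Fintype.card_fin, smul_eq_mul, abs_of_pos (by positivity)]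

lemma osc_ball (N : ℕ) : ∃ C : ℝ, 0 < C ∧
    ∀ (w : 𝓢(EuclideanSpace ℝ (Fin N), ℂ)) (F : ℝ), (∀ x, ‖(Δ (Δ w)) x‖ ≤ F) →
    ∀ m : Fin 4 → EuclideanSpace ℝ (Fin N), (∀ i, ‖m i‖ ≤ 1) → ∀ c0 (l : ℝ), 0 < l → ∃ c : ℂ,
    ∫ x in ball c0 l, ‖(∂^{m} w) x - c‖ ^ 2 ≤ C * F ^ 2 * l ^ N := by
  obtain ⟨C, hC, h⟩ := osc_unit N
  refine ⟨C, hC, fun w F hF m hm c0 l hl => ?_⟩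
  obtain ⟨v, hv⟩ := sch_affine w c0 l hl
  have hD : ∀ y, iteratedFDeriv ℝ 4 v y = l ^ 4 • iteratedFDeriv ℝ 4 w (c0 + l • y) := by
    intro y
    rw [hv]
    exact iter_comp_affine (w.smooth 4) c0 l y
  obtain ⟨c, hc⟩ := h v (l ^ 4 * F) (fun y => by
    rw [sch_lap_lap, hD, blap_smul, norm_smul, ← sch_lap_lap, Real.norm_of_nonneg (by positivity)]
    gcongr
    exact hF _) m hm
  refine ⟨(l ^ 4)⁻¹ * c, ?_⟩
  have e1 : ∀ y, ‖(∂^{m} v) y - c‖ ^ 2 = (l ^ 8) * ‖(∂^{m} w) (c0 + l • y) - (l ^ 4)⁻¹ * c‖ ^ 2 := by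
    intro y
    rw [SchwartzMap.iteratedLineDerivOp_eq_iteratedFDeriv, hD,
      SchwartzMap.iteratedLineDerivOp_eq_iteratedFDeriv]
    have : ((l ^ 4 • iteratedFDeriv ℝ 4 w (c0 + l • y)) m) - c =
        ((l ^ 4 : ℝ) : ℂ) * ((iteratedFDeriv ℝ 4 w (c0 + l • y)) m - (l ^ 4)⁻¹ * c) := by
      have hl0 : (l : ℂ) ≠ 0 := by exact_mod_cast hl.ne'
      simp
      field_simp
    rw [this, norm_mul, Complex.norm_real, Real.norm_of_nonneg (by positivity)]
    ring
  simp_rw [e1] at hc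
  rw [integral_const_mul, int_ball_affine (fun x => ‖(∂^{m} w) x - (l ^ 4)⁻¹ * c‖ ^ 2) c0 l hl] at hc
  have h8 : 0 < l ^ 8 := by positivity
  have hlN : 0 < l ^ N := by positivity
  set I := ∫ x in ball c0 l, ‖(∂^{m} w) x - (l ^ 4)⁻¹ * c‖ ^ 2
  have h2 : (l ^ N)⁻¹ * I ≤ C * F ^ 2 := by
    refine le_of_mul_le_mul_left (hc.trans_eq ?_) h8
    ring
  rw [inv_mul_le_iff₀ hlN] at h2
  linarith

lemma osc_box (N : ℕ) (hN : 1 ≤ N) : ∃ C : ℝ, 1 ≤ C ∧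
    ∀ (w : 𝓢(EuclideanSpace ℝ (Fin N), ℂ)) (F : ℝ), (∀ x, ‖(Δ (Δ w)) x‖ ≤ F) →
    ∀ m : Fin 4 → EuclideanSpace ℝ (Fin N), (∀ i, ‖m i‖ ≤ 1) → ∀ c l : Fin N → ℝ,
    (∀ i, 0 < l i) → (∀ i j, l i ≤ 2 * l j) → ∃ d : ℂ,
    ∫ x in BoxE c l, ‖(∂^{m} w) x - d‖ ^ 2 ≤ C * F ^ 2 * (volume (BoxE c l)).toReal := by
  obtain ⟨C, hC, h⟩ := osc_ball N
  have hN0 : (0:ℝ) < N := by exact_mod_cast hN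
  refine ⟨C * (N * 2 + 1) ^ N + 1, by have : 0 < C * ((N:ℝ) * 2 + 1) ^ N := by positivity
                                      linarith, fun w F hF m hm c l hl ha => ?_⟩
  have : Nonempty (Fin N) := ⟨⟨0, hN⟩⟩
  obtain ⟨i0, hi0⟩ := Finite.exists_min l
  have h0 := hl i0
  obtain ⟨d, hd⟩ := h w F hF m hm (WithLp.toLp 2 c) ((N * 2 + 1) * l i0) (by positivity)
  refine ⟨d, ?_⟩
  have hsub : BoxE c l ⊆ ball (WithLp.toLp 2 c) ((N * 2 + 1) * l i0) := by
    intro x hx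
    have := box_diam c l (2 * l i0) (fun i => ha i i0) x (WithLp.toLp 2 c) hx
      (fun i => ⟨le_rfl, by simpa using hl i⟩)
    rw [mem_ball, dist_eq_norm]
    linarith
  have hcont : Continuous fun x => ‖(∂^{m} w) x - d‖ ^ 2 :=
    ((∂^{m} w).continuous.sub continuous_const).norm.pow 2
  have hIntg : IntegrableOn (fun x => ‖(∂^{m} w) x - d‖ ^ 2)
      (ball (WithLp.toLp 2 c) ((N * 2 + 1) * l i0)) :=
    (hcont.continuousOn.integrableOn_compact (isCompact_closedBall _ _)).mono_set
      ball_subset_closedBall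
  have h1 : ∫ x in BoxE c l, ‖(∂^{m} w) x - d‖ ^ 2 ≤
      ∫ x in ball (WithLp.toLp 2 c) ((N * 2 + 1) * l i0), ‖(∂^{m} w) x - d‖ ^ 2 :=
    setIntegral_mono_set hIntg (Filter.Eventually.of_forall fun x => by positivity)
      hsub.eventuallyLE
  have h2 : l i0 ^ N ≤ (volume (BoxE c l)).toReal := by
    rw [box_vol_real c l hl]
    have := Finset.prod_le_prod (s := (Finset.univ : Finset (Fin N))) (f := fun _ => l i0) (g := l)
      (fun i _ => h0.le) (fun i _ => hi0 i)
    simpa using this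
  set V := (volume (BoxE c l)).toReal
  have hV : 0 ≤ V := ENNReal.toReal_nonneg
  calc _ ≤ C * F ^ 2 * ((N * 2 + 1) * l i0) ^ N := h1.trans hd
    _ = C * (N * 2 + 1) ^ N * F ^ 2 * l i0 ^ N := by rw [mul_pow]; ring
    _ ≤ C * (N * 2 + 1) ^ N * F ^ 2 * V := by gcongr
    _ ≤ _ := by nlinarith [mul_nonneg (sq_nonneg F) hV]

lemma rpow_le_exp (p : ℝ) (hp : 0 < p) : ∃ C : ℝ, 0 < C ∧ ∀ x : ℝ, 0 ≤ x → x ^ p ≤ C * exp (1 / 3 * x) := by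
  set k := ⌈p⌉₊
  refine ⟨1 + 3 ^ k * k.factorial, by positivity, fun x hx => ?_⟩
  have h1 : x ^ p ≤ 1 + x ^ k := by
    rcases le_total x 1 with h | h
    · have := Real.rpow_le_one hx h hp.le
      have : 0 ≤ x ^ k := by positivity
      linarith
    · have : x ^ p ≤ x ^ (k : ℝ) := Real.rpow_le_rpow_of_exponent_le h (Nat.le_ceil p)
      rw [Real.rpow_natCast] at this
      linarith
  have h2 := Real.pow_div_factorial_le_exp (1 / 3 * x) (by positivity) k
  rw [div_le_iff₀ (by positivity)] at h2
  have h3 : x ^ k = 3 ^ k * (1 / 3 * x) ^ k := by rw [← mul_pow]; congr 1; ring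
  have h4 : 1 ≤ exp (1 / 3 * x) := Real.one_le_exp (by positivity)
  calc x ^ p ≤ 1 + x ^ k := h1
    _ ≤ exp (1 / 3 * x) + 3 ^ k * (exp (1 / 3 * x) * k.factorial) := by rw [h3]; gcongr
    _ = _ := by ring

end PartTen

section PartEleven
open scoped SchwartzMap LineDeriv Laplacian

variable {N : ℕ}

lemma lemB_comp (N : ℕ) (hN : 1 ≤ N) (p : ℝ) (hp : 1 ≤ p) : ∃ C : ℝ, 0 < C ∧
    ∀ (w : 𝓢(EuclideanSpace ℝ (Fin N), ℂ)) (F : ℝ), 0 < F → (∀ x, ‖(Δ (Δ w)) x‖ ≤ F) →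
    (∀ x, 3 < ‖x‖ → (Δ (Δ w)) x = 0) →
    ∀ m : Fin 4 → EuclideanSpace ℝ (Fin N), (∀ i, ‖m i‖ ≤ 1) →
    ∀ φ : ℂ →L[ℝ] ℝ, ‖φ‖ ≤ 1 →
    eLpNorm (fun x => φ ((∂^{m} w) x)) (ENNReal.ofReal p) (volume.restrict (ball 0 1))
      ≤ ENNReal.ofReal (C * F) := by
  obtain ⟨K, hK, hosc⟩ := osc_box N hN
  obtain ⟨Cp, hCp, hexp⟩ := rpow_le_exp p (by linarith)
  set c : Fin N → ℝ := fun _ => -4 with hc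
  set l : Fin N → ℝ := fun _ => 8 with hl
  have hl0 : ∀ i, 0 < l i := fun i => by norm_num [hl]
  have hla : ∀ i j, l i ≤ 2 * l j := fun i j => by norm_num [hl]
  have hMt : volume (BoxE c l) ≠ ⊤ := by
    rw [box_vol]; exact ENNReal.prod_ne_top fun i _ => ENNReal.ofReal_ne_top
  have hM0 : 0 < (volume (BoxE c l)).toReal := by
    rw [box_vol_real c l hl0]; exact Finset.prod_pos fun i _ => hl0 i
  have hsub : closedBall (0 : EuclideanSpace ℝ (Fin N)) 3 ⊆ BoxE c l := by
    intro x hx i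
    have h1 : |x i| ≤ ‖x‖ := by simpa using PiLp.norm_apply_le x i
    simp only [mem_closedBall, dist_zero_right] at hx
    have := abs_le.1 (h1.trans hx)
    simp only [hc, hl]
    constructor <;> linarith
  set M := (volume (BoxE c l)).toReal with hM
  set T := Cp * exp (1 / 3) * (16 * M) with hT
  have hT0 : 0 < T := by positivity
  refine ⟨T ^ (1 / p) * K, by positivity, fun w F hF0 hF hsupp m hm φ hφ => ?_⟩
  have hφ' : ∀ z, |φ z| ≤ ‖z‖ := fun z => by
    have := φ.le_opNorm z
    rw [Real.norm_eq_abs] at this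
    exact this.trans (mul_le_of_le_one_left (norm_nonneg _) hφ)
  set A := K * F with hA
  have hA0 : 0 < A := by positivity
  set G : EuclideanSpace ℝ (Fin N) → ℝ := fun x => φ ((∂^{m} w) x) / A with hG
  have hGc : Continuous G := (φ.continuous.comp (∂^{m} w).continuous).div_const A
  obtain ⟨B, hB0, hB⟩ := sch_bdd (∂^{m} w)
  have hGB : ∀ x, |G x| ≤ B / A := fun x => by
    rw [hG, abs_div, abs_of_pos hA0]
    gcongr
    exact (hφ' _).trans (hB x)
  obtain ⟨L, hL0, hL⟩ : ∃ L : ℝ, 0 ≤ L ∧ ∀ x y, ‖(∂^{m} w) x - (∂^{m} w) y‖ ≤ L * ‖x - y‖ := by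
    obtain ⟨L, hL⟩ := sch_fderiv_bdd (∂^{m} w)
    refine ⟨L, hL.1, fun x y => ?_⟩
    exact Convex.norm_image_sub_le_of_norm_fderiv_le (fun z _ => (∂^{m} w).differentiableAt)
      (fun z _ => hL.2 z) convex_univ trivial trivial
  have hlip : ∀ x y, |G x - G y| ≤ (L / A) * ‖x - y‖ := by
    intro x y
    have e : G x - G y = φ ((∂^{m} w) x - (∂^{m} w) y) / A := by simp [hG, sub_div]
    rw [e, abs_div, abs_of_pos hA0, div_mul_eq_mul_div]
    gcongr
    exact (hφ' _).trans (hL x y)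
  have hgood : ∀ c l : Fin N → ℝ, (∀ i, 0 < l i) → (∀ i j, l i ≤ 2 * l j) →
      ∃ d : ℝ, ∫ x in BoxE c l, (G x - d) ^ 2 ≤ (volume (BoxE c l)).toReal := by
    intro c l hl ha
    obtain ⟨d, hd⟩ := hosc w F hF m hm c l hl ha
    refine ⟨φ d / A, ?_⟩
    have ht : volume (BoxE c l) ≠ ⊤ := by
      rw [box_vol]; exact ENNReal.prod_ne_top fun i _ => ENNReal.ofReal_ne_top
    have hIntg : IntegrableOn (fun x => ‖(∂^{m} w) x - d‖ ^ 2 / A ^ 2) (BoxE c l) := by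
      refine intOn_bdd (B := (B + ‖d‖) ^ 2 / A ^ 2) ?_ (fun x => ?_) ht
      · exact (((∂^{m} w).continuous.sub continuous_const).norm.pow 2).div_const _
      · rw [abs_of_nonneg (by positivity)]
        gcongr
        exact (norm_sub_le _ _).trans (by gcongr; exact hB x)
    calc _ ≤ ∫ x in BoxE c l, ‖(∂^{m} w) x - d‖ ^ 2 / A ^ 2 := by
          refine integral_mono_of_nonneg (Filter.Eventually.of_forall fun x => by positivity) hIntg
            (Filter.Eventually.of_forall fun x => ?_)
          have e : G x - φ d / A = φ ((∂^{m} w) x - d) / A := by simp [hG, sub_div]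
          simp only
          rw [e, div_pow, ← sq_abs]
          gcongr
          exact hφ' _
      _ = (∫ x in BoxE c l, ‖(∂^{m} w) x - d‖ ^ 2) / A ^ 2 := integral_div _ _
      _ ≤ (K * F ^ 2 * (volume (BoxE c l)).toReal) / A ^ 2 := by gcongr
      _ = (volume (BoxE c l)).toReal / K := by rw [hA]; field_simp
      _ ≤ _ := div_le_self ENNReal.toReal_nonneg hK
  have hjn := jn_exp hN hGc hGB (L / A) (by positivity) hlip hgood c l hl0 hla
  have hgs : GoodS G (BoxE c l) := ⟨box_meas c l, fun h => by rw [hM, h] at hM0; simp at hM0, hMt,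
    hgood c l hl0 hla⟩
  have hvar := (good_var hGc hGB hgs).1
  rw [← hM] at hjn hvar
  set a := (∫ x in BoxE c l, G x) / M with ha
  have hi : ∀ g : 𝓢(EuclideanSpace ℝ (Fin N), ℂ), Integrable (fun x => ‖g x‖ ^ 2) := fun g =>
    (memLp_two_iff_integrable_sq_norm g.continuous.aestronglyMeasurable).1 (g.memLp 2 volume)
  have hq : ∫ x in BoxE c l, G x ^ 2 ≤ M := by
    calc _ ≤ ∫ x in BoxE c l, ‖(∂^{m} w) x‖ ^ 2 / A ^ 2 := by
          refine integral_mono_of_nonneg (Filter.Eventually.of_forall fun x => by positivity)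
            ((hi _).div_const _).integrableOn (Filter.Eventually.of_forall fun x => ?_)
          simp only [hG]
          rw [div_pow, ← sq_abs]
          gcongr
          exact hφ' _
      _ ≤ ∫ x, ‖(∂^{m} w) x‖ ^ 2 / A ^ 2 :=
          setIntegral_le_integral ((hi _).div_const _)
            (Filter.Eventually.of_forall fun x => by positivity)
      _ = (∫ x, ‖(∂^{m} w) x‖ ^ 2) / A ^ 2 := integral_div _ _
      _ ≤ (∫ x, ‖(Δ (Δ w)) x‖ ^ 2) / A ^ 2 := 
          div_le_div_of_nonneg_right (fourth_L2 w m hm) (by positivity)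
      _ = (∫ x in BoxE c l, ‖(Δ (Δ w)) x‖ ^ 2) / A ^ 2 := by
          rw [setIntegral_eq_integral_of_forall_compl_eq_zero]
          intro x hx
          have : 3 < ‖x‖ := by
            by_contra h
            push Not at h
            exact hx (hsub (by simpa using h))
          rw [hsupp x this]; simp
      _ ≤ (∫ x in BoxE c l, F ^ 2) / A ^ 2 := by
          refine div_le_div_of_nonneg_right ?_ (by positivity)
          refine setIntegral_mono (hi _).integrableOn (integrableOn_const hMt) fun x => ?_
          exact pow_le_pow_left₀ (norm_nonneg _) (hF x) 2
      _ = M / K ^ 2 := by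
          rw [setIntegral_const]; simp only [Measure.real, smul_eq_mul, ← hM, hA]; field_simp
      _ ≤ M := div_le_self hM0.le (one_le_pow₀ hK)
  have ha1 : |a| ≤ 1 := by
    rw [← sq_le_one_iff_abs_le_one]
    have : (∫ x in BoxE c l, G x ^ 2) / M ≤ 1 := by rw [div_le_one hM0]; exact hq
    linarith
  have hIntb : IntegrableOn (fun x => Cp * exp (1 / 3) * exp (1 / 3 * |G x - a|)) (BoxE c l) := by
    refine intOn_bdd (B := Cp * exp (1 / 3) * exp (1 / 3 * (B / A + |a|))) (by fun_prop) (fun x => ?_) hMt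
    rw [abs_of_pos (by positivity)]
    gcongr
    exact (abs_sub _ _).trans (by gcongr; exact hGB x)
  have hlint : ∫⁻ x in BoxE c l, ENNReal.ofReal (|G x| ^ p) ≤ ENNReal.ofReal T := by
    calc _ ≤ ∫⁻ x in BoxE c l, ENNReal.ofReal (Cp * exp (1 / 3) * exp (1 / 3 * |G x - a|)) := by
          refine lintegral_mono fun x => ENNReal.ofReal_le_ofReal ?_
          refine (hexp _ (abs_nonneg _)).trans ?_
          rw [mul_assoc, ← Real.exp_add]
          gcongr
          have := abs_add_le (G x - a) a
          rw [sub_add_cancel] at this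
          linarith
      _ = ENNReal.ofReal (∫ x in BoxE c l, Cp * exp (1 / 3) * exp (1 / 3 * |G x - a|)) :=
          (ofReal_integral_eq_lintegral_ofReal hIntb
            (Filter.Eventually.of_forall fun x => by positivity)).symm
      _ ≤ _ := by
          refine ENNReal.ofReal_le_ofReal ?_
          rw [integral_const_mul, hT]
          gcongr
  have hp0 : 0 < p := by linarith
  have hGn : eLpNorm G (ENNReal.ofReal p) (volume.restrict (ball 0 1)) ≤
      ENNReal.ofReal (T ^ (1 / p)) := by
    have hsub1 : ball (0 : EuclideanSpace ℝ (Fin N)) 1 ⊆ BoxE c l :=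
      (ball_subset_closedBall.trans (closedBall_subset_closedBall (by norm_num))).trans hsub
    refine (eLpNorm_mono_measure G (Measure.restrict_mono hsub1 le_rfl)).trans ?_
    rw [eLpNorm_eq_lintegral_rpow_enorm_toReal (by simpa using hp0) ENNReal.ofReal_ne_top,
      ENNReal.toReal_ofReal hp0.le, ← ENNReal.ofReal_rpow_of_pos hT0]
    gcongr
    refine le_trans (le_of_eq ?_) hlint
    refine lintegral_congr fun x => ?_
    rw [Real.enorm_eq_ofReal_abs, ENNReal.ofReal_rpow_of_nonneg (abs_nonneg _) hp0.le]
  have e : (fun x => φ ((∂^{m} w) x)) = A • G := by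
    ext x; simp only [hG, Pi.smul_apply, smul_eq_mul]; field_simp
  rw [e]
  refine eLpNorm_const_smul_le.trans ?_
  calc _ ≤ ‖A‖ₑ * ENNReal.ofReal (T ^ (1 / p)) := by gcongr
    _ = _ := by
      rw [Real.enorm_eq_ofReal_abs, abs_of_pos hA0, ← ENNReal.ofReal_mul hA0.le, hA]
      congr 1; ring

lemma multi_norm_le (A : EuclideanSpace ℝ (Fin N) [×4]→L[ℝ] ℂ) :
    ‖A‖ ≤ ∑ I : Fin 4 → Fin N, ‖A (fun k => EuclideanSpace.single (I k) 1)‖ := by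
  refine ContinuousMultilinearMap.opNorm_le_bound
    (Finset.sum_nonneg fun _ _ => norm_nonneg _) fun m => ?_
  have hm : m = fun k => ∑ i, (m k i) • (EuclideanSpace.single i 1 : EuclideanSpace ℝ (Fin N)) := by
    ext k j; simp [Finset.sum_apply, Pi.single_apply]
  have e : A m = ∑ I : Fin 4 → Fin N, (∏ k, m k (I k)) • A (fun k => EuclideanSpace.single (I k) 1) := by
    conv_lhs => rw [hm]
    rw [A.map_sum]
    refine Finset.sum_congr rfl fun I _ => ?_
    exact A.map_smul_univ (fun k => m k (I k)) (fun k => EuclideanSpace.single (I k) 1)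
  rw [e, Finset.sum_mul]
  refine (norm_sum_le _ _).trans (Finset.sum_le_sum fun I _ => ?_)
  rw [norm_smul, mul_comm, norm_prod]
  gcongr with k
  exact PiLp.norm_apply_le (m k) (I k)

lemma lemB_schwartz (N : ℕ) (hN : 1 ≤ N) (p : ℝ) (hp : 1 ≤ p) : ∃ C : ℝ, 0 < C ∧
    ∀ (w : 𝓢(EuclideanSpace ℝ (Fin N), ℂ)) (F : ℝ), 0 < F → (∀ x, ‖(Δ (Δ w)) x‖ ≤ F) →
    (∀ x, 3 < ‖x‖ → (Δ (Δ w)) x = 0) →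
    eLpNorm (fun x => ‖iteratedFDeriv ℝ 4 w x‖) (ENNReal.ofReal p) (volume.restrict (ball 0 1))
      ≤ ENNReal.ofReal (C * F) := by
  obtain ⟨C, hC, h⟩ := lemB_comp N hN p hp
  refine ⟨∑ I : Fin 4 → Fin N, (C + C) + 1, by positivity, fun w F hF0 hF hs => ?_⟩
  set e : (Fin 4 → Fin N) → Fin 4 → EuclideanSpace ℝ (Fin N) :=
    fun I k => EuclideanSpace.single (I k) 1 with he
  have he1 : ∀ I k, ‖e I k‖ ≤ 1 := fun I k => by simp [he]
  have hmeas : ∀ (φ : ℂ →L[ℝ] ℝ) I, AEStronglyMeasurable (fun x => φ ((∂^{e I} w) x))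
      (volume.restrict (ball 0 1)) := fun φ I =>
    (φ.continuous.comp (∂^{e I} w).continuous).aestronglyMeasurable
  have hp1 : 1 ≤ ENNReal.ofReal p := by rw [← ENNReal.ofReal_one]; exact ENNReal.ofReal_le_ofReal hp
  calc _ ≤ eLpNorm (∑ I : Fin 4 → Fin N, ((fun x => ‖Complex.reCLM ((∂^{e I} w) x)‖) +
        (fun x => ‖Complex.imCLM ((∂^{e I} w) x)‖))) (ENNReal.ofReal p)
          (volume.restrict (ball 0 1)) := by
        refine eLpNorm_mono_real fun x => ?_
        rw [norm_norm]
        refine (multi_norm_le _).trans ?_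
        rw [Finset.sum_apply]
        refine Finset.sum_le_sum fun I _ => ?_
        rw [← SchwartzMap.iteratedLineDerivOp_eq_iteratedFDeriv]
        simp only [Pi.add_apply, Complex.reCLM_apply, Complex.imCLM_apply, Real.norm_eq_abs]
        exact Complex.norm_le_abs_re_add_abs_im _
    _ ≤ ∑ I : Fin 4 → Fin N, eLpNorm ((fun x => ‖Complex.reCLM ((∂^{e I} w) x)‖) +
        (fun x => ‖Complex.imCLM ((∂^{e I} w) x)‖)) (ENNReal.ofReal p)
          (volume.restrict (ball 0 1)) :=
        eLpNorm_sum_le (fun I _ => (hmeas _ I).norm.add (hmeas _ I).norm) hp1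
    _ ≤ ∑ I : Fin 4 → Fin N, ENNReal.ofReal ((C + C) * F) := by
        refine Finset.sum_le_sum fun I _ => ?_
        refine (eLpNorm_add_le (hmeas _ I).norm (hmeas _ I).norm hp1).trans ?_
        rw [eLpNorm_norm, eLpNorm_norm, add_mul, ENNReal.ofReal_add (by positivity) (by positivity)]
        exact add_le_add (h w F hF0 hF hs _ (he1 I) _ (by simp))
          (h w F hF0 hF hs _ (he1 I) _ (by simp))
    _ = ENNReal.ofReal ((∑ I : Fin 4 → Fin N, (C + C)) * F) := by
        rw [← ENNReal.ofReal_sum_of_nonneg (fun I _ => by positivity), Finset.sum_mul]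
    _ ≤ _ := by
        refine ENNReal.ofReal_le_ofReal ?_
        gcongr
        linarith

end PartEleven

section PartTwelve
open scoped SchwartzMap LineDeriv Laplacian Convolution Topology

variable {N : ℕ}

/-- Mollification by a normed bump function. -/
noncomputable def mol {V : Type*} [NormedAddCommGroup V] [NormedSpace ℝ V]
    (φ : ContDiffBump (0 : EuclideanSpace ℝ (Fin N))) (g : EuclideanSpace ℝ (Fin N) → V) :
    EuclideanSpace ℝ (Fin N) → V :=
  (φ.normed volume ⋆[ContinuousLinearMap.lsmul ℝ ℝ, volume] g)

lemma mol_apply {V : Type*} [NormedAddCommGroup V] [NormedSpace ℝ V]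
    (φ : ContDiffBump (0 : EuclideanSpace ℝ (Fin N))) (g : EuclideanSpace ℝ (Fin N) → V)
    (x : EuclideanSpace ℝ (Fin N)) :
    mol φ g x = ∫ t, φ.normed volume t • g (x - t) := rfl

lemma mol_int {V : Type*} [NormedAddCommGroup V] [NormedSpace ℝ V]
    (φ : ContDiffBump (0 : EuclideanSpace ℝ (Fin N))) {g : EuclideanSpace ℝ (Fin N) → V}
    (hg : Continuous g) (x : EuclideanSpace ℝ (Fin N)) :
    Integrable (fun t => φ.normed volume t • g (x - t)) := by
  refine Continuous.integrable_of_hasCompactSupport ?_ ?_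
  · exact φ.continuous_normed.smul (by fun_prop)
  · exact φ.hasCompactSupport_normed.smul_right

lemma mol_clm {V W : Type*} [NormedAddCommGroup V] [NormedSpace ℝ V] [CompleteSpace V]
    [NormedAddCommGroup W] [NormedSpace ℝ W] [CompleteSpace W] (T : V →L[ℝ] W)
    (φ : ContDiffBump (0 : EuclideanSpace ℝ (Fin N))) {g : EuclideanSpace ℝ (Fin N) → V}
    (hg : Continuous g) (x : EuclideanSpace ℝ (Fin N)) :
    mol φ (fun y => T (g y)) x = T (mol φ g x) := by
  rw [mol_apply, mol_apply, ← T.integral_comp_comm (mol_int φ hg x)]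
  simp

lemma mol_add {V : Type*} [NormedAddCommGroup V] [NormedSpace ℝ V]
    (φ : ContDiffBump (0 : EuclideanSpace ℝ (Fin N))) {f g : EuclideanSpace ℝ (Fin N) → V}
    (hf : Continuous f) (hg : Continuous g) (x : EuclideanSpace ℝ (Fin N)) :
    mol φ (fun y => f y + g y) x = mol φ f x + mol φ g x := by
  rw [mol_apply, mol_apply, mol_apply, ← integral_add (mol_int φ hf x) (mol_int φ hg x)]
  simp

lemma mol_bound {V : Type*} [NormedAddCommGroup V] [NormedSpace ℝ V]
    (φ : ContDiffBump (0 : EuclideanSpace ℝ (Fin N))) {g : EuclideanSpace ℝ (Fin N) → V} {F : ℝ}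
    (hF : ∀ x, ‖g x‖ ≤ F) (x : EuclideanSpace ℝ (Fin N)) :
    ‖mol φ g x‖ ≤ F := by
  rw [mol_apply]
  have h1 : Integrable (fun t => φ.normed volume t * F) := φ.integrable_normed.mul_const F
  refine (norm_integral_le_of_norm_le h1 (Filter.Eventually.of_forall fun t => ?_)).trans ?_
  · rw [norm_smul, Real.norm_of_nonneg (φ.nonneg_normed t)]
    exact mul_le_mul_of_nonneg_left (hF _) (φ.nonneg_normed t)
  · rw [integral_mul_const, φ.integral_normed, one_mul]

lemma mol_zero {V : Type*} [NormedAddCommGroup V] [NormedSpace ℝ V]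
    (φ : ContDiffBump (0 : EuclideanSpace ℝ (Fin N))) {g : EuclideanSpace ℝ (Fin N) → V} {R : ℝ}
    (hg : ∀ x, R < ‖x‖ → g x = 0) (x : EuclideanSpace ℝ (Fin N)) (hx : R + φ.rOut < ‖x‖) :
    mol φ g x = 0 := by
  rw [mol_apply]
  refine integral_eq_zero_of_ae (Filter.Eventually.of_forall fun t => ?_)
  by_cases ht : t ∈ ball 0 φ.rOut
  · have h1 : ‖t‖ < φ.rOut := by simpa using ht
    have h2 := norm_sub_norm_le x t
    simp [hg (x - t) (by linarith)]
  · rw [← φ.support_normed_eq (μ := volume), Function.notMem_support] at ht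
    simp [ht]

lemma mol_iter (φ : ContDiffBump (0 : EuclideanSpace ℝ (Fin N)))
    {w : EuclideanSpace ℝ (Fin N) → ℂ} (hc : HasCompactSupport w) (n : ℕ) (hw : ContDiff ℝ n w) :
    iteratedFDeriv ℝ n (mol φ w) = mol φ (iteratedFDeriv ℝ n w) := by
  induction n with
  | zero =>
    funext x
    ext m
    have h := mol_clm ((continuousMultilinearCurryFin0 ℝ (EuclideanSpace ℝ (Fin N)) ℂ).symm.toContinuousLinearEquiv.toContinuousLinearMap) φ hw.continuous x
    have e : iteratedFDeriv ℝ 0 w = fun y => ((continuousMultilinearCurryFin0 ℝ (EuclideanSpace ℝ (Fin N)) ℂ).symm.toContinuousLinearEquiv.toContinuousLinearMap) (w y) := by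
      rw [iteratedFDeriv_zero_eq_comp]; rfl
    rw [e, h, iteratedFDeriv_zero_eq_comp]
    rfl
  | succ n ih =>
    have ih := ih (hw.of_le (by exact_mod_cast Nat.le_succ n))
    have hD : ContDiff ℝ 1 (iteratedFDeriv ℝ n w) :=
      hw.iteratedFDeriv_right (by exact_mod_cast (by omega : 1 + n ≤ n + 1))
    have hcD : HasCompactSupport (iteratedFDeriv ℝ n w) := hc.iteratedFDeriv n
    have hfd : fderiv ℝ (mol φ (iteratedFDeriv ℝ n w)) = mol φ (fderiv ℝ (iteratedFDeriv ℝ n w)) := by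
      funext x
      exact (hcD.hasFDerivAt_convolution_right (ContinuousLinearMap.lsmul ℝ ℝ)
        φ.continuous_normed.locallyIntegrable hD x).fderiv
    rw [iteratedFDeriv_succ_eq_comp_left, ih, hfd, iteratedFDeriv_succ_eq_comp_left]
    funext x
    exact (mol_clm ((continuousMultilinearCurryLeftEquiv ℝ (fun _ : Fin (n+1) => EuclideanSpace ℝ (Fin N)) ℂ).symm.toContinuousLinearEquiv.toContinuousLinearMap) φ (hD.continuous_fderiv (by norm_num)) x).symm

/-- blap as a continuous linear map. -/
noncomputable def blapL (N : ℕ) : (EuclideanSpace ℝ (Fin N) [×4]→L[ℝ] ℂ) →L[ℝ] ℂ :=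
  ∑ j : Fin N, ∑ i : Fin N, ContinuousMultilinearMap.apply ℝ (fun _ : Fin 4 => EuclideanSpace ℝ (Fin N)) ℂ
    ![EuclideanSpace.single j 1, EuclideanSpace.single j 1,
    EuclideanSpace.single i 1, EuclideanSpace.single i 1]

lemma blapL_apply (A : EuclideanSpace ℝ (Fin N) [×4]→L[ℝ] ℂ) : blapL N A = blap A := by
  simp [blapL, blap]

lemma mol_blap (φ : ContDiffBump (0 : EuclideanSpace ℝ (Fin N)))
    {w : EuclideanSpace ℝ (Fin N) → ℂ} (hc : HasCompactSupport w) (hw : ContDiff ℝ 4 w)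
    (x : EuclideanSpace ℝ (Fin N)) :
    blap (iteratedFDeriv ℝ 4 (mol φ w) x) = mol φ (fun y => blap (iteratedFDeriv ℝ 4 w y)) x := by
  rw [mol_iter φ hc 4 (by exact_mod_cast hw), ← blapL_apply,
    ← mol_clm (blapL N) φ (hw.continuous_iteratedFDeriv le_rfl) x]
  simp only [blapL_apply]

lemma mol_smooth (φ : ContDiffBump (0 : EuclideanSpace ℝ (Fin N)))
    {w : EuclideanSpace ℝ (Fin N) → ℂ} (hw : Continuous w) :
    ContDiff ℝ ((⊤ : ℕ∞) : WithTop ℕ∞) (mol φ w) :=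
  φ.hasCompactSupport_normed.contDiff_convolution_left (ContinuousLinearMap.lsmul ℝ ℝ)
    φ.contDiff_normed hw.locallyIntegrable

lemma mol_cs (φ : ContDiffBump (0 : EuclideanSpace ℝ (Fin N)))
    {w : EuclideanSpace ℝ (Fin N) → ℂ} (hc : HasCompactSupport w) :
    HasCompactSupport (mol φ w) :=
  φ.hasCompactSupport_normed.convolution (ContinuousLinearMap.lsmul ℝ ℝ) hc

lemma bump_seq (N : ℕ) : ∃ φ : ℕ → ContDiffBump (0 : EuclideanSpace ℝ (Fin N)),
    (∀ n, (φ n).rOut ≤ 1) ∧ Filter.Tendsto (fun n => (φ n).rOut) Filter.atTop (𝓝 0) := by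
  refine ⟨fun n => ⟨1 / ((n : ℝ) + 1) / 2, 1 / ((n : ℝ) + 1), by positivity, by
    have : 0 < 1 / ((n : ℝ) + 1) := by positivity
    linarith⟩, fun n => ?_, tendsto_one_div_add_atTop_nhds_zero_nat⟩
  rw [div_le_one (by positivity)]
  have : (0:ℝ) ≤ n := by positivity
  linarith

lemma mol_tendsto {V : Type*} [NormedAddCommGroup V] [NormedSpace ℝ V] [CompleteSpace V]
    {φ : ℕ → ContDiffBump (0 : EuclideanSpace ℝ (Fin N))}
    (h : Filter.Tendsto (fun n => (φ n).rOut) Filter.atTop (𝓝 0))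
    {g : EuclideanSpace ℝ (Fin N) → V} (hg : Continuous g) (x : EuclideanSpace ℝ (Fin N)) :
    Filter.Tendsto (fun n => mol (φ n) g x) Filter.atTop (𝓝 (g x)) :=
  ContDiffBump.convolution_tendsto_right_of_continuous h hg x

theorem lemA_cc (N : ℕ) : ∃ C > (0 : ℝ), ∀ μ : ℂ, ‖μ‖ = 1 → 0 ≤ μ.re →
    ∀ (w : EuclideanSpace ℝ (Fin N) → ℂ), ContDiff ℝ 4 w → HasCompactSupport w → ∀ F : ℝ,
      (∀ x, ‖μ * w x + blap (iteratedFDeriv ℝ 4 w x)‖ ≤ F) →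
      ∀ h ≤ 3, ∀ x, ‖iteratedFDeriv ℝ h w x‖ ≤ C * F := by
  obtain ⟨C, hC, H⟩ := lemmaA_schwartz N
  refine ⟨C, hC, fun μ hμ hμ' w hw hc F hF h hh x => ?_⟩
  obtain ⟨φ, hφ1, hφ⟩ := bump_seq N
  have hwh : ContDiff ℝ h w := hw.of_le (by exact_mod_cast (by omega : h ≤ 4))
  have key : ∀ n, ‖iteratedFDeriv ℝ h (mol (φ n) w) x‖ ≤ C * F := by
    intro n
    have hs := mol_smooth (φ n) hw.continuous
    have hcs := mol_cs (φ n) hc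
    have e : ⇑(HasCompactSupport.toSchwartzMap hcs hs) = mol (φ n) w := by
      funext y; exact HasCompactSupport.toSchwartzMap_toFun hcs hs y
    have := H μ hμ hμ' (HasCompactSupport.toSchwartzMap hcs hs) F (fun y => by
      rw [sch_lap_lap, e, mol_blap (φ n) hc hw]
      have e2 : μ * mol (φ n) w y = mol (φ n) (fun y => μ * w y) y :=
        (mol_clm (ContinuousLinearMap.mul ℝ ℂ μ) (φ n) hw.continuous y).symm
      rw [e2, ← mol_add]
      · exact mol_bound _ hF y
      · exact continuous_const.mul hw.continuous
      · simp only [← blapL_apply]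
        exact (blapL N).continuous.comp (hw.continuous_iteratedFDeriv le_rfl)) h hh x
    rwa [e] at this
  have ht := mol_tendsto hφ (hwh.continuous_iteratedFDeriv le_rfl) x
  refine le_of_tendsto ht.norm (Filter.Eventually.of_forall fun n => ?_)
  rw [← mol_iter (φ n) hc h hwh]
  exact key n

theorem lemB_cc (N : ℕ) (hN : 1 ≤ N) (p : ℝ) (hp : 1 ≤ p) : ∃ C > (0 : ℝ),
    ∀ (w : EuclideanSpace ℝ (Fin N) → ℂ), ContDiff ℝ 4 w → HasCompactSupport w →
      (∀ x, 2 < ‖x‖ → blap (iteratedFDeriv ℝ 4 w x) = 0) → ∀ F : ℝ, 0 < F →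
      (∀ x, ‖blap (iteratedFDeriv ℝ 4 w x)‖ ≤ F) →
      eLpNorm (fun x => ‖iteratedFDeriv ℝ 4 w x‖) (ENNReal.ofReal p) (volume.restrict (ball 0 1))
        ≤ ENNReal.ofReal (C * F) := by
  obtain ⟨C, hC, H⟩ := lemB_schwartz N hN p hp
  refine ⟨C, hC, fun w hw hc hz F hF0 hF => ?_⟩
  obtain ⟨φ, hφ1, hφ⟩ := bump_seq N
  have hw4 : ContDiff ℝ (4 : ℕ) w := by exact_mod_cast hw
  have key : ∀ n, eLpNorm (fun x => ‖iteratedFDeriv ℝ 4 (mol (φ n) w) x‖) (ENNReal.ofReal p)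
      (volume.restrict (ball 0 1)) ≤ ENNReal.ofReal (C * F) := by
    intro n
    have hs := mol_smooth (φ n) hw.continuous
    have hcs := mol_cs (φ n) hc
    have e : ⇑(HasCompactSupport.toSchwartzMap hcs hs) = mol (φ n) w := by
      funext y; exact HasCompactSupport.toSchwartzMap_toFun hcs hs y
    have := H (HasCompactSupport.toSchwartzMap hcs hs) F hF0 (fun y => by
      rw [sch_lap_lap, e, mol_blap (φ n) hc hw]
      exact mol_bound _ hF y) (fun y hy => by
      rw [sch_lap_lap, e, mol_blap (φ n) hc hw]
      exact mol_zero _ hz y (by have := hφ1 n; linarith))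
    rwa [e] at this
  have hcont := hw.continuous_iteratedFDeriv (m := 4) le_rfl
  refine (MeasureTheory.Lp.eLpNorm_lim_le_liminf_eLpNorm
    (f := fun n x => ‖iteratedFDeriv ℝ 4 (mol (φ n) w) x‖) (fun n => ?_) _
    (Filter.Eventually.of_forall fun x => ?_)).trans ?_
  · have hs := (mol_smooth (φ n) hw.continuous).of_le
      (WithTop.coe_le_coe.2 (le_top : ((4:ℕ) : ℕ∞) ≤ ⊤))
    exact (hs.continuous_iteratedFDeriv (m := 4) le_rfl).norm.aestronglyMeasurable
  · simp only [mol_iter (φ _) hc 4 hw4]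
    exact (mol_tendsto hφ hcont x).norm
  · refine Filter.liminf_le_of_le (by isBoundedDefault) (fun b hb => ?_)
    obtain ⟨n, hn⟩ := hb.exists
    exact hn.trans (key n)

end PartTwelve

section PartThirteen
open scoped Topology

variable {N : ℕ}

lemma sqrt_lip {a : EuclideanSpace ℝ (Fin N) → ℝ} {c : ℝ} (ha1 : ContDiff ℝ 1 a)
    (ha2 : ∀ x, 0 < a x) (ha3 : ∀ x, ‖gradient a x‖ ≤ c * √(a x))
    (x y : EuclideanSpace ℝ (Fin N)) : |√(a y) - √(a x)| ≤ c * ‖y - x‖ := by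
  have hd : ∀ x, HasFDerivAt (fun x => √(a x)) ((1 / (2 * √(a x))) • fderiv ℝ a x) x := fun x =>
    ((ha1.differentiable one_ne_zero) x).hasFDerivAt.sqrt (ha2 x).ne'
  refine Convex.norm_image_sub_le_of_norm_hasFDerivWithin_le (s := Set.univ)
    (fun x _ => (hd x).hasFDerivWithinAt) (fun x _ => ?_) convex_univ trivial trivial
  have hg : ‖fderiv ℝ a x‖ ≤ c * √(a x) := by
    have := ha3 x
    rwa [gradient, LinearIsometryEquiv.norm_map] at this
  have hs : 0 < √(a x) := Real.sqrt_pos.2 (ha2 x)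
  rw [norm_smul, Real.norm_of_nonneg (by positivity), one_div, inv_mul_le_iff₀ (by positivity)]
  have : 0 ≤ c * √(a x) := (norm_nonneg _).trans hg
  nlinarith

lemma eLp_scale (g : EuclideanSpace ℝ (Fin N) → ℝ) (x : EuclideanSpace ℝ (Fin N)) {R p : ℝ}
    (hR : 0 < R) (hp : 0 < p) :
    eLpNorm g (ENNReal.ofReal p) (volume.restrict (ball x R)) =
      ENNReal.ofReal (R ^ ((N : ℝ) / p)) *
        eLpNorm (fun z => g (x + R • z)) (ENNReal.ofReal p) (volume.restrict (ball 0 1)) := by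
  let f : EuclideanSpace ℝ (Fin N) → EuclideanSpace ℝ (Fin N) := fun z => x + R • z
  have hf : MeasurableEmbedding f :=
    (measurableEmbedding_addLeft x).comp (measurableEmbedding_const_smul₀ hR.ne')
  have hpre : f ⁻¹' (ball x R) = ball 0 1 := by
    ext z
    simp only [f, Set.mem_preimage, mem_ball, dist_self_add_left, norm_smul, Real.norm_eq_abs,
      abs_of_pos hR, dist_zero_right]
    exact mul_lt_iff_lt_one_right hR
  have hmap : Measure.map f volume = ENNReal.ofReal ((R ^ N)⁻¹) • volume := by
    have : f = (fun z => x + z) ∘ (fun z => R • z) := rfl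
    rw [this, ← Measure.map_map (by fun_prop) (by fun_prop), Measure.map_addHaar_smul _ hR.ne',
      Measure.map_smul, map_add_left_eq_self, finrank_euclideanSpace, Fintype.card_fin,
      abs_of_pos (by positivity)]
  have e : eLpNorm (fun z => g (x + R • z)) (ENNReal.ofReal p) (volume.restrict (ball 0 1)) =
      ENNReal.ofReal ((R ^ N)⁻¹) ^ (1 / p) *
        eLpNorm g (ENNReal.ofReal p) (volume.restrict (ball x R)) := by
    have h1 := hf.eLpNorm_map_measure (g := g) (p := ENNReal.ofReal p)
      (μ := volume.restrict (ball 0 1))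
    change _ = eLpNorm (fun z => g (x + R • z)) _ _ at h1
    rw [← h1, ← hpre, ← hf.restrict_map, hmap, Measure.restrict_smul,
      eLpNorm_smul_measure_of_ne_top ENNReal.ofReal_ne_top, smul_eq_mul, one_div, ENNReal.toReal_inv,
      ENNReal.toReal_ofReal hp.le, one_div]
  rw [e, ← mul_assoc, ENNReal.ofReal_rpow_of_nonneg (by positivity) (by positivity),
    ← ENNReal.ofReal_mul (by positivity)]
  have : R ^ ((N:ℝ) / p) * ((R ^ N)⁻¹) ^ (1 / p) = 1 := by
    rw [Real.inv_rpow (by positivity), ← Real.rpow_natCast, ← Real.rpow_mul hR.le, mul_one_div]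
    exact mul_inv_cancel₀ (by positivity)
  rw [this]; simp

lemma local_cut (N : ℕ) : ∃ Cc : ℝ, 0 ≤ Cc ∧ ∀ (K : ℝ), 1 ≤ K →
    ∀ (v : EuclideanSpace ℝ (Fin N) → ℂ) (B : ℝ), ContDiff ℝ 4 v → 0 ≤ B →
    (∀ z, ‖z‖ ≤ 2 * K → ∀ j ≤ 3, ‖iteratedFDeriv ℝ j v z‖ ≤ B) →
    ∃ w : EuclideanSpace ℝ (Fin N) → ℂ, ContDiff ℝ 4 w ∧ HasCompactSupport w ∧
      (∀ z, ‖z‖ < K → ∀ h : ℕ, iteratedFDeriv ℝ h w z = iteratedFDeriv ℝ h v z) ∧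
      (∀ z, 2 * K < ‖z‖ → w z = 0 ∧ blap (iteratedFDeriv ℝ 4 w z) = 0) ∧
      (∀ z, ‖z‖ ≤ 2 * K → ∃ θ : ℝ, 0 ≤ θ ∧ θ ≤ 1 ∧ w z = θ • v z ∧
        ‖blap (iteratedFDeriv ℝ 4 w z) - θ • blap (iteratedFDeriv ℝ 4 v z)‖ ≤ Cc * B / K) := by
  obtain ⟨χ, A, hA, hχ, h01, h1, h0, hD⟩ := exists_cutoff N
  refine ⟨N ^ 2 * 16 * A, by positivity, fun K hK v B hv hB hvB => ?_⟩
  have hK0 : 0 < K := by linarith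
  have hχ4 : ContDiff ℝ 4 χ := hχ.of_le (WithTop.coe_le_coe.2 (le_top : ((4:ℕ) : ℕ∞) ≤ ⊤))
  let η : EuclideanSpace ℝ (Fin N) → ℝ := fun z => χ (K⁻¹ • z)
  have hη : ContDiff ℝ 4 η := hχ4.comp (contDiff_const_smul _)
  have hn : ∀ z : EuclideanSpace ℝ (Fin N), ‖K⁻¹ • z‖ = ‖z‖ / K := fun z => by
    rw [norm_smul, Real.norm_of_nonneg (by positivity)]; field_simp
  have hηD : ∀ j, 1 ≤ j → j ≤ 4 → ∀ z, ‖iteratedFDeriv ℝ j η z‖ ≤ A / K := by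
    intro j hj1 hj4 z
    have hχj : ContDiff ℝ j χ := hχ4.of_le (by exact_mod_cast hj4)
    have := congrFun (iteratedFDeriv_comp_const_smul K⁻¹ hχj) z
    change ‖iteratedFDeriv ℝ j (fun z => χ (K⁻¹ • z)) z‖ ≤ _
    rw [this, norm_smul, norm_pow, Real.norm_of_nonneg (by positivity)]
    have h3 : K⁻¹ ^ j ≤ K⁻¹ := pow_le_of_le_one (by positivity) (inv_le_one_of_one_le₀ hK) (by omega)
    calc _ ≤ K⁻¹ * A := mul_le_mul h3 (hD j hj4 _) (norm_nonneg _) (by positivity)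
      _ = A / K := by field_simp
  have hz0 : ∀ z, 2 * K < ‖z‖ → η z • v z = 0 := fun z hz => by
    have : η z = 0 := h0 _ (by rw [hn, le_div_iff₀ hK0]; exact hz.le)
    rw [this, zero_smul]
  refine ⟨fun z => η z • v z, hη.smul hv, ?_, ?_, ?_, ?_⟩
  · refine HasCompactSupport.intro (isCompact_closedBall (0 : EuclideanSpace ℝ (Fin N)) (2 * K)) ?_
    intro z hz
    exact hz0 z (by simpa using hz)
  · intro z hz h
    have : (fun z => η z • v z) =ᶠ[𝓝 z] v := by
      filter_upwards [(isOpen_lt continuous_norm continuous_const).mem_nhds hz] with y hy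
      have : η y = 1 := h1 _ (by rw [hn, div_le_one hK0]; exact le_of_lt hy)
      simp [this]
    exact (Filter.EventuallyEq.iteratedFDeriv ℝ this h).eq_of_nhds
  · intro z hz
    refine ⟨hz0 z hz, ?_⟩
    have : (fun z => η z • v z) =ᶠ[𝓝 z] (fun _ => 0) := by
      filter_upwards [(isOpen_lt continuous_const continuous_norm).mem_nhds hz] with y hy
      exact hz0 y hy
    rw [(Filter.EventuallyEq.iteratedFDeriv ℝ this 4).eq_of_nhds]
    simp [blap]
  · intro z hz
    refine ⟨η z, (h01 _).1, (h01 _).2, rfl, ?_⟩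
    refine (cut_bound hη hv z (A / K) B (by positivity) hB (fun j a b => hηD j a b z)
      (hvB z hz)).trans_eq ?_
    ring

end PartThirteen

section PartFourteen

variable {N : ℕ}

lemma quart {t δ : ℝ} (h : |t - 1| ≤ δ) (hδ : δ ≤ 1 / 2) :
    1 / 2 ≤ t ∧ t ≤ 3 / 2 ∧ |(t ^ 4)⁻¹ - 1| ≤ 130 * δ ∧ (t ^ 4)⁻¹ ≤ 16 := by
  obtain ⟨h1, h2⟩ := abs_le.1 h
  have ht : 1 / 2 ≤ t := by linarith
  have ht' : t ≤ 3 / 2 := by linarith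
  have h0 : 0 < t := by linarith
  have hi : (t ^ 4)⁻¹ ≤ 16 := by
    rw [inv_le_comm₀ (by positivity) (by norm_num)]
    calc (16:ℝ)⁻¹ = (1 / 2) ^ 4 := by norm_num
      _ ≤ t ^ 4 := by gcongr
  refine ⟨ht, ht', ?_, hi⟩
  have e : (t ^ 4)⁻¹ - 1 = -((t ^ 4)⁻¹ * ((t - 1) * ((1 + t) * (1 + t ^ 2)))) := by
    field_simp; ring
  rw [e, abs_neg, abs_mul, abs_mul, abs_of_pos (by positivity : 0 < (t ^ 4)⁻¹),
    abs_of_pos (by positivity : 0 < (1 + t) * (1 + t ^ 2))]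
  have hd : 0 ≤ δ := (abs_nonneg _).trans h
  have h3 : (1 + t) * (1 + t ^ 2) ≤ (1 + 3 / 2) * (1 + (3 / 2) ^ 2) := by gcongr
  calc _ ≤ 16 * (δ * ((1 + 3 / 2) * (1 + (3 / 2) ^ 2))) := by
        gcongr
    _ = 130 * δ := by ring

lemma scaled_pt {s : EuclideanSpace ℝ (Fin N) → ℝ} {k ρ δ K : ℝ} (hs : ∀ x, 0 < s x)
    (hk0 : 0 ≤ k)
    (hk : ∀ x y, |s y - s x| ≤ k * ‖y - x‖) (hρ : 0 < ρ) (hδ : δ ≤ 1 / 2) (hKδ : k * (2 * K) / ρ ≤ δ)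
    {μ : ℂ} (hμ : ‖μ‖ = 1) {u : EuclideanSpace ℝ (Fin N) → ℂ} (hu : ContDiff ℝ 4 u) {M Γ : ℝ}
    (hM : ∀ h ≤ 3, ∀ x, (s x / ρ) ^ h * ‖iteratedFDeriv ℝ h u x‖ ≤ M)
    (hΓ : ∀ x, ‖μ * u x + (((s x / ρ) ^ 4 : ℝ) : ℂ) * blap (iteratedFDeriv ℝ 4 u x)‖ ≤ Γ)
    (x0 z : EuclideanSpace ℝ (Fin N)) (hz : ‖z‖ ≤ 2 * K) :
    (∀ j ≤ 3, ‖iteratedFDeriv ℝ j (fun z => u (x0 + (s x0 / ρ) • z)) z‖ ≤ 8 * M) ∧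
    ‖μ * u (x0 + (s x0 / ρ) • z) +
      blap (iteratedFDeriv ℝ 4 (fun z => u (x0 + (s x0 / ρ) • z)) z)‖ ≤ Γ + 130 * δ * (Γ + M) ∧
    ‖blap (iteratedFDeriv ℝ 4 (fun z => u (x0 + (s x0 / ρ) • z)) z)‖ ≤ 16 * (Γ + M) ∧
    s (x0 + (s x0 / ρ) • z) ≤ 2 * s x0 := by
  set R := s x0 / ρ with hR
  have h0 := hs x0
  have hR0 : 0 < R := by positivity
  set y := x0 + R • z with hy
  set t := s y / s x0 with ht
  have hy0 := hs y
  have hsy : s y = t * s x0 := by rw [ht]; field_simp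
  have hsR : s y / ρ = t * R := by rw [hsy, hR]; ring
  have hyx : ‖y - x0‖ = R * ‖z‖ := by
    rw [hy, add_sub_cancel_left, norm_smul, Real.norm_of_nonneg hR0.le]
  have htd : |t - 1| ≤ δ := by
    have : t - 1 = (s y - s x0) / s x0 := by rw [ht]; field_simp
    rw [this, abs_div, abs_of_pos h0, div_le_iff₀ h0]
    calc _ ≤ k * ‖y - x0‖ := hk x0 y
      _ = k * (R * ‖z‖) := by rw [hyx]
      _ ≤ k * (R * (2 * K)) := by gcongr
      _ = (k * (2 * K) / ρ) * s x0 := by rw [hR]; ring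
      _ ≤ δ * s x0 := by gcongr
  obtain ⟨q1, q2, q3, q4⟩ := quart htd hδ
  have ht0 : 0 < t := by linarith
  have hM0 : 0 ≤ M := (mul_nonneg (by positivity) (norm_nonneg _)).trans (hM 0 (by norm_num) y)
  have hj : ∀ j ≤ 3, ‖iteratedFDeriv ℝ j (fun z => u (x0 + R • z)) z‖ ≤ 8 * M := by
    intro j hj
    rw [iter_comp_affine (hu.of_le (by exact_mod_cast (by omega : j ≤ 4))), norm_smul, norm_pow,
      Real.norm_of_nonneg hR0.le]
    have h1 := hM j hj y
    rw [hsR, mul_pow, mul_assoc] at h1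
    have h2 : (1 / 2 : ℝ) ^ 3 ≤ t ^ j :=
      calc (1 / 2 : ℝ) ^ 3 ≤ (1 / 2) ^ j := pow_le_pow_of_le_one (by norm_num) (by norm_num) hj
        _ ≤ t ^ j := by gcongr
    have h3 : 0 ≤ R ^ j * ‖iteratedFDeriv ℝ j u y‖ := by positivity
    nlinarith
  have hB : blap (iteratedFDeriv ℝ 4 (fun z => u (x0 + R • z)) z) =
      ((R ^ 4 : ℝ) : ℂ) * blap (iteratedFDeriv ℝ 4 u y) := by
    rw [iter_comp_affine (by exact_mod_cast hu), blap_smul, Complex.real_smul]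
  set Bv := blap (iteratedFDeriv ℝ 4 (fun z => u (x0 + R • z)) z) with hBv
  set g := μ * u y + (((s y / ρ) ^ 4 : ℝ) : ℂ) * blap (iteratedFDeriv ℝ 4 u y) with hg
  have hgΓ : ‖g‖ ≤ Γ := hΓ y
  have huM : ‖u y‖ ≤ M := by simpa using hM 0 (by norm_num) y
  have hge : g - μ * u y = ((t ^ 4 : ℝ) : ℂ) * Bv := by
    rw [hg, hB, hsR]; push_cast; ring
  have hBe : Bv = (((t ^ 4)⁻¹ : ℝ) : ℂ) * (g - μ * u y) := by
    rw [hge, ← mul_assoc, ← Complex.ofReal_mul, inv_mul_cancel₀ (by positivity)]; simp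
  have hgm : ‖g - μ * u y‖ ≤ Γ + M := by
    refine (norm_sub_le _ _).trans ?_
    rw [norm_mul, hμ, one_mul]; linarith
  have hGM : 0 ≤ Γ + M := (norm_nonneg _).trans hgm
  refine ⟨hj, ?_, ?_, by rw [hsy]; nlinarith⟩
  · have e : μ * u y + Bv = g + ((((t ^ 4)⁻¹ - 1 : ℝ)) : ℂ) * (g - μ * u y) := by
      rw [hBe]; push_cast; ring
    rw [e]
    refine (norm_add_le _ _).trans ?_
    rw [norm_mul, Complex.norm_real, Real.norm_eq_abs]
    exact add_le_add hgΓ (mul_le_mul q3 hgm (norm_nonneg _) ((abs_nonneg _).trans q3))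
  · rw [hBe, norm_mul, Complex.norm_real, Real.norm_of_nonneg (by positivity)]
    exact mul_le_mul q4 hgm (norm_nonneg _) (by norm_num)

theorem core (N : ℕ) (hN : 1 ≤ N) (p : ℝ) (hp : 1 ≤ p) (k : ℝ) (hk0 : 0 ≤ k) :
    ∃ ρ0 > (0 : ℝ), ∃ C > (0 : ℝ), ∀ s : EuclideanSpace ℝ (Fin N) → ℝ, (∀ x, 0 < s x) →
    (∀ x y, |s y - s x| ≤ k * ‖y - x‖) → ∀ ρ, ρ0 < ρ → ∀ μ : ℂ, ‖μ‖ = 1 → 0 ≤ μ.re →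
    ∀ u : EuclideanSpace ℝ (Fin N) → ℂ, ContDiff ℝ 4 u →
    (∃ M, ∀ h ≤ 3, ∀ x, (s x / ρ) ^ h * ‖iteratedFDeriv ℝ h u x‖ ≤ M) → ∀ Γ : ℝ, 
    (∀ x, ‖μ * u x + (((s x / ρ) ^ 4 : ℝ) : ℂ) * blap (iteratedFDeriv ℝ 4 u x)‖ ≤ Γ) →
    (∀ h ≤ 3, ∀ x, (s x / ρ) ^ h * ‖iteratedFDeriv ℝ h u x‖ ≤ C * Γ) ∧
    (∀ x, ∀ z, ‖z‖ ≤ 2 → s (x + (s x / ρ) • z) ≤ 2 * s x) ∧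
    (0 < Γ → ∀ x, eLpNorm (fun z => ‖iteratedFDeriv ℝ 4 (fun z => u (x + (s x / ρ) • z)) z‖)
      (ENNReal.ofReal p) (volume.restrict (ball 0 1)) ≤ ENNReal.ofReal (C * Γ)) := by
  obtain ⟨CA, hCA, HA⟩ := lemA_cc N
  obtain ⟨CB, hCB, HB⟩ := lemB_cc N hN p hp
  obtain ⟨Cc, hCc, Hc⟩ := local_cut N
  set K := 32 * CA * Cc + 1 with hK
  have hK1 : 1 ≤ K := by have : 0 ≤ 32 * CA * Cc := by positivity
                         linarith
  have hK0 : 0 < K := by linarith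
  set δ := min (1 / 2) (1 / (520 * CA + 130)) with hδ
  have hδ0 : 0 < δ := by positivity
  have hδ2 : δ ≤ 1 / 2 := min_le_left _ _
  have hδ3 : δ * (520 * CA + 130) ≤ 1 := by
    rw [← le_div_iff₀ (by positivity)]; exact min_le_right _ _
  refine ⟨k * (2 * K) / δ + 1, by positivity,
    4 * CA + CB * (16 * (1 + 4 * CA) + Cc * (8 * (4 * CA))), by positivity,
    fun s hs hk ρ hρ μ hμ hμr u hu hM Γ hΓ => ?_⟩
  have hρ0 : 0 < ρ := lt_trans (by positivity) hρ
  have hKδ : k * (2 * K) / ρ ≤ δ := by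
    rw [div_le_iff₀ hρ0, mul_comm δ, ← div_le_iff₀ hδ0]
    linarith
  have hΓ0 : 0 ≤ Γ := (norm_nonneg _).trans (hΓ 0)
  -- improvement step
  have step : ∀ M, (∀ h ≤ 3, ∀ x, (s x / ρ) ^ h * ‖iteratedFDeriv ℝ h u x‖ ≤ M) →
      (∀ h ≤ 3, ∀ x, (s x / ρ) ^ h * ‖iteratedFDeriv ℝ h u x‖ ≤ 2 * CA * Γ + M / 2) := by
    intro M hM h hh x
    have hM0 : 0 ≤ M := (mul_nonneg (by have := hs 0; positivity) (norm_nonneg _)).trans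
      (hM 0 (by norm_num) 0)
    have hpt := fun z hz => scaled_pt hs hk0 hk hρ0 hδ2 hKδ hμ hu hM hΓ x z hz
    have hv : ContDiff ℝ 4 (fun z => u (x + (s x / ρ) • z)) :=
      hu.comp (contDiff_const.add (contDiff_const_smul _))
    obtain ⟨w, hw, hwc, hw1, hw2, hw3⟩ := Hc K hK1 (fun z => u (x + (s x / ρ) • z)) (8 * M) hv
      (by positivity) (fun z hz => (hpt z hz).1)
    have hF : ∀ z, ‖μ * w z + blap (iteratedFDeriv ℝ 4 w z)‖ ≤
        Γ + 130 * δ * (Γ + M) + Cc * (8 * M) / K := by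
      intro z
      rcases le_or_gt ‖z‖ (2 * K) with hz | hz
      · obtain ⟨θ, h0, h1, e1, e2⟩ := hw3 z hz
        have h3 := (hpt z hz).2.1
        set Bw := blap (iteratedFDeriv ℝ 4 w z)
        set Bv := blap (iteratedFDeriv ℝ 4 (fun z => u (x + (s x / ρ) • z)) z)
        have e : μ * w z + Bw = θ • (μ * u (x + (s x / ρ) • z) + Bv) + (Bw - θ • Bv) := by
          rw [e1]; simp only [Complex.real_smul]; ring
        rw [e]
        refine (norm_add_le _ _).trans (add_le_add ?_ e2)
        rw [norm_smul, Real.norm_of_nonneg h0]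
        exact (mul_le_of_le_one_left (norm_nonneg _) h1).trans h3
      · obtain ⟨e1, e2⟩ := hw2 z hz
        rw [e1, e2]; simp only [mul_zero, add_zero, norm_zero]; positivity
    have := HA μ hμ hμr w hw hwc _ hF h hh 0
    rw [hw1 0 (by simpa using hK0) h, iter_comp_affine (hu.of_le (by exact_mod_cast (by omega : h ≤ 4))),
      norm_smul, norm_pow, Real.norm_of_nonneg (by have := hs x; positivity), smul_zero, add_zero] at this
    refine this.trans ?_
    have hKK : CA * (Cc * (8 * M) / K) ≤ M / 4 := by
      rw [← mul_div_assoc, div_le_iff₀ hK0, hK]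
      nlinarith
    have h4 : CA * (130 * δ) ≤ 1 / 4 := by nlinarith
    have h5 : 130 * δ ≤ 1 := by nlinarith [mul_pos hδ0 hCA]
    have h6 : CA * (130 * δ) * M ≤ 1 / 4 * M := by gcongr
    have h7 : CA * Γ * (130 * δ) ≤ CA * Γ * 1 := by gcongr
    nlinarith
  have fin : ∀ h ≤ 3, ∀ x, (s x / ρ) ^ h * ‖iteratedFDeriv ℝ h u x‖ ≤ 4 * CA * Γ := by
    set S : Set ℝ := {r | ∃ h ≤ 3, ∃ x, r = (s x / ρ) ^ h * ‖iteratedFDeriv ℝ h u x‖} with hS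
    obtain ⟨M0, hM0⟩ := hM
    have hbd : BddAbove S := ⟨M0, by rintro r ⟨h, hh, x, rfl⟩; exact hM0 h hh x⟩
    have hne : S.Nonempty := ⟨_, 0, by norm_num, 0, rfl⟩
    have h1 : ∀ h ≤ 3, ∀ x, (s x / ρ) ^ h * ‖iteratedFDeriv ℝ h u x‖ ≤ sSup S :=
      fun h hh x => le_csSup hbd ⟨h, hh, x, rfl⟩
    have h2 : sSup S ≤ 2 * CA * Γ + sSup S / 2 := by
      refine csSup_le hne ?_
      rintro r ⟨h, hh, x, rfl⟩
      exact step _ h1 h hh x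
    intro h hh x
    have := h1 h hh x
    linarith
  have hKδ' : k * (2 * 1) / ρ ≤ δ := le_trans (by gcongr) hKδ
  have hpt := fun x z hz => scaled_pt hs hk0 hk hρ0 hδ2 hKδ' hμ hu fin hΓ x z hz
  refine ⟨fun h hh x => (fin h hh x).trans ?_, fun x z hz => (hpt x z (by linarith)).2.2.2,
    fun hΓp x => ?_⟩
  · gcongr
    have : 0 ≤ CB * (16 * (1 + 4 * CA) + Cc * (8 * (4 * CA))) := by positivity
    linarith
  · have hv : ContDiff ℝ 4 (fun z => u (x + (s x / ρ) • z)) :=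
      hu.comp (contDiff_const.add (contDiff_const_smul _))
    obtain ⟨w, hw, hwc, hw1, hw2, hw3⟩ := Hc 1 le_rfl (fun z => u (x + (s x / ρ) • z))
      (8 * (4 * CA * Γ)) hv (by positivity) (fun z hz => (hpt x z hz).1)
    have hF : ∀ z, ‖blap (iteratedFDeriv ℝ 4 w z)‖ ≤
        16 * (Γ + 4 * CA * Γ) + Cc * (8 * (4 * CA * Γ)) / 1 := by
      intro z
      rcases le_or_gt ‖z‖ (2 * 1) with hz | hz
      · obtain ⟨θ, h0, h1, e1, e2⟩ := hw3 z hz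
        have h3 := (hpt x z hz).2.2.1
        set Bw := blap (iteratedFDeriv ℝ 4 w z)
        set Bv := blap (iteratedFDeriv ℝ 4 (fun z => u (x + (s x / ρ) • z)) z)
        have e : Bw = θ • Bv + (Bw - θ • Bv) := by ring
        rw [e]
        refine (norm_add_le _ _).trans (add_le_add ?_ e2)
        rw [norm_smul, Real.norm_of_nonneg h0]
        exact (mul_le_of_le_one_left (norm_nonneg _) h1).trans h3
      · obtain ⟨e1, e2⟩ := hw2 z hz
        rw [e2, norm_zero]; positivity
    have := HB w hw hwc (fun z hz => (hw2 z (by linarith)).2) _ (by positivity) hF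
    have e : eLpNorm (fun z => ‖iteratedFDeriv ℝ 4 (fun z => u (x + (s x / ρ) • z)) z‖)
      (ENNReal.ofReal p) (volume.restrict (ball 0 1)) =
      eLpNorm (fun z => ‖iteratedFDeriv ℝ 4 w z‖)
      (ENNReal.ofReal p) (volume.restrict (ball 0 1)) := by
      refine eLpNorm_congr_ae ?_
      filter_upwards [ae_restrict_mem measurableSet_ball] with z hz
      rw [hw1 z (by simpa using hz) 4]
    rw [e]
    refine this.trans (ENNReal.ofReal_le_ofReal ?_)
    have : 0 ≤ CA * Γ := by positivity
    nlinarith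

end PartFourteen

theorem statement15 (N : ℕ) (hN : 1 ≤ N) (p : ℝ) (hp : (N : ℝ) < p)
    (a : EuclideanSpace ℝ (Fin N) → ℝ) (ν c : ℝ) (hν : 0 < ν) (hc : 0 < c)
    (ha1 : ContDiff ℝ 1 a) (ha2 : ∀ x, ν ≤ a x)
    (ha3 : ∀ x, ‖gradient a x‖ ≤ c * (a x) ^ ((1 : ℝ) / 2)) :
    ∃ rp > (0 : ℝ), ∃ C > (0 : ℝ), ∀ lam : ℂ, 0 ≤ lam.re → rp < ‖lam‖ →
      ∀ u : EuclideanSpace ℝ (Fin N) → ℂ, ContDiff ℝ 4 u →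
      (∀ h : ℕ, h ≤ 3 →
        ∃ M : ℝ, ∀ x, (a x) ^ ((h : ℝ) / 2) * ‖iteratedFDeriv ℝ h u x‖ ≤ M) →
      (∃ M : ℝ, ∀ x, (a x) ^ 2 * ‖laplacianE (laplacianE u) x‖ ≤ M) →
      (∑ h ∈ Finset.range 4,
            ENNReal.ofReal (‖lam‖ ^ (1 - (h : ℝ) / 4)) *
              ⨆ x, ENNReal.ofReal ((a x) ^ ((h : ℝ) / 2) * ‖iteratedFDeriv ℝ h u x‖)) +
          (⨆ x, ENNReal.ofReal (‖lam‖ ^ ((N : ℝ) / (4 * p)) / (a x) ^ ((N : ℝ) / (2 * p))) *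
            eLpNorm (fun y => (a y) ^ 2 * ‖iteratedFDeriv ℝ 4 u y‖) (ENNReal.ofReal p)
              (volume.restrict (ball x ((a x) ^ ((1 : ℝ) / 2) / ‖lam‖ ^ ((1 : ℝ) / 4))))) ≤
        ENNReal.ofReal C *
          ⨆ x, ENNReal.ofReal
            ‖lam * u x + ((a x : ℂ)) ^ 2 * laplacianE (laplacianE u) x‖ := by
  have hN' : (1 : ℝ) ≤ N := by exact_mod_cast hN
  have hp1 : 1 ≤ p := by linarith
  have hp0 : 0 < p := by linarith
  have ha0 : ∀ x, 0 < a x := fun x => hν.trans_le (ha2 x)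
  obtain ⟨ρ0, hρ0, C, hC, H⟩ := core N hN p hp1 c hc.le
  refine ⟨ρ0 ^ 4, by positivity, 20 * C, by positivity, fun lam hre hlam u hu hbd _ => ?_⟩
  set L := ‖lam‖ with hL
  have hL0 : 0 < L := lt_trans (by positivity) hlam
  set ρ := L ^ ((1 : ℝ) / 4) with hρ
  have hρp : 0 < ρ := by positivity
  have hρ4 : ρ ^ 4 = L := by
    rw [hρ, ← Real.rpow_natCast, ← Real.rpow_mul hL0.le]; norm_num
  have hρρ : ρ0 < ρ := lt_of_pow_lt_pow_left₀ 4 hρp.le (by rw [hρ4]; exact hlam)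
  set s : EuclideanSpace ℝ (Fin N) → ℝ := fun x => √(a x) with hs
  have hs0 : ∀ x, 0 < s x := fun x => Real.sqrt_pos.2 (ha0 x)
  have hs2 : ∀ x, s x ^ 2 = a x := fun x => Real.sq_sqrt (ha0 x).le
  have hlip : ∀ x y, |s y - s x| ≤ c * ‖y - x‖ :=
    sqrt_lip ha1 ha0 (fun x => by rw [Real.sqrt_eq_rpow]; exact ha3 x)
  have hsh : ∀ (h : ℕ) x, (a x) ^ ((h : ℝ) / 2) = s x ^ h := fun h x => by
    simp only [hs]
    rw [Real.sqrt_eq_rpow, ← Real.rpow_natCast, ← Real.rpow_mul (ha0 x).le]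
    congr 1; ring
  have hρh : ∀ (h : ℕ), L ^ (1 - (h : ℝ) / 4) = L / ρ ^ h := fun h => by
    rw [Real.rpow_sub hL0, Real.rpow_one, hρ, ← Real.rpow_natCast, ← Real.rpow_mul hL0.le]
    congr 2; ring
  set T := ⨆ x, ENNReal.ofReal ‖lam * u x + ((a x : ℂ)) ^ 2 * laplacianE (laplacianE u) x‖ with hT
  rcases eq_or_ne T ⊤ with hTt | hTt
  · rw [hTt, ENNReal.mul_top (by simpa using hC)]; exact le_top
  set G := T.toReal with hG
  have hTG : T = ENNReal.ofReal G := (ENNReal.ofReal_toReal hTt).symm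
  have hG0 : 0 ≤ G := ENNReal.toReal_nonneg
  have hf : ∀ x, ‖lam * u x + ((a x : ℂ)) ^ 2 * laplacianE (laplacianE u) x‖ ≤ G := fun x => by
    rw [← ENNReal.ofReal_le_ofReal_iff hG0, ← hTG]
    exact le_iSup (fun x => ENNReal.ofReal ‖lam * u x + ((a x : ℂ)) ^ 2 *
      laplacianE (laplacianE u) x‖) x
  have hLC : (L : ℂ) ≠ 0 := by exact_mod_cast hL0.ne'
  have hμ : ‖lam / (L : ℂ)‖ = 1 := by
    rw [norm_div, Complex.norm_real, Real.norm_of_nonneg hL0.le]; exact div_self hL0.ne'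
  have hμr : 0 ≤ (lam / (L : ℂ)).re := by
    rw [Complex.div_ofReal_re]; positivity
  have hΓ : ∀ x, ‖lam / (L : ℂ) * u x + (((s x / ρ) ^ 4 : ℝ) : ℂ) *
      blap (iteratedFDeriv ℝ 4 u x)‖ ≤ G / L := fun x => by
    have e1 : (s x / ρ) ^ 4 = (a x) ^ 2 / L := by
      rw [div_pow, hρ4, ← hs2 x]; ring
    have e : lam / (L : ℂ) * u x + (((s x / ρ) ^ 4 : ℝ) : ℂ) * blap (iteratedFDeriv ℝ 4 u x) =
      (lam * u x + ((a x : ℂ)) ^ 2 * laplacianE (laplacianE u) x) / (L : ℂ) := by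
      rw [e1, lapE_lapE_eq hu]; push_cast; field_simp
    rw [e, norm_div, Complex.norm_real, Real.norm_of_nonneg hL0.le]
    exact div_le_div_of_nonneg_right (hf x) hL0.le
  have hM : ∃ M, ∀ h ≤ 3, ∀ x, (s x / ρ) ^ h * ‖iteratedFDeriv ℝ h u x‖ ≤ M := by
    have h1 : ∀ h : ℕ, ∃ M : ℝ, 0 ≤ M ∧ (h ≤ 3 → ∀ x, (s x / ρ) ^ h * ‖iteratedFDeriv ℝ h u x‖ ≤ M) := by
      intro h
      by_cases hh : h ≤ 3
      · obtain ⟨M, hM⟩ := hbd h hh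
        have hb : ∀ x, (s x / ρ) ^ h * ‖iteratedFDeriv ℝ h u x‖ ≤ M / ρ ^ h := fun x => by
          have := hM x
          rw [hsh] at this
          rw [div_pow, div_mul_eq_mul_div]
          exact div_le_div_of_nonneg_right this (by positivity)
        refine ⟨M / ρ ^ h, le_trans ?_ (hb 0), fun _ => hb⟩
        have := hs0 0
        positivity
      · exact ⟨0, le_rfl, fun h => absurd h hh⟩
    choose M hM0 hM using h1
    refine ⟨∑ h ∈ Finset.range 4, M h, fun h hh x => (hM h hh x).trans ?_⟩
    exact Finset.single_le_sum (f := M) (fun i _ => hM0 i) (by simp; omega)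
  have hA := H s hs0 hlip ρ hρρ _ hμ hμr u hu hM
  obtain ⟨A1, A2, -⟩ := hA (G / L) hΓ
  have A3 : ∀ x, eLpNorm (fun z => ‖iteratedFDeriv ℝ 4 (fun z => u (x + (s x / ρ) • z)) z‖)
      (ENNReal.ofReal p) (volume.restrict (ball 0 1)) ≤ ENNReal.ofReal (C * (G / L)) := by
    intro x
    have hcont : Filter.Tendsto (fun ε : ℝ => ENNReal.ofReal (C * (G / L + ε)))
        (nhdsWithin 0 (Set.Ioi 0)) (nhds (ENNReal.ofReal (C * (G / L + 0)))) := by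
      refine Filter.Tendsto.mono_left (Continuous.tendsto ?_ 0) nhdsWithin_le_nhds
      exact ENNReal.continuous_ofReal.comp (by fun_prop)
    rw [add_zero] at hcont
    refine ge_of_tendsto hcont ?_
    filter_upwards [self_mem_nhdsWithin] with ε hε
    have hε' : 0 < ε := hε
    exact (hA (G / L + ε) (fun x => (hΓ x).trans (by linarith))).2.2 (by positivity) x
  have part1 : ∀ h ∈ Finset.range 4, ENNReal.ofReal (L ^ (1 - (h : ℝ) / 4)) *
      ⨆ x, ENNReal.ofReal ((a x) ^ ((h : ℝ) / 2) * ‖iteratedFDeriv ℝ h u x‖) ≤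
      ENNReal.ofReal (C * G) := by
    intro h hh
    rw [ENNReal.mul_iSup]
    refine iSup_le fun x => ?_
    rw [← ENNReal.ofReal_mul (by positivity), hsh, hρh]
    refine ENNReal.ofReal_le_ofReal ?_
    have := A1 h (by simp at hh; omega) x
    calc _ = L * ((s x / ρ) ^ h * ‖iteratedFDeriv ℝ h u x‖) := by rw [div_pow]; ring
      _ ≤ L * (C * (G / L)) := by gcongr
      _ = C * G := by field_simp
  have part2 : (⨆ x, ENNReal.ofReal (L ^ ((N : ℝ) / (4 * p)) / (a x) ^ ((N : ℝ) / (2 * p))) *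
      eLpNorm (fun y => (a y) ^ 2 * ‖iteratedFDeriv ℝ 4 u y‖) (ENNReal.ofReal p)
        (volume.restrict (ball x ((a x) ^ ((1 : ℝ) / 2) / ρ)))) ≤ ENNReal.ofReal (16 * (C * G)) := by
    refine iSup_le fun x => ?_
    have hsx := hs0 x
    set R := s x / ρ with hR
    have hR0 : 0 < R := by positivity
    have e1 : (a x) ^ ((1 : ℝ) / 2) = s x := (Real.sqrt_eq_rpow (a x)).symm
    have e2 : L ^ ((N : ℝ) / (4 * p)) / (a x) ^ ((N : ℝ) / (2 * p)) = (R ^ ((N : ℝ) / p))⁻¹ := by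
      have f1 : L ^ ((N : ℝ) / (4 * p)) = ρ ^ ((N : ℝ) / p) := by
        rw [hρ, ← Real.rpow_mul hL0.le]; congr 1; field_simp
      have f2 : (a x) ^ ((N : ℝ) / (2 * p)) = (s x) ^ ((N : ℝ) / p) := by
        rw [← e1, ← Real.rpow_mul (ha0 x).le]; congr 1; field_simp
      rw [f1, f2, hR, Real.div_rpow hsx.le hρp.le, inv_div]
    rw [e1, e2, eLp_scale _ x hR0 hp0, ← mul_assoc, ← ENNReal.ofReal_mul (by positivity),
      inv_mul_cancel₀ (by positivity), ENNReal.ofReal_one, one_mul]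
    have hle : eLpNorm (fun z => (a (x + R • z)) ^ 2 * ‖iteratedFDeriv ℝ 4 u (x + R • z)‖)
        (ENNReal.ofReal p) (volume.restrict (ball 0 1)) ≤ ENNReal.ofReal (16 * L) *
        eLpNorm (fun z => ‖iteratedFDeriv ℝ 4 (fun z => u (x + R • z)) z‖)
        (ENNReal.ofReal p) (volume.restrict (ball 0 1)) := by
      refine eLpNorm_le_mul_eLpNorm_of_ae_le_mul ?_ _
      filter_upwards [ae_restrict_mem measurableSet_ball] with z hz
      have hz1 : ‖z‖ ≤ 2 := by
        have : ‖z‖ < 1 := by simpa using hz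
        linarith
      have hu4 : ContDiff ℝ (4 : ℕ) u := by exact_mod_cast hu
      rw [iter_comp_affine hu4, norm_smul, Real.norm_of_nonneg (by positivity),
        Real.norm_of_nonneg (by positivity), Real.norm_of_nonneg (by positivity), ← hs2]
      have h3 := A2 x z hz1
      have h4 := hs0 (x + R • z)
      have h5 : (s (x + R • z) ^ 2) ^ 2 ≤ 16 * L * R ^ 4 := by
        calc (s (x + R • z) ^ 2) ^ 2 = s (x + R • z) ^ 4 := by ring
          _ ≤ (2 * s x) ^ 4 := by gcongr
          _ = 16 * L * R ^ 4 := by rw [hR, div_pow, hρ4]; field_simp; norm_num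
      calc _ ≤ 16 * L * R ^ 4 * ‖iteratedFDeriv ℝ 4 u (x + R • z)‖ := by gcongr
        _ = _ := by ring
    refine hle.trans ?_
    refine (mul_le_mul_right (A3 x) _).trans_eq ?_
    rw [← ENNReal.ofReal_mul (by positivity)]
    congr 1
    field_simp
  refine (add_le_add (Finset.sum_le_sum part1) part2).trans_eq ?_
  rw [hTG, ← ENNReal.ofReal_mul (by positivity), Finset.sum_const, Finset.card_range, nsmul_eq_mul,
    ← ENNReal.ofReal_natCast, ← ENNReal.ofReal_mul (by positivity),
    ← ENNReal.ofReal_add (by positivity) (by positivity)]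
  congr 1
  push_cast
  ring
end

section
/- Let a satisfy (H) with constant c > 0, and for σ > 0 define a_σ(x) = a(x)/(1 + σ a(x)) + σ. Then a_σ is C¹ on ℝ^N, and for all x ∈ ℝ^N one has σ ≤ a_σ(x) ≤ σ + σ^{−1} and |∇a_σ(x)| ≤ c · a_σ(x)^{1/2}. -/
open Real

theorem statement16 (N : ℕ) (hN : 1 ≤ N)
    (a : EuclideanSpace ℝ (Fin N) → ℝ) (c : ℝ) (hc : 0 < c)
    (ha1 : ContDiff ℝ 1 a) (ha2 : ∀ x, 0 < a x)
    (ha3 : ∀ x, ‖gradient a x‖ ≤ c * (a x) ^ ((1 : ℝ) / 2))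
    (σ : ℝ) (hσ : 0 < σ) :
    ContDiff ℝ 1 (fun x => a x / (1 + σ * a x) + σ) ∧
    ∀ x : EuclideanSpace ℝ (Fin N),
      σ ≤ a x / (1 + σ * a x) + σ ∧
      a x / (1 + σ * a x) + σ ≤ σ + σ⁻¹ ∧
      ‖gradient (fun y => a y / (1 + σ * a y) + σ) x‖ ≤
        c * (a x / (1 + σ * a x) + σ) ^ ((1 : ℝ) / 2) := by
  have hpos : ∀ x, 0 < 1 + σ * a x := fun x => by
    have := mul_pos hσ (ha2 x)
    linarith
  refine ⟨?_, fun x => ?_⟩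
  · exact (ha1.div (contDiff_const.add (contDiff_const.mul ha1))
      (fun x => (hpos x).ne')).add contDiff_const
  have hp := hpos x
  have hax := ha2 x
  have hsa := mul_pos hσ hax
  have hq : 0 < a x / (1 + σ * a x) := div_pos hax hp
  refine ⟨by linarith, ?_, ?_⟩
  · have : a x / (1 + σ * a x) ≤ σ⁻¹ := by
      rw [div_le_iff₀ hp, mul_add, inv_mul_cancel_left₀ hσ.ne']
      have := inv_pos.mpr hσ
      linarith
    linarith
  have hnorm : ∀ f : EuclideanSpace ℝ (Fin N) → ℝ, ‖gradient f x‖ = ‖fderiv ℝ f x‖ := by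
    intro f
    unfold gradient
    exact LinearIsometryEquiv.norm_map _ _
  have h3 := ha3 x
  rw [hnorm, ← Real.sqrt_eq_rpow] at h3
  rw [hnorm, ← Real.sqrt_eq_rpow]
  have hd : HasFDerivAt a (fderiv ℝ a x) x :=
    (ha1.differentiable one_ne_zero x).hasFDerivAt
  have hg : HasDerivAt (fun t : ℝ => t / (1 + σ * t) + σ) (1 / (1 + σ * a x) ^ 2) (a x) := by
    have h1 : HasDerivAt (fun t : ℝ => 1 + σ * t) σ (a x) := by
      simpa using ((hasDerivAt_id (a x)).const_mul σ).const_add 1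
    have h2 := ((hasDerivAt_id (a x)).div h1 hp.ne').add_const σ
    refine HasDerivAt.congr_deriv h2 ?_
    simp only [id]
    congr 1
    ring
  have hcomp : HasFDerivAt (fun y => a y / (1 + σ * a y) + σ)
      ((1 / (1 + σ * a x) ^ 2) • fderiv ℝ a x) x := hg.comp_hasFDerivAt x hd
  rw [hcomp.fderiv, norm_smul, Real.norm_of_nonneg (by positivity)]
  have hk : 0 ≤ 1 / (1 + σ * a x) ^ 2 := by positivity
  have key : 1 / (1 + σ * a x) ^ 2 * √(a x) ≤ √(a x / (1 + σ * a x) + σ) := by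
    apply Real.le_sqrt_of_sq_le
    rw [mul_pow, Real.sq_sqrt hax.le]
    have : (1 / (1 + σ * a x) ^ 2) ^ 2 * a x ≤ a x / (1 + σ * a x) := by
      rw [div_pow, ← pow_mul, one_pow, one_div_mul_eq_div]
      apply div_le_div_of_nonneg_left hax.le hp
      exact le_self_pow₀ (by linarith) (by norm_num)
    linarith
  calc _ ≤ 1 / (1 + σ * a x) ^ 2 * (c * √(a x)) := mul_le_mul_of_nonneg_left h3 hk
    _ = c * (1 / (1 + σ * a x) ^ 2 * √(a x)) := by ring
    _ ≤ _ := mul_le_mul_of_nonneg_left key hc.le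
end

section
/- Let a satisfy (H) with constant c > 0. Fix x₀ ∈ ℝ^N and set R = (1/(2c)) a(x₀)^{1/2}. Then for every x in the open ball B_{2R}(x₀) one has (1/2) a(x₀)^{1/2} ≤ a(x)^{1/2} ≤ (3/2) a(x₀)^{1/2}, and consequently (1/2)^k a(x₀)^{k/2} ≤ a(x)^{k/2} ≤ (3/2)^k a(x₀)^{k/2} for every natural number k. -/
open Real Metric

theorem statement19 (N : ℕ) (hN : 1 ≤ N)
    (a : EuclideanSpace ℝ (Fin N) → ℝ) (c : ℝ) (hc : 0 < c)
    (ha1 : ContDiff ℝ 1 a) (ha2 : ∀ x, 0 < a x)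
    (ha3 : ∀ x, ‖gradient a x‖ ≤ c * (a x) ^ ((1 : ℝ) / 2))
    (x₀ : EuclideanSpace ℝ (Fin N)) (R : ℝ)
    (hR : R = (1 / (2 * c)) * (a x₀) ^ ((1 : ℝ) / 2)) :
    ∀ x ∈ ball x₀ (2 * R),
      ((1 : ℝ) / 2) * (a x₀) ^ ((1 : ℝ) / 2) ≤ (a x) ^ ((1 : ℝ) / 2) ∧
      (a x) ^ ((1 : ℝ) / 2) ≤ ((3 : ℝ) / 2) * (a x₀) ^ ((1 : ℝ) / 2) ∧
      ∀ k : ℕ,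
        ((1 : ℝ) / 2) ^ k * (a x₀) ^ ((k : ℝ) / 2) ≤ (a x) ^ ((k : ℝ) / 2) ∧
        (a x) ^ ((k : ℝ) / 2) ≤ ((3 : ℝ) / 2) ^ k * (a x₀) ^ ((k : ℝ) / 2) := by
  have hd : ∀ y, HasFDerivAt (fun z => √(a z)) ((1 / (2 * √(a y))) • fderiv ℝ a y) y := fun y =>
    ((ha1.differentiable one_ne_zero y).hasFDerivAt).sqrt (ha2 y).ne'
  have hb : ∀ y, ‖(1 / (2 * √(a y))) • fderiv ℝ a y‖ ≤ c / 2 := by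
    intro y
    have hs : 0 < √(a y) := Real.sqrt_pos.2 (ha2 y)
    have h1 := ha3 y
    rw [← Real.sqrt_eq_rpow] at h1
    have h2 : ‖gradient a y‖ = ‖fderiv ℝ a y‖ := by
      unfold gradient
      exact LinearIsometryEquiv.norm_map _ _
    rw [h2] at h1
    rw [norm_smul, Real.norm_of_nonneg (by positivity), one_div_mul_eq_div,
      div_le_div_iff₀ (by positivity) (by positivity)]
    linarith
  intro x hx
  have hL : ‖√(a x) - √(a x₀)‖ ≤ c / 2 * ‖x - x₀‖ :=
    convex_univ.norm_image_sub_le_of_norm_hasFDerivWithin_le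
      (fun y _ => (hd y).hasFDerivWithinAt) (fun y _ => hb y) (Set.mem_univ x₀) (Set.mem_univ x)
  have hs0 : 0 < √(a x₀) := Real.sqrt_pos.2 (ha2 x₀)
  rw [← Real.sqrt_eq_rpow] at hR
  have hx2 : ‖x - x₀‖ < 2 * R := by simpa [dist_eq_norm] using hx
  have hM : c / 2 * ‖x - x₀‖ ≤ √(a x₀) / 2 := by
    calc c / 2 * ‖x - x₀‖ ≤ c / 2 * (2 * R) := by gcongr
      _ = √(a x₀) / 2 := by rw [hR]; field_simp
  have hab := abs_le.1 (hL.trans hM)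
  have e1 : (1 : ℝ) / 2 * √(a x₀) ≤ √(a x) := by linarith [hab.1]
  have e2 : √(a x) ≤ (3 : ℝ) / 2 * √(a x₀) := by linarith [hab.2]
  have hk : ∀ (y) (k : ℕ), (a y) ^ ((k : ℝ) / 2) = √(a y) ^ k := by
    intro y k
    rw [Real.sqrt_eq_rpow, ← Real.rpow_natCast, ← Real.rpow_mul (ha2 y).le]
    congr 1
    ring
  rw [← Real.sqrt_eq_rpow, ← Real.sqrt_eq_rpow]
  refine ⟨e1, e2, fun k => ?_⟩
  rw [hk, hk, ← mul_pow, ← mul_pow]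
  exact ⟨pow_le_pow_left₀ (by positivity) e1 k, pow_le_pow_left₀ (by positivity) e2 k⟩
end
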